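/- If the GCH holds, then every weakly measurable cardinal is measurable; consequently the least weakly measurable cardinal coincides with the least measurable cardinal under the GCH, and the existence of a weakly measurable cardinal in the constructible universe L is impossible. -/

import Mathlib

/-!
Let `κ` be weakly measurable. If `2^κ ≤ κ⁺`, then all subsets of `κ` form a family of at most `κ⁺`
sets, so the filter provided by weak measurability measures every subset of `κ` and `κ` is
measurable (`SL.measurable_of_weakly`). Under the GCH this applies at once
(`SL.measurable_of_gch`). Conversely a measurable cardinal is weakly measurable, so the two notions,
and hence their least instances, coincide.

Under `V = L` two classical theorems are proved inside an arbitrary universe `U`.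

* Gödel: `2^κ ≤ κ⁺` for inaccessible `κ` (`SL.pw_cle_of_L`). The hierarchy of constructible levels,
  defined externally in `VeqL`, is expressed by formulas whose meaning is absolute between
  transitive classes (`SL.RD`); the sentence `SL.SS` says that every set lies in some level, and that
  all levels exist. Reflection gives a transitive set satisfying it and containing a given subset of
  `κ`; a Skolem hull of size `κ` collapses to a transitive set of size `κ` that still satisfies it,
  so the subset already lies in a level below `κ⁺`.
* Scott: there is no measurable cardinal (`SL.scott`). Take the least `k` carrying a nonprincipal
  `k`-complete ultrafilter `F`, reflect this to a transitive set `R`, and let `N` be the collapsed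
  ultrapower of `R` by `F` (`SL.ultrapower`, Łoś's theorem) with embedding `j`. As `δ ≤ j δ` for all
  ordinals `δ` of `R`, and `N` satisfies `SL.SS`, it includes `R` and so has `F` as an element. But
  `N` believes that no ordinal below `j k` carries such an ultrafilter, while `k < j k`.

Replacing class-sized objects by transitive sets keeps every construction inside `U`. Separation
and Replacement in `U` are available only for first-order definable classes; the type classes
`SL.Dfn` (relations), `SL.DF` (functions) and `SL.RD` (relations relativized to a class) let
instance search produce the required formulas.
-/


set_option linter.unusedVariables false

/-!
Common framework: first-order models of ZFC as abstract "universes" `(M, ∈)`,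
internal (relational) renderings of the standard set-theoretic notions, and a
semantic treatment of (set- and class-) forcing extensions of countable models.
-/

open FirstOrder FirstOrder.Language

universe u

/-- The language of set theory: a single binary relation symbol
(we reuse Mathlib's one-binary-relation language `Language.order`,
reading its relation symbol as membership). -/
abbrev memLang : FirstOrder.Language := FirstOrder.Language.order

/-- The `memLang`-structure determined by a binary "membership" relation `E`. -/
def memStr {M : Type u} (E : M → M → Prop) : memLang.Structure M where
  funMap := fun {_} f _ => f.elim
  RelMap := fun {n} r x =>
    match n, r with
    | 2, _ => E (x 0) (x 1)

/-- Realization of a first-order formula of the language of set theory in `(M, E)`. -/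
def RealizeIn {M : Type u} (E : M → M → Prop) {n : ℕ}
    (φ : memLang.BoundedFormula Empty n) (xs : Fin n → M) : Prop :=
  letI := memStr E
  φ.Realize (fun e => e.elim) xs

/-- Elementary embeddings between two membership structures. -/
def MemElemEmbed {M : Type u} {N : Type u} (E₁ : M → M → Prop) (E₂ : N → N → Prop) :=
  @FirstOrder.Language.ElementaryEmbedding memLang M N (memStr E₁) (memStr E₂)

/-- Application of an elementary embedding between membership structures. -/
def MemElemEmbed.app {M : Type u} {N : Type u} {E₁ : M → M → Prop} {E₂ : N → N → Prop}
    (j : MemElemEmbed E₁ E₂) (x : M) : N :=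
  @FirstOrder.Language.ElementaryEmbedding.toFun memLang M N (memStr E₁) (memStr E₂) j x

namespace ZF

variable {M : Type u} (E : M → M → Prop)

def IsEmptySet (a : M) : Prop := ∀ x, ¬ E x a

def IsPairOf (p a b : M) : Prop := ∀ x, E x p ↔ (x = a ∨ x = b)

/-- `p` is the Kuratowski ordered pair `⟨a, b⟩`. -/
def IsOPairOf (p a b : M) : Prop :=
  ∃ s t, IsPairOf E s a a ∧ IsPairOf E t a b ∧ IsPairOf E p s t

def Sub (a b : M) : Prop := ∀ x, E x a → E x b

def IsTransitiveSet (a : M) : Prop := ∀ x, E x a → Sub E x a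

/-- In a well-founded extensional world, the ordinals are exactly the hereditarily
transitive sets. -/
def IsOrdinal (a : M) : Prop := IsTransitiveSet E a ∧ ∀ x, E x a → IsTransitiveSet E x

def IsSuccOf (s a : M) : Prop := ∀ x, E x s ↔ (E x a ∨ x = a)

def IsLimitOrdinal (a : M) : Prop :=
  IsOrdinal E a ∧ ¬ IsEmptySet E a ∧ ∀ x, E x a → ∃ s, E s a ∧ IsSuccOf E s x

def IsOmega (w : M) : Prop :=
  IsOrdinal E w ∧ (∃ z, E z w ∧ IsEmptySet E z) ∧
    (∀ y, E y w → ∃ s, E s w ∧ IsSuccOf E s y) ∧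
    (∀ y, E y w → (IsEmptySet E y ∨ ∃ z, IsSuccOf E y z ∧ E z w ∨ IsSuccOf E y z))

/-- `⟨x, y⟩ ∈ r` : the relation (set of ordered pairs) `r` relates `x` to `y`;
for a function `f` this says `f(x) = y`. -/
def PairMem (r x y : M) : Prop := ∃ p, E p r ∧ IsOPairOf E p x y

/-- `f` is a function with domain `a` and values in `b` (coded as a set of
Kuratowski pairs). -/
def IsFuncFromTo (f a b : M) : Prop :=
  (∀ p, E p f → ∃ x y, E x a ∧ E y b ∧ IsOPairOf E p x y) ∧
  (∀ x, E x a → ∃ y, PairMem E f x y) ∧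
  (∀ x y y', PairMem E f x y → PairMem E f x y' → y = y')

def IsInjFromTo (f a b : M) : Prop :=
  IsFuncFromTo E f a b ∧ ∀ x x' y, PairMem E f x y → PairMem E f x' y → x = x'

def IsSurjFromTo (f a b : M) : Prop :=
  IsFuncFromTo E f a b ∧ ∀ y, E y b → ∃ x, E x a ∧ PairMem E f x y

def IsBijFromTo (f a b : M) : Prop := IsInjFromTo E f a b ∧ IsSurjFromTo E f a b

def CardLE (a b : M) : Prop := ∃ f, IsInjFromTo E f a b

def SameCard (a b : M) : Prop := ∃ f, IsBijFromTo E f a b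

/-- `a` has cardinality less than the cardinal `κ`. -/
def CardLT (a κ : M) : Prop := ∃ γ, E γ κ ∧ CardLE E a γ

def IsCardinal (κ : M) : Prop := IsOrdinal E κ ∧ ∀ β, E β κ → ¬ CardLE E κ β

/-- `lam` is the cardinal successor `κ⁺` of `κ`. -/
def IsCardSuccOf (lam κ : M) : Prop :=
  IsCardinal E lam ∧ E κ lam ∧ ∀ μ, IsCardinal E μ → E κ μ → (μ = lam ∨ E lam μ)

def IsPowersetOf (p a : M) : Prop := ∀ x, E x p ↔ Sub E x a

def IsCofinalIn (f β κ : M) : Prop :=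
  ∀ γ, E γ κ → ∃ x y, E x β ∧ PairMem E f x y ∧ (γ = y ∨ E γ y)

def IsRegular (κ : M) : Prop :=
  IsCardinal E κ ∧ ∀ β f, E β κ → IsFuncFromTo E f β κ → ¬ IsCofinalIn E f β κ

def IsStrongLimit (κ : M) : Prop :=
  IsCardinal E κ ∧ ∀ β p, E β κ → IsPowersetOf E p β → CardLT E p κ

def IsUncountable (κ : M) : Prop := ∃ w, IsOmega E w ∧ E w κ

/-- Inaccessible: an uncountable regular strong limit cardinal. -/
def IsInaccessible (κ : M) : Prop := IsRegular E κ ∧ IsStrongLimit E κ ∧ IsUncountable E κ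

/-- Weakly inaccessible: an uncountable regular limit cardinal. -/
def IsWeaklyInaccessibleCard (κ : M) : Prop :=
  IsRegular E κ ∧ IsUncountable E κ ∧ ∀ β, E β κ → ∃ μ, E β μ ∧ E μ κ ∧ IsCardinal E μ

/-- `δ` is the cofinality of `α`. -/
def IsCofinalityOf (δ α : M) : Prop :=
  IsOrdinal E α ∧ IsOrdinal E δ ∧ (∃ f, IsFuncFromTo E f δ α ∧ IsCofinalIn E f δ α) ∧
    ∀ δ', E δ' δ → ¬ ∃ f, IsFuncFromTo E f δ' α ∧ IsCofinalIn E f δ' α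

/-! partial orders, sequences and games -/

/-- `le` is (the code of) a partial order relation on the set `P`;
`PairMem E le p q` reads "`p ≤ q`", i.e. `p` is a stronger condition than `q`. -/
def IsPartialOrderOn (le P : M) : Prop :=
  (∀ p, E p le → ∃ x y, E x P ∧ E y P ∧ IsOPairOf E p x y) ∧
  (∀ x, E x P → PairMem E le x x) ∧
  (∀ x y z, PairMem E le x y → PairMem E le y z → PairMem E le x z) ∧
  (∀ x y, PairMem E le x y → PairMem E le y x → x = y)

/-- `s` is a `≤`-decreasing sequence of elements of `P` of length `β`. -/
def IsDecreasingSeq (le s β P : M) : Prop :=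
  IsFuncFromTo E s β P ∧
    ∀ γ δ x y, E γ δ → E δ β → PairMem E s γ x → PairMem E s δ y → PairMem E le y x

/-- `(P, ≤)` is `<κ`-closed: every internal decreasing sequence of length `< κ`
has a lower bound. -/
def IsLtClosed (P le κ : M) : Prop :=
  ∀ β s, E β κ → IsDecreasingSeq E le s β P →
    ∃ r, E r P ∧ ∀ γ x, E γ β → PairMem E s γ x → PairMem E le r x

/-- An ordinal is even iff its elements can be partitioned into pairs `{γ, γ+1}`. -/
def IsEvenOrdinal (β : M) : Prop :=
  IsOrdinal E β ∧ ∃ Q,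
    (∀ q, E q Q → ∃ γ s, E γ β ∧ E s β ∧ IsSuccOf E s γ ∧ IsPairOf E q γ s) ∧
    (∀ γ, E γ β → ∃ q, E q Q ∧ E γ q) ∧
    (∀ q q', E q Q → E q' Q → (∃ x, E x q ∧ E x q') → q = q')

/-- `s'` is the restriction of the (sequence) `s` to `δ`. -/
def SeqRestriction (s' s δ : M) : Prop :=
  ∀ p, E p s' ↔ (E p s ∧ ∃ γ y, E γ δ ∧ IsOPairOf E p γ y)

/-- `(P, ≤)` is strategically `<κ`-closed: for each game length `γ < κ`, the second
player (playing at even stages, in particular at limits) has a strategy `σ` which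
always provides a next condition below everything played so far. -/
def IsStrategicallyLtClosed (P le κ : M) : Prop :=
  ∀ γlen, E γlen κ → ∃ σ : M,
    ∀ β s, E β γlen → IsDecreasingSeq E le s β P →
      (∀ δ, E δ β → IsEvenOrdinal E δ →
        ∀ r y, SeqRestriction E r s δ → PairMem E s δ y → PairMem E σ r y) →
      IsEvenOrdinal E β →
      ∃ y, PairMem E σ s y ∧ E y P ∧ ∀ δ x, E δ β → PairMem E s δ x → PairMem E le y x

/-! trees -/

/-- `lt` codes a strict tree order on the set `T`: irreflexive, transitive, and the
predecessors of any node are linearly ordered. -/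
def IsTreeOrderOn (lt T : M) : Prop :=
  (∀ p, E p lt → ∃ x y, E x T ∧ E y T ∧ IsOPairOf E p x y) ∧
  (∀ x, ¬ PairMem E lt x x) ∧
  (∀ x y z, PairMem E lt x y → PairMem E lt y z → PairMem E lt x z) ∧
  (∀ x y z, E z T → PairMem E lt x z → PairMem E lt y z →
    (PairMem E lt x y ∨ x = y ∨ PairMem E lt y x))

/-- The node `x` has height `β` in the tree order `lt`: its set of predecessors is
order-isomorphic (internally) to the ordinal `β`. -/
def IsHeightOf (lt x β : M) : Prop :=
  IsOrdinal E β ∧ ∃ f,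
    (∀ p, E p f → ∃ γ y, E γ β ∧ PairMem E lt y x ∧ IsOPairOf E p γ y) ∧
    (∀ γ, E γ β → ∃ y, PairMem E f γ y) ∧
    (∀ γ y y', PairMem E f γ y → PairMem E f γ y' → y = y') ∧
    (∀ y, PairMem E lt y x → ∃ γ, E γ β ∧ PairMem E f γ y) ∧
    (∀ γ δ y z, E γ δ → PairMem E f γ y → PairMem E f δ z → PairMem E lt y z)

def IsLevelOf (lt T L β : M) : Prop := ∀ x, E x L ↔ (E x T ∧ IsHeightOf E lt x β)

/-- `(T, lt)` is a `κ`-tree: a tree of height `κ` all of whose levels have size `< κ`. -/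
def IsKappaTree (T lt κ : M) : Prop :=
  IsTreeOrderOn E lt T ∧
  (∀ x, E x T → ∃ β, E β κ ∧ IsHeightOf E lt x β) ∧
  (∀ β, E β κ → ∃ x, E x T ∧ IsHeightOf E lt x β) ∧
  (∀ β L, E β κ → IsLevelOf E lt T L β → CardLT E L κ)

def IsChainIn (lt C T : M) : Prop :=
  Sub E C T ∧ ∀ x y, E x C → E y C → (x = y ∨ PairMem E lt x y ∨ PairMem E lt y x)

def IsAntichainIn (lt A T : M) : Prop :=
  Sub E A T ∧ ∀ x y, E x A → E y A → x ≠ y → ¬ PairMem E lt x y ∧ ¬ PairMem E lt y x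

def HasCofinalBranch (T lt κ : M) : Prop :=
  ∃ b, IsChainIn E lt b T ∧ ∀ β, E β κ → ∃ x, E x b ∧ IsHeightOf E lt x β

def HasTreeProperty (κ : M) : Prop :=
  ∀ T lt, IsKappaTree E T lt κ → HasCofinalBranch E T lt κ

/-- Weakly compact: inaccessible with the tree property. -/
def IsWeaklyCompact (κ : M) : Prop := IsInaccessible E κ ∧ HasTreeProperty E κ

def IsLeastWeaklyCompact (κ : M) : Prop :=
  IsWeaklyCompact E κ ∧ ∀ μ, E μ κ → ¬ IsWeaklyCompact E μ

/-- `(T, lt)` is a `κ`-Souslin tree: a tree of height `κ` all of whose levels,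
chains and antichains have size `< κ`. -/
def IsSouslinTree (T lt κ : M) : Prop :=
  IsTreeOrderOn E lt T ∧
  (∀ x, E x T → ∃ β, E β κ ∧ IsHeightOf E lt x β) ∧
  (∀ β, E β κ → ∃ x, E x T ∧ IsHeightOf E lt x β) ∧
  (∀ β L, E β κ → IsLevelOf E lt T L β → CardLT E L κ) ∧
  (∀ C, IsChainIn E lt C T → CardLT E C κ) ∧
  (∀ A, IsAntichainIn E lt A T → CardLT E A κ)

/-- The automorphism group of `(T, lt)` acts transitively on each level. -/
def IsHomogeneousTree (T lt : M) : Prop :=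
  ∀ x y β, E x T → E y T → IsHeightOf E lt x β → IsHeightOf E lt y β →
    ∃ π, IsBijFromTo E π T T ∧
      (∀ u v u' v', PairMem E π u u' → PairMem E π v v' →
        (PairMem E lt u v ↔ PairMem E lt u' v')) ∧
      PairMem E π x y

/-! filters and measurability -/

def IsFilterOn (F κ : M) : Prop :=
  (∀ X, E X F → Sub E X κ) ∧ (∃ X, E X F) ∧ (∀ X, E X F → ∃ x, E x X) ∧
  (∀ X Y, E X F → Sub E X Y → Sub E Y κ → E Y F)

/-- `F` is a `κ`-complete filter on `κ`: it is closed under internal intersections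
of families of size `< κ`. -/
def IsKappaCompleteFilterOn (F κ : M) : Prop :=
  IsFilterOn E F κ ∧
  ∀ β g, E β κ → IsFuncFromTo E g β F →
    ∀ Z, (∀ x, E x Z ↔ (E x κ ∧ ∀ γ Y, E γ β → PairMem E g γ Y → E x Y)) → E Z F

def IsPrincipalOn (F κ : M) : Prop := ∃ a, ∀ X, E X F ↔ (Sub E X κ ∧ Sub E a X)

/-- The filter `F` measures the set `A ⊆ κ`. -/
def MeasuresIn (F A κ : M) : Prop :=
  E A F ∨ ∃ A', (∀ x, E x A' ↔ (E x κ ∧ ¬ E x A)) ∧ E A' F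

/-- Measurable: there is a `κ`-complete nonprincipal ultrafilter on `κ`. -/
def IsMeasurable (κ : M) : Prop :=
  IsInaccessible E κ ∧ ∃ F, IsKappaCompleteFilterOn E F κ ∧ ¬ IsPrincipalOn E F κ ∧
    ∀ A, Sub E A κ → MeasuresIn E F A κ

/-- Weakly measurable: an inaccessible `κ` such that every family of at most `κ⁺`
many subsets of `κ` is measured by some `κ`-complete nonprincipal filter. -/
def IsWeaklyMeasurable (κ : M) : Prop :=
  IsInaccessible E κ ∧ ∀ lam 𝒜, IsCardSuccOf E lam κ → (∀ A, E A 𝒜 → Sub E A κ) →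
    CardLE E 𝒜 lam →
    ∃ F, IsKappaCompleteFilterOn E F κ ∧ ¬ IsPrincipalOn E F κ ∧
      ∀ A, E A 𝒜 → MeasuresIn E F A κ

/-! Cohen forcing `Add(κ,1)` -/

def IsTwo (t : M) : Prop := ∃ z o, IsEmptySet E z ∧ IsSuccOf E o z ∧ IsSuccOf E t o

/-- A condition of `Add(κ,1)`: a binary partial function on κ of size `< κ`. -/
def IsCohenCondition (c κ : M) : Prop :=
  (∃ t, IsTwo E t ∧ ∀ p, E p c → ∃ x y, E x κ ∧ E y t ∧ IsOPairOf E p x y) ∧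
  (∀ x y y', PairMem E c x y → PairMem E c x y' → y = y') ∧
  CardLT E c κ

/-- `(C, leC)` is the Cohen forcing `Add(κ,1)`, ordered by (reverse) extension. -/
def IsCohenPoset (C leC κ : M) : Prop :=
  (∀ c, E c C ↔ IsCohenCondition E c κ) ∧
  (∀ p, E p leC ↔ ∃ c d, E c C ∧ E d C ∧ Sub E d c ∧ IsOPairOf E p c d)

def IsDenseIn (D P le : M) : Prop :=
  Sub E D P ∧ ∀ p, E p P → ∃ q, E q D ∧ PairMem E le q p

end ZF

/-! ZFC satisfaction (first-order, schemes ranging over all formulas with parameters) -/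

/-- The separation scheme for `(M, E)`. -/
def SepScheme {M : Type u} (E : M → M → Prop) : Prop :=
  ∀ (n : ℕ) (φ : memLang.BoundedFormula Empty (n + 1)) (params : Fin n → M) (a : M),
    ∃ b, ∀ x, E x b ↔ (E x a ∧ RealizeIn E φ (Fin.snoc params x))

/-- The collection scheme for `(M, E)`. -/
def CollectionScheme {M : Type u} (E : M → M → Prop) : Prop :=
  ∀ (n : ℕ) (φ : memLang.BoundedFormula Empty (n + 2)) (params : Fin n → M) (a : M),
    (∀ x, E x a → ∃ y, RealizeIn E φ (Fin.snoc (Fin.snoc params x) y)) →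
    ∃ b, ∀ x, E x a → ∃ y, E y b ∧ RealizeIn E φ (Fin.snoc (Fin.snoc params x) y)

/-- `(M, E)` is a (well-founded) model of `ZFC⁻`: Zermelo–Fraenkel set theory with
choice and collection, but without the power set axiom. -/
structure SatisfiesZFCminus {M : Type u} (E : M → M → Prop) : Prop where
  ext : ∀ x y, (∀ z, E z x ↔ E z y) → x = y
  found : WellFounded E
  pairing : ∀ a b, ∃ p, ZF.IsPairOf E p a b
  union : ∀ a, ∃ u, ∀ x, E x u ↔ ∃ y, E y a ∧ E x y
  infinity : ∃ w, ZF.IsOmega E w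
  sep : SepScheme E
  coll : CollectionScheme E
  choice : ∀ a, (∀ x, E x a → ∃ y, E y x) →
    ∃ f, (∀ x y y', ZF.PairMem E f x y → ZF.PairMem E f x y' → y = y') ∧
      ∀ x, E x a → ∃ y, ZF.PairMem E f x y ∧ E y x

/-- `(M, E)` is a (well-founded) model of `ZFC`. -/
structure SatisfiesZFC {M : Type u} (E : M → M → Prop) extends SatisfiesZFCminus E : Prop where
  power : ∀ a, ∃ p, ZF.IsPowersetOf E p a

/-- A universe of set theory: a (well-founded) first-order model of ZFC. -/
structure ZFCUniverse : Type (u + 1) where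
  M : Type u
  mem : M → M → Prop
  zfc : SatisfiesZFC mem

namespace ZFCUniverse

variable (U : ZFCUniverse.{u})

/-- The external (von Neumann) rank of an element of a universe. -/
noncomputable def rk (x : U.M) : Ordinal.{u} :=
  (U.zfc.found.apply x).rank

/-- The extension of an internal set, as a type. -/
def Elem (m : U.M) : Type u := {x : U.M // U.mem x m}

/-- Membership restricted to an internal set. -/
def memOn (m : U.M) : U.Elem m → U.Elem m → Prop := fun x y => U.mem x.val y.val

/-- Elementary embeddings between (the membership structures of) two internal sets. -/
abbrev SetEmb (m n : U.M) := MemElemEmbed (U.memOn m) (U.memOn n)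

/-- The internal set `m` is a model of ZFC. -/
def SetModelsZFC (m : U.M) : Prop := SatisfiesZFC (U.memOn m)

/-- The internal set `m` is a model of ZFC⁻. -/
def SetModelsZFCminus (m : U.M) : Prop := SatisfiesZFCminus (U.memOn m)

/-- `m` is closed under `<κ`-sequences: `m^{<κ} ⊆ m`. -/
def SeqClosedIn (m κ : U.M) : Prop :=
  ∀ β f, U.mem β κ → ZF.IsFuncFromTo U.mem f β m → U.mem f m

/-- `κ` is unfoldable: for every ordinal `θ` and every transitive set `m` of size `κ`
with `κ ∈ m` there is a transitive set `n` and an elementary embedding `j : m → n`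
with critical point `κ` and `j(κ) > θ`. -/
def Unfoldable (κ : U.M) : Prop :=
  ∀ θ, ZF.IsOrdinal U.mem θ →
  ∀ m (hκ : U.mem κ m), ZF.IsTransitiveSet U.mem m → ZF.SameCard U.mem m κ →
    ∃ n, ZF.IsTransitiveSet U.mem n ∧
      ∃ j : U.SetEmb m n,
        (∀ x (hx : U.mem x m), U.mem x κ → (MemElemEmbed.app j ⟨x, hx⟩).val = x) ∧
        U.mem θ ((MemElemEmbed.app j ⟨κ, hκ⟩).val)

/-- `κ` is strongly unfoldable: unfoldability embeddings can moreover be found with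
`V_θ ⊆ n`. -/
def StronglyUnfoldable (κ : U.M) : Prop :=
  ∀ θ, ZF.IsOrdinal U.mem θ →
  ∀ m (hκ : U.mem κ m), ZF.IsTransitiveSet U.mem m → ZF.SameCard U.mem m κ →
    ∃ n, ZF.IsTransitiveSet U.mem n ∧
      (∀ x, U.rk x < U.rk θ → U.mem x n) ∧
      ∃ j : U.SetEmb m n,
        (∀ x (hx : U.mem x m), U.mem x κ → (MemElemEmbed.app j ⟨x, hx⟩).val = x) ∧
        U.mem θ ((MemElemEmbed.app j ⟨κ, hκ⟩).val)

/-- `κ` is nearly `θ`-supercompact: for every `A ⊆ θ` there are a transitive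
`ZFC`-model `m` with `m^{<κ} ⊆ m` and `A, κ, θ ∈ m`, a transitive set `n`, and an
elementary embedding `j : m → n` with critical point `κ`, `θ < j(κ)` and `j '' θ ∈ n`. -/
def NearlySupercompact (κ θ : U.M) : Prop :=
  ∀ A, ZF.Sub U.mem A θ →
    ∃ m, ZF.IsTransitiveSet U.mem m ∧ U.SetModelsZFC m ∧ U.SeqClosedIn m κ ∧ U.mem A m ∧
      ∃ (hκ : U.mem κ m) (hθm : U.mem θ m) (n : U.M), ZF.IsTransitiveSet U.mem n ∧
        ∃ j : U.SetEmb m n,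
          (∀ x (hx : U.mem x m), U.mem x κ → (MemElemEmbed.app j ⟨x, hx⟩).val = x) ∧
          U.mem θ ((MemElemEmbed.app j ⟨κ, hκ⟩).val) ∧
          ∃ jθ, U.mem jθ n ∧
            ∀ y, U.mem y jθ ↔ ∃ α, ∃ hα : U.mem α m, U.mem α θ ∧ y = (MemElemEmbed.app j ⟨α, hα⟩).val

/-- `κ` is `λ`-nearly `θ`-supercompact: for every `A ⊆ λ` there are a transitive
`ZFC⁻`-model `m` with `m^{<κ} ⊆ m` and `A, κ, θ ∈ m`, a transitive set `n`, and an
elementary embedding `j : m → n` with critical point `κ`, `θ < j(κ)` and `j '' θ ∈ n`. -/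
def LambdaNearlySupercompact (κ θ lam : U.M) : Prop :=
  ∀ A, ZF.Sub U.mem A lam →
    ∃ m, ZF.IsTransitiveSet U.mem m ∧ U.SetModelsZFCminus m ∧ U.SeqClosedIn m κ ∧ U.mem A m ∧
      ∃ (hκ : U.mem κ m) (hθm : U.mem θ m) (n : U.M), ZF.IsTransitiveSet U.mem n ∧
        ∃ j : U.SetEmb m n,
          (∀ x (hx : U.mem x m), U.mem x κ → (MemElemEmbed.app j ⟨x, hx⟩).val = x) ∧
          U.mem θ ((MemElemEmbed.app j ⟨κ, hκ⟩).val) ∧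
          ∃ jθ, U.mem jθ n ∧
            ∀ y, U.mem y jθ ↔ ∃ α, ∃ hα : U.mem α m, U.mem α θ ∧ y = (MemElemEmbed.app j ⟨α, hα⟩).val

/-- `κ` is `θ`-supercompact: there is an elementary embedding `j : V → M` of the
universe into a transitive class `M` with critical point `κ`, `j(κ) > θ` and
`M^θ ⊆ M`. -/
def ThetaSupercompact (κ θ : U.M) : Prop :=
  ∃ cl : U.M → Prop,
    (∀ x y, cl y → U.mem x y → cl x) ∧
    (∀ f, (∀ p, U.mem p f → ∃ x y, U.mem x θ ∧ cl y ∧ ZF.IsOPairOf U.mem p x y) →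
      (∀ x, U.mem x θ → ∃ y, ZF.PairMem U.mem f x y) →
      (∀ x y y', ZF.PairMem U.mem f x y → ZF.PairMem U.mem f x y' → y = y') → cl f) ∧
    ∃ j : MemElemEmbed U.mem (fun x y : {z : U.M // cl z} => U.mem x.val y.val),
      (∀ x, U.mem x κ → (MemElemEmbed.app j x).val = x) ∧
      U.mem θ ((MemElemEmbed.app j κ).val)

/-- `κ` is supercompact: `θ`-supercompact for every ordinal `θ`. -/
def Supercompact (κ : U.M) : Prop :=
  ∀ θ, ZF.IsOrdinal U.mem θ → U.ThetaSupercompact κ θ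

/-- The GCH holds in `U`. -/
def GCHholds : Prop :=
  ∀ lam p mu, ZF.IsCardinal U.mem lam →
    (∃ w, ZF.IsOmega U.mem w ∧ (U.mem w lam ∨ w = lam)) →
    ZF.IsPowersetOf U.mem p lam → ZF.IsCardSuccOf U.mem mu lam →
    ZF.SameCard U.mem p mu

end ZFCUniverse

/-! forcing extensions, semantically -/

/-- An `∈`-embedding of one universe into another, with transitive range:
the ground model sits inside the extension as a transitive sub-universe. -/
structure MemEmbed (U V : ZFCUniverse.{u}) where
  f : U.M → V.M
  mem_iff : ∀ x y, V.mem (f x) (f y) ↔ U.mem x y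
  trans_range : ∀ x y, V.mem y (f x) → ∃ z, U.mem z x ∧ y = f z

def MemEmbed.comp {U V W : ZFCUniverse.{u}} (g : MemEmbed V W) (e : MemEmbed U V) :
    MemEmbed U W where
  f := fun x => g.f (e.f x)
  mem_iff := by intro x y; rw [g.mem_iff, e.mem_iff]
  trans_range := by
    intro x y hy
    obtain ⟨z, hz, rfl⟩ := g.trans_range (e.f x) y hy
    obtain ⟨w, hw, rfl⟩ := e.trans_range x z hz
    exact ⟨w, hw, rfl⟩

/-- `V = U[G]` is a (set-)forcing extension of `U` by the poset `(P, le) ∈ U` with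
generic filter `G`: `G` is an `U`-generic filter on `P`, `V` has the same ordinals
as `U`, and `V` is the least such universe generated by `U` together with `G`. -/
structure IsSetGenericExt (U V : ZFCUniverse.{u}) (e : MemEmbed U V)
    (P le : U.M) (G : V.M) : Prop where
  poset : ZF.IsPartialOrderOn U.mem le P
  sub : ∀ x, V.mem x G → ∃ p, U.mem p P ∧ x = e.f p
  upward : ∀ p q, U.mem p P → U.mem q P → ZF.PairMem U.mem le p q →
    V.mem (e.f p) G → V.mem (e.f q) G
  directed : ∀ p q, U.mem p P → U.mem q P → V.mem (e.f p) G → V.mem (e.f q) G →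
    ∃ r, U.mem r P ∧ V.mem (e.f r) G ∧ ZF.PairMem U.mem le r p ∧ ZF.PairMem U.mem le r q
  generic : ∀ D, ZF.IsDenseIn U.mem D P le → ∃ q, U.mem q D ∧ V.mem (e.f q) G
  ords : ∀ x, ZF.IsOrdinal V.mem x → ∃ y, x = e.f y
  minimal : ∀ (W : ZFCUniverse.{u}) (g : MemEmbed U W) (H : W.M),
    (∀ x, W.mem x H ↔ ∃ p, V.mem (e.f p) G ∧ x = g.f p) →
    (∀ x, ZF.IsOrdinal W.mem x → ∃ y, x = g.f y) →
    ∃ h : MemEmbed V W, ∀ x, h.f (e.f x) = g.f x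

/-- A class of a universe, given by a first-order formula with parameters. -/
def DefinableClass (U : ZFCUniverse.{u}) (W : Set U.M) : Prop :=
  ∃ (n : ℕ) (φ : memLang.BoundedFormula Empty (n + 1)) (params : Fin n → U.M),
    ∀ x, x ∈ W ↔ RealizeIn U.mem φ (Fin.snoc params x)

/-- A binary class relation of a universe, given by a first-order formula with
parameters. -/
def DefinableClass₂ (U : ZFCUniverse.{u}) (R : U.M → U.M → Prop) : Prop :=
  ∃ (n : ℕ) (φ : memLang.BoundedFormula Empty (n + 2)) (params : Fin n → U.M),
    ∀ x y, R x y ↔ RealizeIn U.mem φ (Fin.snoc (Fin.snoc params x) y)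

/-- `V = U[G]` is a class-forcing extension of `U` by the definable class partial
order `(P, le)` of `U`, with generic class filter `G` meeting all definable dense
subclasses; `G` is amenable to `V`, the ordinals are the same, and `V` is least such. -/
structure IsClassGenericExt (U V : ZFCUniverse.{u}) (e : MemEmbed U V)
    (P : U.M → Prop) (le : U.M → U.M → Prop) (G : U.M → Prop) : Prop where
  defP : DefinableClass U {x | P x}
  defle : DefinableClass₂ U le
  le_dom : ∀ p q, le p q → P p ∧ P q
  refl : ∀ p, P p → le p p
  trans : ∀ p q r, le p q → le q r → le p r
  sub : ∀ p, G p → P p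
  upward : ∀ p q, le p q → G p → G q
  directed : ∀ p q, G p → G q → ∃ r, G r ∧ le r p ∧ le r q
  generic : ∀ D : Set U.M, DefinableClass U D → (∀ p, p ∈ D → P p) →
    (∀ p, P p → ∃ q, q ∈ D ∧ le q p) → ∃ q, q ∈ D ∧ G q
  amenable : ∀ a : V.M, ∃ b : V.M, ∀ x, V.mem x b ↔ (V.mem x a ∧ ∃ p, G p ∧ x = e.f p)
  ords : ∀ x, ZF.IsOrdinal V.mem x → ∃ y, x = e.f y
  minimal : ∀ (W : ZFCUniverse.{u}) (g : MemEmbed U W),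
    (∀ a : W.M, ∃ b : W.M, ∀ x, W.mem x b ↔ (W.mem x a ∧ ∃ p, G p ∧ x = g.f p)) →
    (∀ x, ZF.IsOrdinal W.mem x → ∃ y, x = g.f y) →
    ∃ h : MemEmbed V W, ∀ x, h.f (e.f x) = g.f x

/-- Two posets of `U` are forcing equivalent if they give rise to the same forcing
extensions. -/
def ForcingEquivPosets (U : ZFCUniverse.{u}) (P leP Q leQ : U.M) : Prop :=
  ∀ (V : ZFCUniverse.{u}) (e : MemEmbed U V),
    (∃ G, IsSetGenericExt U V e P leP G) ↔ (∃ G, IsSetGenericExt U V e Q leQ G)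

/-- `x` (an element of the universe `U`) has its extension contained in `S` and
definable, with parameters, over the structure `(S, ∈)`. -/
def DefinableOver (U : ZFCUniverse.{u}) (S : Set U.M) (x : U.M) : Prop :=
  (∀ z, U.mem z x → z ∈ S) ∧
  ∃ (n : ℕ) (φ : memLang.BoundedFormula Empty (n + 1)) (params : Fin n → S),
    ∀ z, ∀ hz : z ∈ S,
      (U.mem z x ↔
        RealizeIn (fun a b : S => U.mem a.val b.val) φ (Fin.snoc params ⟨z, hz⟩))

/-- The (externally indexed) constructible hierarchy over the universe `U`:
`L_0 = ∅`, `L_{α+1}` consists of the sets of `U` definable over `(L_α, ∈)`, and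
limit levels are unions. -/
noncomputable def LLevel (U : ZFCUniverse.{u}) (o : Ordinal.{u}) : Set U.M :=
  Ordinal.limitRecOn o ∅ (fun _ S => {x | DefinableOver U S x})
    (fun o _ ih => {x | ∃ o', ∃ h : o' < o, x ∈ ih o' h})

/-- The universe `U` satisfies `V = L`: every set appears in some level of the
constructible hierarchy (indexed by the ordinals of `U`). -/
def VeqL (U : ZFCUniverse.{u}) : Prop :=
  ∀ x : U.M, ∃ β, ZF.IsOrdinal U.mem β ∧ x ∈ LLevel U (U.rk β)

namespace SL

/-! ### Formulas and definability -/

/-- Formulas of set theory in de Bruijn form: variable `0` is the innermost bound one, and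
assignments are total functions `ℕ → M`. -/
inductive Fm : Type
  | bot : Fm
  | mem : ℕ → ℕ → Fm
  | eq : ℕ → ℕ → Fm
  | imp : Fm → Fm → Fm
  | all : Fm → Fm

/-- Prepending a value to an assignment. -/
def cns {M : Type u} (x : M) (v : ℕ → M) : ℕ → M
  | 0 => x
  | k + 1 => v k

@[simp] lemma cns_zero {M : Type u} (x : M) (v : ℕ → M) : cns x v 0 = x := rfl
@[simp] lemma cns_succ {M : Type u} (x : M) (v : ℕ → M) (k : ℕ) : cns x v (k + 1) = v k := rfl

/-- Satisfaction with all quantifiers restricted to the class `C`. -/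
def Fm.sat {M : Type u} (E : M → M → Prop) (C : M → Prop) : Fm → (ℕ → M) → Prop
  | .bot, _ => False
  | .mem i j, v => E (v i) (v j)
  | .eq i j, v => v i = v j
  | .imp φ ψ, v => φ.sat E C v → ψ.sat E C v
  | .all φ, v => ∀ x, C x → φ.sat E C (cns x v)

/-- Lifting a renaming of variables under a binder. -/
def lift (f : ℕ → ℕ) : ℕ → ℕ
  | 0 => 0
  | k + 1 => f k + 1

/-- Renaming of variables. -/
def Fm.ren : (ℕ → ℕ) → Fm → Fm
  | _, .bot => .bot
  | f, .mem i j => .mem (f i) (f j)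
  | f, .eq i j => .eq (f i) (f j)
  | f, .imp φ ψ => .imp (φ.ren f) (ψ.ren f)
  | f, .all φ => .all (φ.ren (lift f))

lemma Fm.sat_ren {M : Type u} (E : M → M → Prop) (C : M → Prop) (φ : Fm) :
    ∀ (f : ℕ → ℕ) (v : ℕ → M), (φ.ren f).sat E C v ↔ φ.sat E C (fun k => v (f k)) := by
  induction φ with
  | bot => intro f v; rfl
  | mem i j => intro f v; rfl
  | eq i j => intro f v; rfl
  | imp φ ψ h1 h2 => intro f v; simp only [Fm.ren, Fm.sat, h1, h2]
  | all φ h =>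
    intro f v
    simp only [Fm.ren, Fm.sat, h]
    refine forall_congr' fun x => imp_congr_right fun _ => ?_
    have : (fun k => cns x v (lift f k)) = cns x (fun k => v (f k)) := by
      funext k; cases k <;> rfl
    rw [this]

/-- Truth of a formula depends only on finitely many values of the assignment. -/
lemma Fm.supp (φ : Fm) : ∃ n : ℕ, ∀ {M : Type u} (E : M → M → Prop) (C : M → Prop)
    (v v' : ℕ → M), (∀ k < n, v k = v' k) → (φ.sat E C v ↔ φ.sat E C v') := by
  induction φ with
  | bot => exact ⟨0, fun E C v v' h => Iff.rfl⟩
  | mem i j =>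
    refine ⟨max i j + 1, fun E C v v' h => ?_⟩
    simp only [Fm.sat]; rw [h i (by omega), h j (by omega)]
  | eq i j =>
    refine ⟨max i j + 1, fun E C v v' h => ?_⟩
    simp only [Fm.sat]; rw [h i (by omega), h j (by omega)]
  | imp φ ψ h1 h2 =>
    obtain ⟨n1, h1⟩ := h1
    obtain ⟨n2, h2⟩ := h2
    refine ⟨max n1 n2, fun E C v v' h => ?_⟩
    simp only [Fm.sat]
    rw [h1 E C v v' (fun k hk => h k (by omega)), h2 E C v v' (fun k hk => h k (by omega))]
  | all φ h1 =>
    obtain ⟨n1, h1⟩ := h1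
    refine ⟨n1, fun E C v v' h => ?_⟩
    simp only [Fm.sat]
    refine forall_congr' fun x => imp_congr_right fun _ => h1 E C _ _ ?_
    intro k hk
    cases k with
    | zero => rfl
    | succ k => exact h k (by omega)

/-- Translation into Mathlib's bounded formulas. -/
lemma Fm.toBF (φ : Fm) : ∀ (n : ℕ) (ρ : ℕ → Fin n), ∃ ψ : memLang.BoundedFormula Empty n,
    ∀ {M : Type u} (E : M → M → Prop) (xs : Fin n → M),
      RealizeIn E ψ xs ↔ φ.sat E (fun _ => True) (fun k => xs (ρ k)) := by
  induction φ with
  | bot => exact fun n ρ => ⟨⊥, fun E xs => by simp [RealizeIn, Fm.sat]⟩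
  | mem i j =>
    intro n ρ
    refine ⟨BoundedFormula.rel (n := n) (L := memLang) leSymb
      ![Term.var (Sum.inr (ρ i)), Term.var (Sum.inr (ρ j))], fun E xs => ?_⟩
    simp only [RealizeIn, BoundedFormula.Realize, Fm.sat]
    rfl
  | eq i j =>
    intro n ρ
    refine ⟨BoundedFormula.equal (Term.var (Sum.inr (ρ i))) (Term.var (Sum.inr (ρ j))),
      fun E xs => ?_⟩
    simp only [RealizeIn, BoundedFormula.Realize, Fm.sat]
    rfl
  | imp φ ψ h1 h2 =>
    intro n ρ
    obtain ⟨a, ha⟩ := h1 n ρ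
    obtain ⟨b, hb⟩ := h2 n ρ
    refine ⟨a.imp b, fun E xs => ?_⟩
    simp only [RealizeIn] at ha hb ⊢
    simp only [BoundedFormula.realize_imp, Fm.sat, ha, hb]
  | all φ h =>
    intro n ρ
    obtain ⟨a, ha⟩ := h (n + 1) (fun k => match k with
      | 0 => Fin.last n
      | k + 1 => (ρ k).castSucc)
    refine ⟨a.all, fun E xs => ?_⟩
    simp only [RealizeIn] at ha ⊢
    simp only [BoundedFormula.realize_all, Fm.sat, ha]
    refine forall_congr' fun x => ?_
    simp only [forall_const]
    have : (fun k => (Fin.snoc xs x : Fin (n+1) → _) (match k with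
      | 0 => Fin.last n
      | k + 1 => (ρ k).castSucc)) = cns x (fun k => xs (ρ k)) := by
      funext k; cases k <;> simp
    rw [this]

local infix:50 "ε" => ZFCUniverse.mem _

section
variable {U : ZFCUniverse.{u}}

/-! ### Definable relations and functions -/

/-- Satisfaction in the universe with quantifiers restricted to `C`. -/
def ssat (C : U.M → Prop) (φ : Fm) (v : ℕ → U.M) : Prop := φ.sat U.mem C v

/-- `P` is first-order definable over the universe `U`, parameters from `U` being allowed. The
argument of `P` is an assignment of values to the free variables. -/
class Dfn (P : (ℕ → U.M) → Prop) : Prop where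
  out : ∃ (φ : Fm) (σ : ℕ → ℕ ⊕ U.M), ∀ v, P v ↔
    φ.sat U.mem (fun _ => True) (fun k => Sum.elim v id (σ k))

/-- The function `f` of an assignment is first-order definable over `U` with parameters. -/
class DF (f : (ℕ → U.M) → U.M) : Prop where
  out : Dfn (fun w => w 0 = f (fun k => w (k + 1)))

lemma Dfn.congr {P Q : (ℕ → U.M) → Prop} (h : Dfn P) (e : ∀ v, Q v ↔ P v) : Dfn Q := by
  have : P = Q := by funext v; exact propext (e v).symm
  rwa [← this]

instance Dfn.imp {P Q : (ℕ → U.M) → Prop} [hP : Dfn P] [hQ : Dfn Q] :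
    Dfn (fun v => P v → Q v) := by
  obtain ⟨φ, σ, h1⟩ := hP.out
  obtain ⟨ψ, τ, h2⟩ := hQ.out
  refine ⟨.imp (φ.ren (fun k => 2 * k)) (ψ.ren (fun k => 2 * k + 1)),
    fun k => if k % 2 = 0 then σ (k / 2) else τ (k / 2), fun v => ?_⟩
  simp only [Fm.sat, Fm.sat_ren, h1, h2]
  have a1 : ∀ k, (2 * k) % 2 = 0 := by intro k; omega
  have a2 : ∀ k, (2 * k + 1) % 2 ≠ 0 := by intro k; omega
  have a3 : ∀ k, (2 * k + 1) / 2 = k := by intro k; omega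
  have a4 : ∀ k, (2 * k) / 2 = k := by intro k; omega
  simp [a3]

instance Dfn.const (p : Prop) : Dfn (U := U) (fun _ => p) := by
  by_cases h : p
  · exact ⟨.imp .bot .bot, fun k => .inl k, fun v => by simp [h, Fm.sat]⟩
  · exact ⟨.bot, fun k => .inl k, fun v => by simp [h, Fm.sat]⟩

instance (priority := 1100) Dfn.not {P : (ℕ → U.M) → Prop} [hP : Dfn P] : Dfn (fun v => ¬ P v) :=
  (inferInstance : Dfn (fun v => P v → False))

instance Dfn.and {P Q : (ℕ → U.M) → Prop} [hP : Dfn P] [hQ : Dfn Q] :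
    Dfn (fun v => P v ∧ Q v) :=
  (inferInstance : Dfn (fun v => ¬ (P v → ¬ Q v))).congr (fun v => by tauto)

instance Dfn.or {P Q : (ℕ → U.M) → Prop} [hP : Dfn P] [hQ : Dfn Q] :
    Dfn (fun v => P v ∨ Q v) :=
  (inferInstance : Dfn (fun v => (¬ P v → Q v))).congr (fun v => by tauto)

instance Dfn.iff {P Q : (ℕ → U.M) → Prop} [hP : Dfn P] [hQ : Dfn Q] :
    Dfn (fun v => P v ↔ Q v) :=
  (inferInstance : Dfn (fun v => (P v → Q v) ∧ (Q v → P v))).congr (fun v => by tauto)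

instance Dfn.all {P : (ℕ → U.M) → U.M → Prop} [hP : Dfn (fun w => P (fun k => w (k + 1)) (w 0))] :
    Dfn (fun v => ∀ x, P v x) := by
  obtain ⟨φ, σ, h1⟩ := hP.out
  refine ⟨.all (φ.ren fun k => match σ k with | .inl 0 => 0 | _ => k + 1),
    fun k => match σ k with | .inl (j + 1) => .inl j | .inl 0 => .inl 0 | .inr a => .inr a,
    fun v => ?_⟩
  simp only [Fm.sat, Fm.sat_ren, forall_const]
  refine forall_congr' fun x => ?_
  have := h1 (cns x v)
  simp only [cns_zero, cns_succ] at this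
  rw [this]
  apply iff_of_eq
  congr 1
  funext k
  rcases h : σ k with (_ | j) | a <;> simp [h]

instance Dfn.ex {P : (ℕ → U.M) → U.M → Prop} [hP : Dfn (fun w => P (fun k => w (k + 1)) (w 0))] :
    Dfn (fun v => ∃ x, P v x) :=
  (inferInstance : Dfn (fun v => ¬ ∀ x, ¬ P v x)).congr (fun v => by push Not; rfl)

lemma Dfn.memV (i j : ℕ) : Dfn (U := U) (fun v => v i ε v j) :=
  ⟨.mem 0 1, fun k => if k = 0 then .inl i else .inl j, fun v => by simp [Fm.sat]⟩

lemma Dfn.eqV (i j : ℕ) : Dfn (U := U) (fun v => v i = v j) :=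
  ⟨.eq 0 1, fun k => if k = 0 then .inl i else .inl j, fun v => by simp [Fm.sat]⟩

/-- Substitution of variables. -/
lemma Dfn.ren {P : (ℕ → U.M) → Prop} (hP : Dfn P) (f : ℕ → ℕ) : Dfn (fun v => P (fun k => v (f k))) := by
  obtain ⟨φ, σ, h1⟩ := hP.out
  refine ⟨φ, fun k => match σ k with | .inl j => .inl (f j) | .inr a => .inr a, fun v => ?_⟩
  rw [h1]
  apply iff_of_eq
  congr 1
  funext k
  rcases h : σ k with j | a <;> simp [h]

instance DF.var (k : ℕ) : DF (U := U) (fun v => v k) :=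
  ⟨Dfn.eqV 0 (k + 1)⟩

instance (priority := 900) DF.const (a : U.M) : DF (U := U) (fun _ => a) :=
  ⟨⟨.eq 0 1, fun k => if k = 0 then .inl 0 else .inr a, fun v => by simp [Fm.sat]⟩⟩

lemma Dfn.comp1 {P : U.M → Prop} (hP : Dfn (fun v => P (v 0))) {f : (ℕ → U.M) → U.M} (hf : DF f) :
    Dfn (fun v => P (f v)) := by
  have h1 := hf.out
  have h2 : Dfn (U := U) (fun v => P (v 0)) := hP
  exact (inferInstance : Dfn (fun v => ∀ x, x = f v → P x)).congr (fun v => by simp)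

lemma DF.out1 {f : (ℕ → U.M) → U.M} (hf : DF f) (m : ℕ) (s : ℕ → ℕ) :
    Dfn (fun w => w m = f (fun k => w (s k))) := by
  refine (hf.out.ren (fun k => match k with | 0 => m | k + 1 => s k)).congr (fun v => Iff.rfl)

lemma Dfn.comp2 {P : U.M → U.M → Prop} (hP : Dfn (fun v => P (v 0) (v 1)))
    {f g : (ℕ → U.M) → U.M} (hf : DF f) (hg : DF g) :
    Dfn (fun v => P (f v) (g v)) := by
  have h1 : Dfn (U := U) fun w => w 1 = f (fun k => w (k + 2)) := hf.out1 1 _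
  have h2 : Dfn (U := U) fun w => w 0 = g (fun k => w (k + 2)) := hg.out1 0 _
  have h3 : Dfn (U := U) fun w => P (w 1) (w 0) := hP.ren (fun k => match k with | 0 => 1 | _ => 0)
  have h4 : Dfn (U := U) fun v => ∀ x y, (x = f v ∧ y = g v) → P x y :=
    @Dfn.all _ _ (@Dfn.all _ _ (@Dfn.imp _ _ _ (@Dfn.and _ _ _ h1 h2) h3))
  exact h4.congr (fun v => by simp)

lemma Dfn.comp3 {P : U.M → U.M → U.M → Prop} (hP : Dfn (fun v => P (v 0) (v 1) (v 2)))
    {f g h : (ℕ → U.M) → U.M} (hf : DF f) (hg : DF g) (hh : DF h) :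
    Dfn (fun v => P (f v) (g v) (h v)) := by
  have h1 : Dfn (U := U) fun w => w 2 = f (fun k => w (k + 3)) := hf.out1 2 _
  have h2 : Dfn (U := U) fun w => w 1 = g (fun k => w (k + 3)) := hg.out1 1 _
  have h2' : Dfn (U := U) fun w => w 0 = h (fun k => w (k + 3)) := hh.out1 0 _
  have h3 : Dfn (U := U) fun w => P (w 2) (w 1) (w 0) :=
    hP.ren (fun k => match k with | 0 => 2 | 1 => 1 | _ => 0)
  have h4 : Dfn (U := U) fun v => ∀ x y z, (x = f v ∧ y = g v ∧ z = h v) → P x y z :=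
    @Dfn.all _ _ (@Dfn.all _ _ (@Dfn.all _ _
      (@Dfn.imp _ _ _ (@Dfn.and _ _ _ h1 (@Dfn.and _ _ _ h2 h2')) h3)))
  exact h4.congr (fun v => ⟨by rintro h _ _ _ ⟨rfl, rfl, rfl⟩; exact h,
    fun h => h _ _ _ ⟨rfl, rfl, rfl⟩⟩)

lemma Dfn.comp4 {P : U.M → U.M → U.M → U.M → Prop} (hP : Dfn (fun v => P (v 0) (v 1) (v 2) (v 3)))
    {f g h e : (ℕ → U.M) → U.M} (hf : DF f) (hg : DF g) (hh : DF h) (he : DF e) :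
    Dfn (fun v => P (f v) (g v) (h v) (e v)) := by
  have h1 : Dfn (U := U) fun w => w 3 = f (fun k => w (k + 4)) := hf.out1 3 _
  have h2 : Dfn (U := U) fun w => w 2 = g (fun k => w (k + 4)) := hg.out1 2 _
  have h2' : Dfn (U := U) fun w => w 1 = h (fun k => w (k + 4)) := hh.out1 1 _
  have h2'' : Dfn (U := U) fun w => w 0 = e (fun k => w (k + 4)) := he.out1 0 _
  have h3 : Dfn (U := U) fun w => P (w 3) (w 2) (w 1) (w 0) :=
    hP.ren (fun k => match k with | 0 => 3 | 1 => 2 | 2 => 1 | _ => 0)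
  have h4 : Dfn (U := U) fun v => ∀ x y z t, (x = f v ∧ y = g v ∧ z = h v ∧ t = e v) → P x y z t :=
    @Dfn.all _ _ (@Dfn.all _ _ (@Dfn.all _ _ (@Dfn.all _ _
      (@Dfn.imp _ _ _ (@Dfn.and _ _ _ h1 (@Dfn.and _ _ _ h2 (@Dfn.and _ _ _ h2' h2''))) h3))))
  exact h4.congr (fun v => ⟨by rintro h _ _ _ _ ⟨rfl, rfl, rfl, rfl⟩; exact h,
    fun h => h _ _ _ _ ⟨rfl, rfl, rfl, rfl⟩⟩)

instance Dfn.mem {f g : (ℕ → U.M) → U.M} [hf : DF f] [hg : DF g] : Dfn (fun v => f v ε g v) :=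
  Dfn.comp2 (P := fun x y => x ε y) (Dfn.memV 0 1) hf hg

instance Dfn.eq {f g : (ℕ → U.M) → U.M} [hf : DF f] [hg : DF g] : Dfn (fun v => f v = g v) :=
  Dfn.comp2 (P := fun x y => x = y) (Dfn.eqV 0 1) hf hg

/-- Definable functions are closed under composition. -/
lemma DF.comp1 {F : U.M → U.M} (hF : DF (fun v => F (v 0))) {f : (ℕ → U.M) → U.M} (hf : DF f) :
    DF (fun v => F (f v)) := by
  refine ⟨Dfn.comp2 (P := fun x y => x = F y) ?_ (DF.var 0) (f := fun v => v 0)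
    (g := fun w => f (fun k => w (k + 1))) ?_⟩
  · exact hF.out
  · exact ⟨hf.out1 0 _⟩

lemma DF.comp2 {F : U.M → U.M → U.M} (hF : DF (fun v => F (v 0) (v 1)))
    {f g : (ℕ → U.M) → U.M} (hf : DF f) (hg : DF g) : DF (fun v => F (f v) (g v)) := by
  refine ⟨Dfn.comp3 (P := fun x y z => x = F y z) ?_ (DF.var 0) (f := fun v => v 0)
    (g := fun w => f (fun k => w (k + 1))) (h := fun w => g (fun k => w (k + 1))) ?_ ?_⟩
  · exact hF.out
  · exact ⟨hf.out1 0 _⟩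
  · exact ⟨hg.out1 0 _⟩

lemma DF.comp3 {F : U.M → U.M → U.M → U.M} (hF : DF (fun v => F (v 0) (v 1) (v 2)))
    {f g h : (ℕ → U.M) → U.M} (hf : DF f) (hg : DF g) (hh : DF h) :
    DF (fun v => F (f v) (g v) (h v)) := by
  refine ⟨Dfn.comp4 (P := fun x y z t => x = F y z t) ?_ (DF.var 0) (f := fun v => v 0)
    (g := fun w => f (fun k => w (k + 1))) (h := fun w => g (fun k => w (k + 1)))
    (e := fun w => h (fun k => w (k + 1))) ?_ ?_ ?_⟩
  · exact hF.out
  · exact ⟨hf.out1 0 _⟩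
  · exact ⟨hg.out1 0 _⟩
  · exact ⟨hh.out1 0 _⟩

lemma ext {x y : U.M} (h : ∀ z, z ε x ↔ z ε y) : x = y := U.zfc.ext x y h

/-- A function is definable as soon as membership in its values is. -/
lemma DF.of_mem {f : (ℕ → U.M) → U.M} {Q : (ℕ → U.M) → U.M → Prop} (h : ∀ v x, x ε f v ↔ Q v x)
    [hQ : Dfn (fun w => Q (fun k => w (k + 2)) (w 0))] : DF f := by
  refine ⟨?_⟩
  have : Dfn (U := U) (fun w => ∀ x, x ε w 0 ↔ Q (fun k => w (k + 1)) x) := inferInstance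
  refine this.congr fun v => ⟨fun e x => by rw [e, h], fun e => ext fun x => by rw [e, h]⟩

lemma Dfn.cond1 {P : U.M → Prop} (h : Dfn (fun v => P (v 0))) : ∃ (n : ℕ)
    (ψ : memLang.BoundedFormula Empty (n + 1)) (p : Fin n → U.M),
    ∀ x, P x ↔ RealizeIn U.mem ψ (Fin.snoc p x) := by
  obtain ⟨φ, σ, h⟩ := h.out
  obtain ⟨n, hn⟩ := Fm.supp.{u} φ
  obtain ⟨ψ, hψ⟩ := Fm.toBF.{u} φ (n + 1) (fun k => match σ k with
    | .inl _ => Fin.last n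
    | .inr _ => if h : k < n then (⟨k, h⟩ : Fin n).castSucc else Fin.last n)
  by_cases hne : Nonempty U.M
  swap
  · exact ⟨0, ⊥, fun i => i.elim0, fun x => (hne ⟨x⟩).elim⟩
  obtain ⟨d⟩ := hne
  refine ⟨n, ψ, fun k => Sum.elim (fun _ => d) id (σ k), fun x => ?_⟩
  rw [hψ, h (fun _ => x)]
  apply hn
  intro k hk
  rcases h : σ k with j | a
  · simp
  · simp only [h, Sum.elim_inr, hk, dite_true, Fin.snoc_castSucc]

lemma Dfn.cond2 {P : U.M → U.M → Prop} (h : Dfn (fun v => P (v 0) (v 1))) : ∃ (n : ℕ)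
    (ψ : memLang.BoundedFormula Empty (n + 2)) (p : Fin n → U.M),
    ∀ x y, P x y ↔ RealizeIn U.mem ψ (Fin.snoc (Fin.snoc p x) y) := by
  obtain ⟨φ, σ, h⟩ := h.out
  obtain ⟨n, hn⟩ := Fm.supp.{u} φ
  obtain ⟨ψ, hψ⟩ := Fm.toBF.{u} φ (n + 2) (fun k => match σ k with
    | .inl 0 => (Fin.last n).castSucc
    | .inl _ => Fin.last (n + 1)
    | .inr _ => if h : k < n then (⟨k, h⟩ : Fin n).castSucc.castSucc else Fin.last (n + 1))
  by_cases hne : Nonempty U.M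
  swap
  · exact ⟨0, ⊥, fun i => i.elim0, fun x => (hne ⟨x⟩).elim⟩
  obtain ⟨d⟩ := hne
  refine ⟨n, ψ, fun k => Sum.elim (fun _ => d) id (σ k), fun x y => ?_⟩
  have := h (cns x (fun _ => y))
  simp only [cns_zero] at this
  rw [hψ]
  refine Iff.trans this ?_
  apply hn
  intro k hk
  rcases h : σ k with (_ | j) | a
  · simp only [Sum.elim_inl, cns_zero, Fin.snoc_castSucc, Fin.snoc_last]
  · simp only [Sum.elim_inl, cns_succ, Fin.snoc_last]
  · simp only [h, Sum.elim_inr, hk, dite_true, Fin.snoc_castSucc]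

/-- Separation for definable predicates. -/
lemma sep (a : U.M) (P : U.M → Prop) [h : Dfn (fun v => P (v 0))] :
    ∃ b, ∀ x, x ε b ↔ (x ε a ∧ P x) := by
  obtain ⟨n, ψ, p, hp⟩ := h.cond1
  obtain ⟨b, hb⟩ := U.zfc.sep n ψ p a
  exact ⟨b, fun x => by rw [hb, hp]⟩

/-- Collection for definable relations. -/
lemma coll (a : U.M) (P : U.M → U.M → Prop) [h : Dfn (fun v => P (v 0) (v 1))] 
    (hP : ∀ x, x ε a → ∃ y, P x y) : ∃ b, ∀ x, x ε a → ∃ y, y ε b ∧ P x y := by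
  obtain ⟨n, ψ, p, hp⟩ := h.cond2
  obtain ⟨b, hb⟩ := U.zfc.coll n ψ p a (fun x hx => by
    obtain ⟨y, hy⟩ := hP x hx; exact ⟨y, (hp x y).1 hy⟩)
  exact ⟨b, fun x hx => by obtain ⟨y, h1, h2⟩ := hb x hx; exact ⟨y, h1, (hp x y).2 h2⟩⟩

/-! ### Basic set constructions as definable functions -/

/-- Definable unary functions. -/
abbrev DF1 (F : U.M → U.M) : Prop := ∀ (f : (ℕ → U.M) → U.M) [DF f], DF (fun v => F (f v))
/-- Definable binary functions. -/
abbrev DF2 (F : U.M → U.M → U.M) : Prop :=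
  ∀ (f g : (ℕ → U.M) → U.M) [DF f] [DF g], DF (fun v => F (f v) (g v))
/-- Definable unary predicates. -/
abbrev DP1 (P : U.M → Prop) : Prop := ∀ (f : (ℕ → U.M) → U.M) [DF f], Dfn (fun v => P (f v))
/-- Definable binary predicates. -/
abbrev DP2 (P : U.M → U.M → Prop) : Prop :=
  ∀ (f g : (ℕ → U.M) → U.M) [DF f] [DF g], Dfn (fun v => P (f v) (g v))

lemma DF1.mk {F : U.M → U.M} (h : DF (fun v => F (v 0))) : DF1 F := fun _ hf => h.comp1 hf
lemma DF2.mk {F : U.M → U.M → U.M} (h : DF (fun v => F (v 0) (v 1))) : DF2 F :=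
  fun _ _ hf hg => h.comp2 hf hg
lemma DP1.mk {F : U.M → Prop} (h : Dfn (fun v => F (v 0))) : DP1 F := fun _ hf => h.comp1 hf
lemma DP2.mk {F : U.M → U.M → Prop} (h : Dfn (fun v => F (v 0) (v 1))) : DP2 F :=
  fun _ _ hf hg => h.comp2 hf hg

instance DF.ite {P : (ℕ → U.M) → Prop} {f g : (ℕ → U.M) → U.M} {inst : ∀ v, Decidable (P v)}
    [hP : Dfn P] [hf : DF f] [hg : DF g] : DF (fun v => @ite _ (P v) (inst v) (f v) (g v)) := by
  refine ⟨?_⟩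
  have h1 : Dfn (fun w : ℕ → U.M => P (fun k => w (k + 1))) := hP.ren _
  have h2 := hf.out
  have h3 := hg.out
  refine (inferInstance : Dfn (fun w => (P (fun k => w (k + 1)) ∧ w 0 = f (fun k => w (k + 1))) ∨
    (¬ P (fun k => w (k + 1)) ∧ w 0 = g (fun k => w (k + 1))))).congr fun v => ?_
  by_cases h : P (fun k => v (k + 1)) <;> simp [h]

lemma exists_elem : ∃ x : U.M, ∀ y, ¬ y ε x := by
  obtain ⟨w, -, ⟨z, -, hz⟩, -⟩ := U.zfc.infinity
  exact ⟨z, hz⟩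

/-- The empty set. -/
noncomputable def emp : U.M := exists_elem.choose
@[simp] lemma mem_emp (x : U.M) : ¬ x ε emp := exists_elem.choose_spec x
lemma eq_emp {a : U.M} (h : ∀ x, ¬ x ε a) : a = emp := ext fun x => by simp [h x]
lemma ne_emp {a : U.M} (h : a ≠ emp) : ∃ x, x ε a := by
  by_contra hc; push Not at hc; exact h (eq_emp hc)

open Classical in
/-- The set `{x | P x}`, or the empty set if this is not a set of the universe. -/
noncomputable def cmp (P : U.M → Prop) : U.M :=
  if h : ∃ b, ∀ x, x ε b ↔ P x then h.choose else emp

lemma mem_cmp' {P : U.M → Prop} (h : ∃ b, ∀ x, x ε b ↔ P x) (x : U.M) : x ε cmp P ↔ P x := by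
  unfold cmp; rw [dif_pos h]; exact h.choose_spec x

lemma mem_cmp {P : U.M → Prop} [Dfn (fun v => P (v 0))] (h : ∃ b, ∀ x, P x → x ε b) (x : U.M) :
    x ε cmp P ↔ P x := by
  obtain ⟨b, hb⟩ := h
  obtain ⟨c, hc⟩ := sep b P
  exact mem_cmp' ⟨c, fun x => by rw [hc]; exact ⟨fun h => h.2, fun h => ⟨hb x h, h⟩⟩⟩ x

instance DF.cmp {P : (ℕ → U.M) → U.M → Prop} [hP : Dfn (fun w => P (fun k => w (k + 1)) (w 0))] :
    DF (fun v => cmp (P v)) := by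
  refine ⟨?_⟩
  have h1 : Dfn (fun w : ℕ → U.M => P (fun k => w (k + 2)) (w 0)) :=
    (hP.ren (fun k => match k with | 0 => 0 | k + 1 => k + 2)).congr fun _ => Iff.rfl
  have h1' : Dfn (fun w : ℕ → U.M => P (fun k => w (k + 3)) (w 0)) :=
    (hP.ren (fun k => match k with | 0 => 0 | k + 1 => k + 3)).congr fun _ => Iff.rfl
  have h2 : Dfn (fun w : ℕ → U.M => ∀ x, x ε w 0 ↔ P (fun k => w (k + 1)) x) :=
    @Dfn.all _ _ (@Dfn.iff _ _ _ _ h1)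
  have h3 : Dfn (fun w : ℕ → U.M => ∃ b, ∀ x, x ε b ↔ P (fun k => w (k + 1)) x) :=
    @Dfn.ex _ _ (@Dfn.all _ _ (@Dfn.iff _ _ _ _ h1'))
  refine (inferInstance : Dfn (fun w : ℕ → U.M => (∀ x, x ε w 0 ↔ P (fun k => w (k + 1)) x) ∨
    (¬ (∃ b, ∀ x, x ε b ↔ P (fun k => w (k + 1)) x) ∧ w 0 = emp))).congr fun v => ?_
  by_cases h : ∃ b, ∀ x, x ε b ↔ P (fun k => v (k + 1)) x
  · simp only [h, not_true_eq_false, false_and, or_false]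
    constructor
    · intro e; rw [e]; exact mem_cmp' h
    · intro e; exact ext fun x => by rw [e, mem_cmp' h]
  · have : SL.cmp (P fun k => v (k + 1)) = emp := by unfold SL.cmp; rw [dif_neg h]
    rw [this]
    constructor
    · intro e; exact Or.inr ⟨h, e⟩
    · rintro (e | e)
      · exact (h ⟨_, e⟩).elim
      · exact e.2

/-- Unordered pairs. -/
noncomputable def pr (a b : U.M) : U.M := cmp (fun x => x = a ∨ x = b)
@[simp] lemma mem_pr {a b x : U.M} : x ε pr a b ↔ x = a ∨ x = b :=
  mem_cmp' (U.zfc.pairing a b) x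
instance {f g : (ℕ → U.M) → U.M} [DF f] [DF g] : DF (fun v => pr (f v) (g v)) :=
  DF.comp2 (F := fun a b => pr a b) (by unfold pr; infer_instance) ‹_› ‹_›

/-- Kuratowski ordered pairs. -/
noncomputable def op (a b : U.M) : U.M := pr (pr a a) (pr a b)
instance {f g : (ℕ → U.M) → U.M} [DF f] [DF g] : DF (fun v => op (f v) (g v)) := by
  unfold op; infer_instance

lemma pr_inj {a b c d : U.M} (h : pr a b = pr c d) : (a = c ∧ b = d) ∨ (a = d ∧ b = c) := by
  have h1 : ∀ x, (x = a ∨ x = b) ↔ (x = c ∨ x = d) := fun x => by rw [← mem_pr, h, mem_pr]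
  have := (h1 a).1 (Or.inl rfl)
  have := (h1 b).1 (Or.inr rfl)
  have := (h1 c).2 (Or.inl rfl)
  have := (h1 d).2 (Or.inr rfl)
  grind

lemma op_inj {a b c d : U.M} : op a b = op c d ↔ a = c ∧ b = d := by
  constructor
  · intro h
    rcases pr_inj h with ⟨h1, h2⟩ | ⟨h1, h2⟩
    · have := pr_inj h1; have := pr_inj h2; grind
    · have := pr_inj h1; have := pr_inj h2; grind
  · rintro ⟨rfl, rfl⟩; rfl

lemma isPairOf {p a b : U.M} : ZF.IsPairOf U.mem p a b ↔ p = pr a b :=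
  ⟨fun h => ext fun x => by rw [h, mem_pr], fun h x => by rw [h, mem_pr]⟩
lemma isOPairOf {p a b : U.M} : ZF.IsOPairOf U.mem p a b ↔ p = op a b := by
  simp only [ZF.IsOPairOf, isPairOf, op]
  exact ⟨fun ⟨s, t, h1, h2, h3⟩ => by subst h1 h2; exact h3, fun h => ⟨_, _, rfl, rfl, h⟩⟩
lemma pairMem {r x y : U.M} : ZF.PairMem U.mem r x y ↔ op x y ε r := by
  simp only [ZF.PairMem, isOPairOf]
  exact ⟨fun ⟨p, h, e⟩ => e ▸ h, fun h => ⟨_, h, rfl⟩⟩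

/-- Unions. -/
noncomputable def un (a : U.M) : U.M := cmp (fun x => ∃ y, y ε a ∧ x ε y)
@[simp] lemma mem_un {a x : U.M} : x ε un a ↔ ∃ y, y ε a ∧ x ε y := mem_cmp' (U.zfc.union a) x
instance {f : (ℕ → U.M) → U.M} [DF f] : DF (fun v => un (f v)) := by
  unfold un; exact DF.comp1 (F := fun a => cmp (fun x => ∃ y, y ε a ∧ x ε y)) inferInstance ‹_›

/-- Binary unions. -/
noncomputable def cup (a b : U.M) : U.M := un (pr a b)
@[simp] lemma mem_cup {a b x : U.M} : x ε cup a b ↔ x ε a ∨ x ε b := by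
  simp [cup]
instance {f g : (ℕ → U.M) → U.M} [DF f] [DF g] : DF (fun v => cup (f v) (g v)) := by
  unfold cup; infer_instance

/-- Successors. -/
noncomputable def suc (a : U.M) : U.M := cup a (pr a a)
@[simp] lemma mem_suc {a x : U.M} : x ε suc a ↔ x ε a ∨ x = a := by simp [suc]
instance {f : (ℕ → U.M) → U.M} [DF f] : DF (fun v => suc (f v)) := by
  unfold suc; infer_instance
lemma isSuccOf {s a : U.M} : ZF.IsSuccOf U.mem s a ↔ s = suc a :=
  ⟨fun h => ext fun x => by rw [h, mem_suc], fun h x => by rw [h, mem_suc]⟩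

instance {f g : (ℕ → U.M) → U.M} [DF f] [DF g] : Dfn (fun v => ZF.Sub U.mem (f v) (g v)) := by
  refine Dfn.comp2 (P := fun a b => ZF.Sub U.mem a b) ?_ ‹_› ‹_›
  unfold ZF.Sub; infer_instance

/-- Power sets. -/
noncomputable def pw (a : U.M) : U.M := cmp (fun x => ZF.Sub U.mem x a)
@[simp] lemma mem_pw {a x : U.M} : x ε pw a ↔ ZF.Sub U.mem x a := mem_cmp' (U.zfc.power a) x
instance {f : (ℕ → U.M) → U.M} [DF f] : DF (fun v => pw (f v)) :=
  DF.comp1 (F := fun a => pw a) (by unfold pw; infer_instance) ‹_›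

/-- The set of all `x ∈ a` with `P x`. -/
noncomputable abbrev sepS (a : U.M) (P : U.M → Prop) : U.M := cmp (fun x => x ε a ∧ P x)
lemma mem_sepS {a : U.M} {P : U.M → Prop} [Dfn (fun v => P (v 0))] {x : U.M} :
    x ε sepS a P ↔ x ε a ∧ P x :=
  mem_cmp ⟨a, fun x h => h.1⟩ x

/-- The image of the set `a` under `F`. -/
noncomputable abbrev img (a : U.M) (F : U.M → U.M) : U.M := cmp (fun y => ∃ x, x ε a ∧ y = F x)
lemma mem_img {a : U.M} {F : U.M → U.M} [h : DF (fun v => F (v 0))] {y : U.M} :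
    y ε img a F ↔ ∃ x, x ε a ∧ y = F x := by
  have : DF1 F := DF1.mk h
  apply mem_cmp
  obtain ⟨b, hb⟩ := coll a (fun x y => y = F x) (fun x _ => ⟨_, rfl⟩)
  refine ⟨b, ?_⟩
  rintro y ⟨x, hx, rfl⟩
  obtain ⟨y, hy, rfl⟩ := hb x hx
  exact hy

/-- The function with domain `a` given by `F`, as a set of ordered pairs. -/
noncomputable abbrev lam (a : U.M) (F : U.M → U.M) : U.M := img a (fun x => op x (F x))
lemma mem_lam {a : U.M} {F : U.M → U.M} [h : DF (fun v => F (v 0))] {p : U.M} :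
    p ε lam a F ↔ ∃ x, x ε a ∧ p = op x (F x) := by
  have : DF1 F := DF1.mk h
  exact mem_img
lemma op_mem_lam {a : U.M} {F : U.M → U.M} [h : DF (fun v => F (v 0))] {x y : U.M} :
    op x y ε lam a F ↔ x ε a ∧ y = F x := by
  rw [mem_lam]; simp only [op_inj]
  exact ⟨fun ⟨z, h1, h2, h3⟩ => by subst h2; exact ⟨h1, h3⟩, fun h => ⟨x, h.1, rfl, h.2⟩⟩

/-- First component of an ordered pair. -/
noncomputable def fst (p : U.M) : U.M := un (cmp (fun a => ∃ b, p = op a b))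
/-- Second component of an ordered pair. -/
noncomputable def snd (p : U.M) : U.M := un (cmp (fun b => ∃ a, p = op a b))
instance {f : (ℕ → U.M) → U.M} [DF f] : DF (fun v => fst (f v)) :=
  DF.comp1 (F := fun a => fst a) (by unfold fst; infer_instance) ‹_›
instance {f : (ℕ → U.M) → U.M} [DF f] : DF (fun v => snd (f v)) :=
  DF.comp1 (F := fun a => snd a) (by unfold snd; infer_instance) ‹_›
lemma un_single (a : U.M) : un (pr a a) = a := ext fun x => by simp
@[simp] lemma fst_op (a b : U.M) : fst (op a b) = a := by
  have : cmp (fun x => ∃ y, op a b = op x y) = pr a a := by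
    apply ext; intro x
    rw [mem_cmp' ⟨pr a a, fun x => ?_⟩] <;> simp only [op_inj, mem_pr] <;> grind
  rw [fst, this, un_single]
@[simp] lemma snd_op (a b : U.M) : snd (op a b) = b := by
  have : cmp (fun y => ∃ x, op a b = op x y) = pr b b := by
    apply ext; intro x
    rw [mem_cmp' ⟨pr b b, fun x => ?_⟩] <;> simp only [op_inj, mem_pr] <;> grind
  rw [snd, this, un_single]

/-- Cartesian products. -/
noncomputable def prd (a b : U.M) : U.M := un (img a (fun x => img b (fun y => op x y)))
lemma mem_prd {a b p : U.M} : p ε prd a b ↔ ∃ x y, x ε a ∧ y ε b ∧ p = op x y := by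
  simp only [prd, mem_un, mem_img]
  constructor
  · rintro ⟨y, ⟨x, hx, rfl⟩, hp⟩
    obtain ⟨y, hy, rfl⟩ := mem_img.1 hp
    exact ⟨x, y, hx, hy, rfl⟩
  · rintro ⟨x, y, hx, hy, rfl⟩
    exact ⟨_, ⟨x, hx, rfl⟩, mem_img.2 ⟨y, hy, rfl⟩⟩
lemma op_mem_prd {a b x y : U.M} : op x y ε prd a b ↔ x ε a ∧ y ε b := by
  rw [mem_prd]; simp only [op_inj]; grind
instance {f g : (ℕ → U.M) → U.M} [DF f] [DF g] : DF (fun v => prd (f v) (g v)) :=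
  DF.comp2 (F := fun a b => prd a b) (by unfold prd; infer_instance) ‹_› ‹_›

/-- The value of the function `f` at `x`. -/
noncomputable def app (f x : U.M) : U.M := cmp (fun z => ∃ y, op x y ε f ∧ z ε y)
instance {f g : (ℕ → U.M) → U.M} [DF f] [DF g] : DF (fun v => app (f v) (g v)) :=
  DF.comp2 (F := fun a b => app a b) (by unfold app; infer_instance) ‹_› ‹_›
lemma app_eq {f x y : U.M} (h : op x y ε f) (hu : ∀ y', op x y' ε f → y' = y) : app f x = y := by
  apply ext; intro z
  have e : ∀ z, z ε y ↔ ∃ y, op x y ε f ∧ z ε y := fun z =>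
    ⟨fun hz => ⟨y, h, hz⟩, fun ⟨y', h1, h2⟩ => hu y' h1 ▸ h2⟩
  rw [app, mem_cmp' ⟨y, e⟩, ← e]
lemma app_lam {a : U.M} {F : U.M → U.M} [h : DF (fun v => F (v 0))] {x : U.M} (hx : x ε a) :
    app (lam a F) x = F x :=
  app_eq (op_mem_lam.2 ⟨hx, rfl⟩) (fun y hy => (op_mem_lam.1 hy).2)

/-- `f` is a function from `a` to `b`. -/
def FunP (f a b : U.M) : Prop :=
  (∀ p, p ε f → ∃ x y, x ε a ∧ y ε b ∧ p = op x y) ∧ (∀ x, x ε a → ∃ y, op x y ε f) ∧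
    (∀ x y y', op x y ε f → op x y' ε f → y = y')
lemma isFunc {f a b : U.M} : ZF.IsFuncFromTo U.mem f a b ↔ FunP f a b := by
  simp only [ZF.IsFuncFromTo, FunP, isOPairOf, pairMem]
instance {f g h : (ℕ → U.M) → U.M} [DF f] [DF g] [DF h] : Dfn (fun v => FunP (f v) (g v) (h v)) :=
  Dfn.comp3 (P := fun a b c => FunP a b c) (by unfold FunP; infer_instance) ‹_› ‹_› ‹_›

lemma FunP.op_iff {f a b x y : U.M} (h : FunP f a b) : op x y ε f ↔ x ε a ∧ app f x = y := by
  constructor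
  · intro hx
    obtain ⟨x', y', h1, h2, h3⟩ := h.1 _ hx
    rw [op_inj] at h3; rw [h3.1]
    refine ⟨h1, ?_⟩
    rw [← h3.1]; exact app_eq hx (fun y' hy' => h.2.2 _ _ _ hy' hx)
  · rintro ⟨hx, rfl⟩
    obtain ⟨y, hy⟩ := h.2.1 x hx
    rwa [app_eq hy (fun y' hy' => h.2.2 _ _ _ hy' hy)]
lemma FunP.app_mem {f a b x : U.M} (h : FunP f a b) (hx : x ε a) : app f x ε b := by
  have := h.op_iff.2 ⟨hx, rfl⟩
  obtain ⟨x', y', h1, h2, h3⟩ := h.1 _ this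
  rw [op_inj] at h3; rwa [h3.2]
lemma FunP.ext {f g a b c : U.M} (hf : FunP f a b) (hg : FunP g a c)
    (h : ∀ x, x ε a → app f x = app g x) : f = g := by
  apply SL.ext; intro p
  constructor
  · intro hp
    obtain ⟨x, y, hx, hy, rfl⟩ := hf.1 p hp
    rw [hf.op_iff] at hp; rw [hg.op_iff, ← h x hx]; exact hp
  · intro hp
    obtain ⟨x, y, hx, hy, rfl⟩ := hg.1 p hp
    rw [hg.op_iff] at hp; rw [hf.op_iff, h x hx]; exact hp
lemma FunP.lam {a b : U.M} {F : U.M → U.M} [hF : DF (fun v => F (v 0))] (h : ∀ x, x ε a → F x ε b) :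
    FunP (lam a F) a b := by
  refine ⟨fun p hp => ?_, fun x hx => ⟨F x, op_mem_lam.2 ⟨hx, rfl⟩⟩, fun x y y' h1 h2 => ?_⟩
  · obtain ⟨x, hx, rfl⟩ := mem_lam.1 hp
    exact ⟨x, _, hx, h x hx, rfl⟩
  · rw [(op_mem_lam.1 h1).2, (op_mem_lam.1 h2).2]

/-- The set of all functions from `a` to `b`. -/
noncomputable def Fn (a b : U.M) : U.M := cmp (fun f => FunP f a b)
lemma mem_Fn {a b f : U.M} : f ε Fn a b ↔ FunP f a b := by
  apply mem_cmp
  refine ⟨pw (prd a b), fun f hf => mem_pw.2 fun p hp => ?_⟩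
  obtain ⟨x, y, h⟩ := hf.1 p hp
  exact mem_prd.2 ⟨x, y, h⟩
instance {f g : (ℕ → U.M) → U.M} [DF f] [DF g] : DF (fun v => Fn (f v) (g v)) :=
  DF.comp2 (F := fun a b => Fn a b) (by unfold Fn; infer_instance) ‹_› ‹_›

/-- `a` is mapped injectively into `b` by a definable function. -/
def CLE (a b : U.M) : Prop := ∃ F : U.M → U.M, DF1 F ∧ (∀ x, x ε a → F x ε b) ∧
  ∀ x y, x ε a → y ε a → F x = F y → x = y

lemma cardLE {a b : U.M} : ZF.CardLE U.mem a b ↔ CLE a b := by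
  simp only [ZF.CardLE, ZF.IsInjFromTo, isFunc, pairMem]
  constructor
  · rintro ⟨f, hf, hi⟩
    refine ⟨fun x => app f x, DF1.mk inferInstance, fun x hx => hf.app_mem hx, fun x y hx hy e => ?_⟩
    exact hi x y _ (hf.op_iff.2 ⟨hx, rfl⟩) (hf.op_iff.2 ⟨hy, e.symm⟩)
  · rintro ⟨F, hF, h1, h2⟩
    refine ⟨lam a F, FunP.lam h1, fun x x' y h3 h4 => ?_⟩
    rw [op_mem_lam] at h3 h4
    exact h2 x x' h3.1 h4.1 (h3.2.symm.trans h4.2)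

lemma CLE.trans {a b c : U.M} (h : CLE a b) (h' : CLE b c) : CLE a c := by
  obtain ⟨F, hF, h1, h2⟩ := h
  obtain ⟨G, hG, h3, h4⟩ := h'
  exact ⟨fun x => G (F x), DF1.mk inferInstance, fun x hx => h3 _ (h1 x hx),
    fun x y hx hy e => h2 x y hx hy (h4 _ _ (h1 x hx) (h1 y hy) e)⟩
lemma CLE.of_sub {a b : U.M} (h : ∀ x, x ε a → x ε b) : CLE a b :=
  ⟨fun x => x, DF1.mk inferInstance, h, fun _ _ _ _ e => e⟩
lemma CLE.app {a b : U.M} (h : CLE a b) : ∃ f, FunP f a b ∧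
    ∀ x y, x ε a → y ε a → SL.app f x = SL.app f y → x = y := by
  obtain ⟨F, hF, h1, h2⟩ := h
  refine ⟨SL.lam a F, FunP.lam h1, fun x y hx hy e => h2 x y hx hy ?_⟩
  rwa [app_lam hx, app_lam hy] at e

/-! ### Ordinals -/

/-- Internal ordinals. -/
abbrev Ord (a : U.M) : Prop := ZF.IsOrdinal U.mem a

instance {f : (ℕ → U.M) → U.M} [DF f] : Dfn (fun v => ZF.IsTransitiveSet U.mem (f v)) :=
  Dfn.comp1 (P := fun a => ZF.IsTransitiveSet U.mem a)
    (by unfold ZF.IsTransitiveSet; infer_instance) ‹_›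
instance {f : (ℕ → U.M) → U.M} [DF f] : Dfn (fun v => ZF.IsOrdinal U.mem (f v)) :=
  Dfn.comp1 (P := fun a => ZF.IsOrdinal U.mem a) (by unfold ZF.IsOrdinal; infer_instance) ‹_›

lemma mem_ind {P : U.M → Prop} (h : ∀ x, (∀ y, y ε x → P y) → P x) (x : U.M) : P x :=
  U.zfc.found.induction x h
lemma mem_irrefl (x : U.M) : ¬ x ε x := U.zfc.found.irrefl.irrefl x
lemma mem_asymm {x y : U.M} (h : x ε y) : ¬ y ε x := fun h' => U.zfc.found.asymmetric _ _ h h'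

lemma Ord.mem {a b : U.M} (ha : Ord a) (hb : b ε a) : Ord b :=
  ⟨ha.2 b hb, fun x hx => ha.2 x (ha.1 b hb x hx)⟩
lemma Ord.trans {a b c : U.M} (hc : Ord c) (h1 : a ε b) (h2 : b ε c) : a ε c := hc.1 b h2 a h1

lemma Ord.tri : ∀ {a b : U.M}, Ord a → Ord b → a ε b ∨ a = b ∨ b ε a := by
  intro a
  induction a using mem_ind with
  | _ a iha =>
  intro b
  induction b using mem_ind with
  | _ b ihb =>
  intro ha hb
  by_cases h1 : ∃ x, x ε a ∧ ¬ x ε b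
  · obtain ⟨x, hx, hxb⟩ := h1
    rcases iha x hx (ha.mem hx) hb with h | h | h
    · exact (hxb h).elim
    · subst h; exact Or.inr (Or.inr hx)
    · exact Or.inr (Or.inr (ha.trans h hx))
  by_cases h2 : ∃ x, x ε b ∧ ¬ x ε a
  · obtain ⟨x, hx, hxb⟩ := h2
    rcases ihb x hx ha (hb.mem hx) with h | h | h
    · exact Or.inl (hb.trans h hx)
    · subst h; exact Or.inl hx
    · exact (hxb h).elim
  push Not at h1 h2
  exact Or.inr (Or.inl (ext fun z => ⟨h1 z, h2 z⟩))

lemma Ord.le_of_not {a b : U.M} (ha : Ord a) (hb : Ord b) (h : ¬ b ε a) : a = b ∨ a ε b := by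
  rcases ha.tri hb with h1 | h1 | h1 <;> tauto
lemma Ord.le_of_sub {a b : U.M} (ha : Ord a) (hb : Ord b) (h : ∀ x, x ε a → x ε b) :
    a = b ∨ a ε b :=
  ha.le_of_not hb fun h' => mem_irrefl b (h b h')
lemma Ord.sub_of_le {a b x : U.M} (hb : Ord b) (h : a = b ∨ a ε b) (hx : x ε a) : x ε b := by
  rcases h with rfl | h
  · exact hx
  · exact hb.trans hx h
/-- Composition of a strict and a weak inequality. -/
lemma Ord.lt_of_lt_le {a b x : U.M} (hb : Ord b) (hx : x ε a) (h : a = b ∨ a ε b) : x ε b :=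
  hb.sub_of_le h hx
lemma Ord.lt_of_le_lt {a b c : U.M} (hc : Ord c) (h : a = b ∨ a ε b) (hx : b ε c) : a ε c := by
  rcases h with rfl | h
  · exact hx
  · exact hc.trans h hx

lemma Ord.emp : Ord (emp : U.M) := ⟨fun x hx => (mem_emp x hx).elim, fun x hx => (mem_emp x hx).elim⟩
lemma Ord.suc {a : U.M} (ha : Ord a) : Ord (suc a) := by
  refine ⟨fun x hx y hy => ?_, fun x hx => ?_⟩
  · rw [mem_suc] at *
    rcases hx with hx | rfl
    · exact Or.inl (ha.trans hy hx)
    · exact Or.inl hy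
  · rw [mem_suc] at hx
    rcases hx with hx | rfl
    · exact ha.2 x hx
    · exact ha.1
lemma Ord.un {a : U.M} (ha : ∀ x, x ε a → Ord x) : Ord (un a) := by
  refine ⟨fun x hx y hy => ?_, fun x hx => ?_⟩
  · rw [mem_un] at *
    obtain ⟨z, hz, hx⟩ := hx
    exact ⟨z, hz, (ha z hz).trans hy hx⟩
  · rw [mem_un] at hx
    obtain ⟨z, hz, hx⟩ := hx
    exact (ha z hz).2 x hx
lemma Ord.le_un {a x : U.M} (ha : ∀ x, x ε a → Ord x) (hx : x ε a) : x = SL.un a ∨ x ε SL.un a :=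
  (ha x hx).le_of_sub (Ord.un ha) fun y hy => mem_un.2 ⟨x, hx, hy⟩
lemma Ord.suc_le {a b : U.M} (hb : Ord b) (h : a ε b) : SL.suc a = b ∨ SL.suc a ε b :=
  (hb.mem h).suc.le_of_sub hb fun x hx => by
    rcases mem_suc.1 hx with h1 | rfl
    · exact hb.trans h1 h
    · exact h
lemma Ord.of_trans {m : U.M} (h : ZF.IsTransitiveSet U.mem m) (h2 : ∀ x, x ε m → Ord x) : Ord m :=
  ⟨h, fun x hx => (h2 x hx).1⟩

lemma exists_least {P : U.M → Prop} (h : ∃ x, P x) : ∃ x, P x ∧ ∀ y, P y → ¬ y ε x := by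
  obtain ⟨m, hm, h2⟩ := U.zfc.found.has_min {x | P x} h
  exact ⟨m, hm, fun y hy => h2 y hy⟩

/-- The least ordinal with property `P`. -/
noncomputable abbrev lst (P : U.M → Prop) : U.M := cmp (fun x => ∀ η, Ord η → P η → x ε η)
lemma lst_spec {P : U.M → Prop} (h : ∃ x, Ord x ∧ P x) :
    Ord (lst P) ∧ P (lst P) ∧ ∀ η, Ord η → P η → lst P = η ∨ lst P ε η := by
  obtain ⟨m, ⟨hm, hp⟩, h2⟩ := exists_least h
  have key : lst P = m := by
    have e : ∀ x, x ε m ↔ ∀ η, Ord η → P η → x ε η := fun x =>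
      ⟨fun hx η hη hP => hη.sub_of_le (hm.le_of_not hη (h2 η ⟨hη, hP⟩)) hx, fun hx => hx m hm hp⟩
    apply ext; intro x
    rw [mem_cmp' ⟨m, e⟩, e]
  rw [key]
  exact ⟨hm, hp, fun η hη hP => hm.le_of_not hη (h2 η ⟨hη, hP⟩)⟩

/-! ### The natural numbers -/

/-- The set of natural numbers of the universe. -/
noncomputable def om : U.M := U.zfc.infinity.choose
lemma om_spec : ZF.IsOmega U.mem (om : U.M) := U.zfc.infinity.choose_spec
/-- The internal numerals. -/
noncomputable def num : ℕ → U.M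
  | 0 => emp
  | n + 1 => suc (num n)
lemma isOmega_mem {w x : U.M} (hw : ZF.IsOmega U.mem w) : x ε w ↔ ∃ n, x = num n := by
  obtain ⟨h1, ⟨z, hz, hz'⟩, h3, h4⟩ := hw
  constructor
  · induction x using mem_ind with
    | _ x ih =>
    intro hx
    rcases h4 x hx with h | ⟨z, h⟩
    · exact ⟨0, eq_emp h⟩
    · have h : ZF.IsSuccOf U.mem x z := h.elim (fun h => h.1) id
      rw [isSuccOf] at h
      subst h
      have hzx : z ε suc z := by simp
      obtain ⟨n, rfl⟩ := ih z hzx (Ord.trans h1 hzx hx)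
      exact ⟨n + 1, rfl⟩
  · rintro ⟨n, rfl⟩
    induction n with
    | zero => rw [eq_emp hz'] at hz; exact hz
    | succ n ih =>
      obtain ⟨s, hs, hs'⟩ := h3 _ ih
      rw [isSuccOf] at hs'; subst hs'; exact hs
lemma mem_om {x : U.M} : x ε om ↔ ∃ n, x = num n := isOmega_mem om_spec
lemma isOmega {w : U.M} : ZF.IsOmega U.mem w ↔ w = om :=
  ⟨fun h => ext fun x => by rw [isOmega_mem h, mem_om], fun h => h ▸ om_spec⟩
lemma Ord.om : Ord (om : U.M) := om_spec.1
@[simp] lemma num_mem_om (n : ℕ) : (num n : U.M) ε om := mem_om.2 ⟨n, rfl⟩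
lemma suc_mem_om {n : U.M} (h : n ε om) : suc n ε om := by
  obtain ⟨k, rfl⟩ := mem_om.1 h
  exact num_mem_om (k + 1)
lemma Ord.num (n : ℕ) : Ord (num n : U.M) := Ord.om.mem (num_mem_om n)
lemma num_lt {m n : ℕ} (h : m < n) : (num m : U.M) ε num n := by
  induction n with
  | zero => omega
  | succ n ih =>
    show num m ε suc (num n)
    rw [mem_suc]
    by_cases e : m = n
    · right; rw [e]
    · left; exact ih (by omega)
lemma num_inj {m n : ℕ} (h : (num m : U.M) = num n) : m = n := by
  rcases lt_trichotomy m n with h1 | h1 | h1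
  · have := num_lt (U := U) h1; rw [h] at this; exact (mem_irrefl _ this).elim
  · exact h1
  · have := num_lt (U := U) h1; rw [h] at this; exact (mem_irrefl _ this).elim
lemma un_suc {a : U.M} (ha : Ord a) : un (suc a) = a := by
  apply ext; intro x
  simp only [mem_un, mem_suc]
  constructor
  · rintro ⟨y, h | rfl, h2⟩
    · exact ha.trans h2 h
    · exact h2
  · intro h; exact ⟨a, Or.inr rfl, h⟩

/-! ### Recursion -/

/-- The part of the function `t` over the domain `a`. -/
noncomputable def rst (t a : U.M) : U.M := sepS t (fun p => ∃ x y, x ε a ∧ p = op x y)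
lemma mem_rst {t a p : U.M} : p ε rst t a ↔ p ε t ∧ ∃ x y, x ε a ∧ p = op x y := mem_sepS
instance {f g : (ℕ → U.M) → U.M} [DF f] [DF g] : DF (fun v => rst (f v) (g v)) :=
  DF.comp2 (F := fun a b => rst a b) (by unfold rst; infer_instance) ‹_› ‹_›

/-- Recursion along a definable set-like relation (`pre x` is the set of predecessors of `x`) which
satisfies induction for definable predicates. -/
theorem recursion (pre : U.M → U.M) (hpre : DF1 pre) (G : U.M → U.M → U.M) (hG : DF2 G)
    (ind : ∀ P : U.M → Prop, DP1 P → (∀ x, (∀ y, y ε pre x → P y) → P x) → ∀ x, P x) :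
    ∃ F : U.M → U.M, DF1 F ∧ ∀ x, F x = G x (lam (pre x) F) := by
  -- `A t` says that `t` is an approximation: a set of pairs, with domain closed under `pre`,
  -- obeying the recursion equation.
  let A : U.M → Prop := fun t => ∀ x y, op x y ε t →
    (∀ z, z ε pre x → ∃ y', op z y' ε t) ∧ y = G x (rst t (pre x))
  have hA : DP1 A := DP1.mk inferInstance
  have irr : ∀ x, ¬ x ε pre x := ind (fun x => ¬ x ε pre x) (DP1.mk inferInstance)
    fun x ih hx => ih x hx hx
  have uniq : ∀ x t t' y y', A t → A t' → op x y ε t → op x y' ε t' → y = y' := by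
    refine ind _ (DP1.mk inferInstance) fun x ih t t' y y' ht ht' h h' => ?_
    rw [(ht x y h).2, (ht' x y' h').2]
    congr 1
    apply ext; intro p
    rw [mem_rst, mem_rst]
    constructor
    · rintro ⟨hp, z, y1, hz, rfl⟩
      refine ⟨?_, z, y1, hz, rfl⟩
      obtain ⟨y2, h2⟩ := (ht' x y' h').1 z hz
      rwa [ih z hz t t' y1 y2 ht ht' hp h2]
    · rintro ⟨hp, z, y1, hz, rfl⟩
      refine ⟨?_, z, y1, hz, rfl⟩
      obtain ⟨y2, h2⟩ := (ht x y h).1 z hz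
      rwa [ih z hz t' t y1 y2 ht' ht hp h2]
  have exi : ∀ x, ∃ t y, A t ∧ op x y ε t := by
    refine ind _ (DP1.mk inferInstance) fun x ih => ?_
    obtain ⟨b, hb⟩ := coll (pre x) (fun z t => ∃ y, A t ∧ op z y ε t)
      (fun z hz => by obtain ⟨t, y, h⟩ := ih z hz; exact ⟨t, y, h⟩)
    obtain ⟨T, hT⟩ : ∃ T : U.M, ∀ p, p ε T ↔ ∃ t, t ε b ∧ A t ∧ p ε t := by
      obtain ⟨b', hb'⟩ := sep b A
      exact ⟨un b', fun p => by rw [mem_un]; simp only [hb', and_assoc]⟩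
    have TA : A T := by
      intro z y h
      obtain ⟨t, htb, ht, hzt⟩ := (hT _).1 h
      refine ⟨fun z' hz' => ?_, ?_⟩
      · obtain ⟨y', h'⟩ := (ht z y hzt).1 z' hz'
        exact ⟨y', (hT _).2 ⟨t, htb, ht, h'⟩⟩
      · rw [(ht z y hzt).2]; congr 1
        apply ext; intro p
        rw [mem_rst, mem_rst]
        constructor
        · rintro ⟨hp, h⟩; exact ⟨(hT _).2 ⟨t, htb, ht, hp⟩, h⟩
        · rintro ⟨hp, z', y', hz', rfl⟩
          refine ⟨?_, z', y', hz', rfl⟩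
          obtain ⟨t', -, ht', hp'⟩ := (hT _).1 hp
          obtain ⟨y2, h2⟩ := (ht z y hzt).1 z' hz'
          rwa [uniq z' t' t y' y2 ht' ht hp' h2]
    have Tdom : ∀ z, z ε pre x → ∃ y, op z y ε T := by
      intro z hz
      obtain ⟨t, htb, y, ht, h⟩ := hb z hz
      exact ⟨y, (hT _).2 ⟨t, htb, ht, h⟩⟩
    let y0 := G x (rst T (pre x))
    have mem' : ∀ p, p ε cup T (pr (op x y0) (op x y0)) ↔ p ε T ∨ p = op x y0 := by
      intro p; simp
    have old : ∀ y, op x y ε T → y = y0 := fun y h => (TA x y h).2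
    have rs : ∀ w, (w = x ∨ ∃ y, op w y ε T) →
        rst (cup T (pr (op x y0) (op x y0))) (pre w) = rst T (pre w) := by
      intro w hw
      apply ext; intro p
      rw [mem_rst, mem_rst, mem']
      constructor
      · rintro ⟨h1 | h1, z, y, hz, rfl⟩
        · exact ⟨h1, z, y, hz, rfl⟩
        · rw [op_inj] at h1
          obtain ⟨rfl, rfl⟩ := h1
          rcases hw with rfl | ⟨y, hy⟩
          · exact (irr _ hz).elim
          · obtain ⟨y', hy'⟩ := (TA w y hy).1 z hz
            rw [old _ hy'] at hy'
            exact ⟨hy', _, _, hz, rfl⟩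
      · rintro ⟨h1, h⟩; exact ⟨Or.inl h1, h⟩
    refine ⟨cup T (pr (op x y0) (op x y0)), y0, ?_, (mem' _).2 (Or.inr rfl)⟩
    intro w y hw
    rcases (mem' _).1 hw with h | h
    · refine ⟨fun z hz => ?_, ?_⟩
      · obtain ⟨y', h'⟩ := (TA w y h).1 z hz
        exact ⟨y', (mem' _).2 (Or.inl h')⟩
      · rw [rs w (Or.inr ⟨y, h⟩)]; exact (TA w y h).2
    · rw [op_inj] at h; obtain ⟨rfl, rfl⟩ := h
      refine ⟨fun z hz => ?_, ?_⟩
      · obtain ⟨y', h'⟩ := Tdom z hz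
        exact ⟨y', (mem' _).2 (Or.inl h')⟩
      · rw [rs w (Or.inl rfl)]
  choose T F hT hF using exi
  have hFd : DF1 F := by
    refine DF1.mk ⟨?_⟩
    refine (inferInstance : Dfn (fun w : ℕ → U.M => ∃ t, A t ∧ op (w 1) (w 0) ε t)).congr fun v => ?_
    constructor
    · intro e; exact ⟨T (v 1), hT _, by rw [e]; exact hF _⟩
    · rintro ⟨t, ht, h⟩; exact uniq _ _ _ _ _ ht (hT _) h (hF _)
  refine ⟨F, hFd, fun x => ?_⟩
  rw [(hT x x (F x) (hF x)).2]
  congr 1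
  apply ext; intro p
  rw [mem_rst, mem_lam]
  constructor
  · rintro ⟨hp, z, y, hz, rfl⟩
    exact ⟨z, hz, by rw [uniq _ _ _ _ _ (hT x) (hT z) hp (hF z)]⟩
  · rintro ⟨z, hz, rfl⟩
    obtain ⟨y, hy⟩ := (hT x x _ (hF x)).1 z hz
    rw [uniq _ _ _ _ _ (hT x) (hT z) hy (hF z)] at hy
    exact ⟨hy, z, _, hz, rfl⟩

/-- Recursion along membership. -/
theorem mem_recursion (G : U.M → U.M → U.M) (hG : DF2 G) :
    ∃ F : U.M → U.M, DF1 F ∧ ∀ x, F x = G x (lam x F) :=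
  recursion (fun x => x) (DF1.mk inferInstance) G hG (fun P _ h x => mem_ind h x)

open Classical in
/-- Recursion on the natural numbers. -/
theorem nat_recursion (a : U.M) (G : U.M → U.M → U.M) (hG : DF2 G) :
    ∃ F : U.M → U.M, DF1 F ∧ F emp = a ∧ ∀ n, n ε om → F (suc n) = G n (F n) := by
  obtain ⟨F, hF, h⟩ := mem_recursion (U := U)
    (fun n f => if n = emp then a else G (un n) (app f (un n))) (DF2.mk inferInstance)
  refine ⟨F, hF, by rw [h]; simp, fun n hn => ?_⟩
  have ho : Ord n := Ord.om.mem hn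
  have hne : suc n ≠ emp := fun e => mem_emp n (by rw [← e]; simp)
  rw [h, if_neg hne, un_suc ho, app_lam (by simp)]

/-- The transitive collapse of a definable set-like relation. -/
theorem collapse (pre : U.M → U.M) (hpre : DF1 pre)
    (ind : ∀ P : U.M → Prop, DP1 P → (∀ x, (∀ y, y ε pre x → P y) → P x) → ∀ x, P x) :
    ∃ F : U.M → U.M, DF1 F ∧ ∀ x z, z ε F x ↔ ∃ y, y ε pre x ∧ z = F y := by
  obtain ⟨F, hF, h⟩ := recursion pre hpre (fun x f => cmp (fun z => ∃ y, op y z ε f))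
    (DF2.mk inferInstance) ind
  refine ⟨F, hF, fun x z => ?_⟩
  rw [h]
  have e : ∀ z, z ε img (pre x) F ↔ ∃ y, op y z ε lam (pre x) F := fun z => by
    rw [mem_img]; simp only [op_mem_lam]
  rw [mem_cmp' ⟨_, e⟩]; simp only [op_mem_lam]

/-! ### Choice and cardinality -/

lemma choice_fn (a : U.M) : ∃ c : U.M → U.M, DF1 c ∧ ∀ x, x ε a → (∃ y, y ε x) → c x ε x := by
  obtain ⟨f, h1, h2⟩ := U.zfc.choice (sepS a (fun x => ∃ y, y ε x)) (fun x hx => (mem_sepS.1 hx).2)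
  simp only [pairMem] at h1 h2
  refine ⟨fun x => app f x, DF1.mk inferInstance, fun x hx hy => ?_⟩
  obtain ⟨y, hy, hy'⟩ := h2 x (mem_sepS.2 ⟨hx, hy⟩)
  show app f x ε x
  rwa [app_eq hy (fun y' h => h1 _ _ _ h hy)]

open Classical in
/-- Every set is mapped injectively into some ordinal. -/
lemma exists_ord_inj (X : U.M) : ∃ α, Ord α ∧ CLE X α := by
  obtain ⟨c, hc, hc'⟩ := choice_fn (pw X)
  obtain ⟨F, hF, h⟩ := mem_recursion (U := U)
    (fun ξ f => c (sepS X (fun x => ¬ ∃ η, op η x ε f))) (DF2.mk inferInstance)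
  have h' : ∀ ξ x, x ε X → (¬ ∃ η, η ε ξ ∧ x = F η) → F ξ ε X ∧ ¬ ∃ η, η ε ξ ∧ F ξ = F η := by
    intro ξ x hx hn
    have := hc' (sepS X (fun x => ¬ ∃ η, op η x ε lam ξ F))
      (mem_pw.2 fun z hz => (mem_sepS.1 hz).1)
      ⟨x, mem_sepS.2 ⟨hx, by simpa only [op_mem_lam] using hn⟩⟩
    rw [← h, mem_sepS] at this
    simpa only [op_mem_lam] using this
  have ex : ∃ ξ, Ord ξ ∧ ∀ x, x ε X → ∃ η, η ε ξ ∧ x = F η := by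
    by_contra hcon
    push Not at hcon
    have key : ∀ ξ, Ord ξ → F ξ ε X ∧ ¬ ∃ η, η ε ξ ∧ F ξ = F η := by
      intro ξ hξ
      obtain ⟨x, hx, hn⟩ := hcon ξ hξ
      exact h' ξ x hx (by push Not; exact hn)
    have inj : ∀ ξ η, Ord ξ → Ord η → F ξ = F η → ξ = η := by
      intro ξ η h1 h2 e
      rcases h1.tri h2 with h3 | h3 | h3
      · exact ((key η h2).2 ⟨ξ, h3, e.symm⟩).elim
      · exact h3
      · exact ((key ξ h1).2 ⟨η, h3, e⟩).elim
    let b := img X (fun x => lst (fun ξ => F ξ = x))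
    have hb : ∀ ξ, Ord ξ → ξ ε b := by
      intro ξ hξ
      refine mem_img.2 ⟨F ξ, (key ξ hξ).1, ?_⟩
      obtain ⟨h1, h2, -⟩ := lst_spec (P := fun η => F η = F ξ) ⟨ξ, hξ, rfl⟩
      exact (inj _ _ h1 hξ h2).symm
    have hO : Ord (sepS b Ord) :=
      Ord.of_trans (fun x hx y hy => mem_sepS.2
        ⟨hb y ((mem_sepS.1 hx).2.mem hy), (mem_sepS.1 hx).2.mem hy⟩) (fun x hx => (mem_sepS.1 hx).2)
    exact mem_irrefl _ (mem_sepS.2 ⟨hb _ hO, hO⟩)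
  obtain ⟨α, hα, hs⟩ := ex
  refine ⟨α, hα, fun x => lst (fun ξ => F ξ = x), DF1.mk inferInstance, fun x hx => ?_,
    fun x y hx hy e => ?_⟩
  · obtain ⟨η, h1, h2⟩ := hs x hx
    obtain ⟨h3, h4, h5⟩ := lst_spec (P := fun η => F η = x) ⟨η, hα.mem h1, h2.symm⟩
    exact hα.lt_of_le_lt (h5 η (hα.mem h1) h2.symm) h1
  · obtain ⟨η, h1, h2⟩ := hs x hx
    obtain ⟨h3, h4, h5⟩ := lst_spec (P := fun η => F η = x) ⟨η, hα.mem h1, h2.symm⟩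
    obtain ⟨η', h1', h2'⟩ := hs y hy
    obtain ⟨h3', h4', h5'⟩ := lst_spec (P := fun η => F η = y) ⟨η', hα.mem h1', h2'.symm⟩
    rw [← h4, ← h4']
    exact congrArg F e

/-- If all initial segments of `X`, stratified by the ordinals `g x`, are too small to contain a copy
of `l`, then `X` itself has size at most `l`. -/
lemma cle_of_segments (X l : U.M) (hl : Ord l) (g : U.M → U.M) (hg : DF1 g)
    (hgo : ∀ x, x ε X → Ord (g x))
    (hs : ∀ x, x ε X → ¬ CLE l (sepS X (fun y => g y = g x ∨ g y ε g x))) : CLE X l := by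
  obtain ⟨α, hα, w, hw, hwα, hwi⟩ := exists_ord_inj X
  let r : U.M → U.M → Prop := fun y x => g y ε g x ∨ (g y = g x ∧ w y ε w x)
  let pre : U.M → U.M := fun x => sepS X (fun y => x ε X ∧ r y x)
  have mpre : ∀ x y, y ε pre x ↔ y ε X ∧ x ε X ∧ r y x := fun x y => mem_sepS
  have hpre : DF1 pre := DF1.mk inferInstance
  have wf : WellFounded r := by
    have := InvImage.wf (fun x => (g x, w x)) (WellFounded.prod_lex U.zfc.found U.zfc.found)
    refine Subrelation.wf ?_ this
    rintro y x (h | ⟨h1, h2⟩)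
    · exact Prod.Lex.left _ _ h
    · show Prod.Lex _ _ (g y, w y) (g x, w x)
      rw [h1]; exact Prod.Lex.right _ h2
  have ind : ∀ P : U.M → Prop, (∀ x, (∀ y, y ε pre x → P y) → P x) → ∀ x, P x := by
    intro P h x
    induction x using wf.induction with
    | _ x ih => exact h x fun y hy => ih y ((mpre x y).1 hy).2.2
  have rtrans : ∀ x y z, x ε X → y ε X → z ε X → r x y → r y z → r x z := by
    intro x y z hx hy hz h1 h2
    rcases h1 with h1 | ⟨h1, h1'⟩ <;> rcases h2 with h2 | ⟨h2, h2'⟩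
    · exact Or.inl ((hgo z hz).trans h1 h2)
    · exact Or.inl (h2 ▸ h1)
    · exact Or.inl (h1 ▸ h2)
    · exact Or.inr ⟨h1.trans h2, (hα.mem (hwα z hz)).trans h1' h2'⟩
  have rtot : ∀ x y, x ε X → y ε X → x ≠ y → r x y ∨ r y x := by
    intro x y hx hy hne
    rcases (hgo x hx).tri (hgo y hy) with h | h | h
    · exact Or.inl (Or.inl h)
    · rcases (hα.mem (hwα x hx)).tri (hα.mem (hwα y hy)) with h' | h' | h'
      · exact Or.inl (Or.inr ⟨h, h'⟩)
      · exact (hne (hwi x y hx hy h')).elim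
      · exact Or.inr (Or.inr ⟨h.symm, h'⟩)
    · exact Or.inr (Or.inl h)
  obtain ⟨F, hF, h⟩ := collapse pre hpre (fun P _ h => ind P h)
  have FO : ∀ x, Ord (F x) := by
    refine ind _ fun x ih => Ord.of_trans (fun z hz t ht => ?_) fun z hz => ?_
    · obtain ⟨y, hy, rfl⟩ := (h x z).1 hz
      obtain ⟨y', hy', rfl⟩ := (h y t).1 ht
      rw [mpre] at hy hy'
      exact (h x _).2 ⟨y', (mpre _ _).2 ⟨hy'.1, hy.2.1, rtrans _ _ _ hy'.1 hy.1 hy.2.1 hy'.2.2 hy.2.2⟩, rfl⟩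
    · obtain ⟨y, hy, rfl⟩ := (h x z).1 hz
      exact ih y hy
  have lt : ∀ x y, x ε X → y ε X → r x y → F x ε F y := fun x y hx hy hr =>
    (h y _).2 ⟨x, (mpre _ _).2 ⟨hx, hy, hr⟩, rfl⟩
  have Fi : ∀ x y, x ε X → y ε X → F x = F y → x = y := by
    intro x y hx hy e
    by_contra hne
    rcases rtot x y hx hy hne with h1 | h1
    · have := lt x y hx hy h1; rw [e] at this; exact mem_irrefl _ this
    · have := lt y x hy hx h1; rw [e] at this; exact mem_irrefl _ this
  refine ⟨F, hF, fun x hx => ?_, Fi⟩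
  by_contra hn
  have sub := hl.le_of_not (FO x) hn
  refine hs x hx ⟨fun ξ => un (sepS X (fun y => F y = ξ)), DF1.mk inferInstance, ?_, ?_⟩
  all_goals
    have key : ∀ ξ, ξ ε l → ∃ y, y ε X ∧ r y x ∧ F y = ξ ∧ un (sepS X (fun y => F y = ξ)) = y := by
      intro ξ hξ
      obtain ⟨y, hy, rfl⟩ := (h x ξ).1 ((FO x).sub_of_le sub hξ)
      rw [mpre] at hy
      refine ⟨y, hy.1, hy.2.2, rfl, ?_⟩
      have : sepS X (fun z => F z = F y) = pr y y := by
        apply ext; intro z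
        rw [mem_sepS, mem_pr]
        exact ⟨fun h => Or.inl (Fi z y h.1 hy.1 h.2), fun h => by
          have : z = y := by tauto
          subst this; exact ⟨hy.1, rfl⟩⟩
      rw [this, un_single]
  · intro ξ hξ
    obtain ⟨y, h1, h2, h3, h4⟩ := key ξ hξ
    show un (sepS X (fun y => F y = ξ)) ε _
    rw [h4, mem_sepS]
    exact ⟨h1, h2.elim Or.inr fun h => Or.inl h.1⟩
  · intro ξ η hξ hη e
    obtain ⟨y, h1, h2, h3, h4⟩ := key ξ hξ
    obtain ⟨y', h1', h2', h3', h4'⟩ := key η hη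
    rw [← h3, ← h3', ← h4, ← h4']; exact congrArg F e

lemma cantor (a : U.M) : ¬ CLE (pw a) a := by
  rintro ⟨F, hF, h1, h2⟩
  let D := sepS a (fun x => ∃ B, B ε pw a ∧ F B = x ∧ ¬ x ε B)
  have hD : D ε pw a := mem_pw.2 fun x hx => (mem_sepS.1 hx).1
  have : ∀ x, x ε D ↔ x ε a ∧ ∃ B, B ε pw a ∧ F B = x ∧ ¬ x ε B := fun x => mem_sepS
  by_cases h : F D ε D
  · obtain ⟨-, B, hB, e, hn⟩ := (this _).1 h
    rw [h2 B D hB hD e] at hn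
    exact hn h
  · exact h ((this _).2 ⟨h1 D hD, D, hD, rfl, h⟩)

lemma isCardinal {k : U.M} : ZF.IsCardinal U.mem k ↔ Ord k ∧ ∀ β, β ε k → ¬ CLE k β := by
  simp only [ZF.IsCardinal, cardLE]

lemma exists_card_succ (k : U.M) (hk : Ord k) : ∃ l, ZF.IsCardSuccOf U.mem l k := by
  obtain ⟨α, hα, hc⟩ := exists_ord_inj (pw k)
  have hn : ¬ CLE α k := fun h => cantor k (hc.trans h)
  obtain ⟨l, ⟨hl, hl1⟩, hl2⟩ := exists_least (P := fun l => Ord l ∧ ¬ CLE l k) ⟨α, hα, hn⟩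
  have hle : ∀ β, β ε l → CLE β k := by
    intro β hβ
    by_contra h
    exact hl2 β ⟨hl.mem hβ, h⟩ hβ
  refine ⟨l, isCardinal.2 ⟨hl, fun β hβ h => hl1 (h.trans (hle β hβ))⟩, ?_, fun μ hμ hk' => ?_⟩
  · rcases hl.tri hk with h | h | h
    · exact (hl1 (CLE.of_sub fun x hx => hk.trans hx h)).elim
    · exact (hl1 (CLE.of_sub fun x hx => h ▸ hx)).elim
    · exact h
  · rw [isCardinal] at hμ
    rcases hl.le_of_not hμ.1 (hl2 μ ⟨hμ.1, hμ.2 k hk'⟩) with h | h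
    · exact Or.inl h.symm
    · exact Or.inr h

lemma card_succ_not_cle {l k : U.M} (h : ZF.IsCardSuccOf U.mem l k) : ¬ CLE l k :=
  (isCardinal.1 h.1).2 k h.2.1

/-- If `2 ^ k ≤ k⁺` then weak measurability of `k` implies measurability. -/
lemma measurable_of_weakly {k : U.M} (h : ZF.IsWeaklyMeasurable U.mem k)
    (hp : ∀ l, ZF.IsCardSuccOf U.mem l k → CLE (pw k) l) : ZF.IsMeasurable U.mem k := by
  obtain ⟨l, hl⟩ := exists_card_succ k h.1.1.1.1
  obtain ⟨F, h1, h2, h3⟩ := h.2 l (pw k) hl (fun A hA => mem_pw.1 hA) (cardLE.2 (hp l hl))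
  exact ⟨h.1, F, h1, h2, fun A hA => h3 A (mem_pw.2 hA)⟩

lemma weakly_of_measurable {k : U.M} (h : ZF.IsMeasurable U.mem k) :
    ZF.IsWeaklyMeasurable U.mem k := by
  obtain ⟨h0, F, h1, h2, h3⟩ := h
  exact ⟨h0, fun l A _ hA _ => ⟨F, h1, h2, fun B hB => h3 B (hA B hB)⟩⟩

lemma measurable_of_gch (hU : U.GCHholds) {k : U.M} (h : ZF.IsWeaklyMeasurable U.mem k) :
    ZF.IsMeasurable U.mem k := by
  refine measurable_of_weakly h fun l hl => ?_
  obtain ⟨w, hw, hwk⟩ := h.1.2.2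
  obtain ⟨f, hf⟩ := hU k (pw k) l h.1.1.1 ⟨w, hw, Or.inl hwk⟩ (fun x => mem_pw) hl
  exact cardLE.1 ⟨f, hf.1⟩

lemma CLE.pw {a b : U.M} (h : CLE a b) : CLE (pw a) (pw b) := by
  obtain ⟨F, hF, h1, h2⟩ := h
  refine ⟨fun B => img B F, DF1.mk inferInstance, fun B hB => ?_, fun B C hB hC e => ?_⟩
  · rw [mem_pw] at *
    intro y hy
    obtain ⟨x, hx, rfl⟩ := mem_img.1 hy
    exact h1 x (hB x hx)
  · rw [mem_pw] at hB hC
    have e : img B F = img C F := e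
    apply ext; intro z
    constructor
    · intro hz
      have := (mem_img (F := F) (a := B)).2 ⟨z, hz, rfl⟩
      rw [e] at this
      obtain ⟨x, hx, e'⟩ := mem_img.1 this
      rwa [h2 z x (hB z hz) (hC x hx) e']
    · intro hz
      have := (mem_img (F := F) (a := C)).2 ⟨z, hz, rfl⟩
      rw [← e] at this
      obtain ⟨x, hx, e'⟩ := mem_img.1 this
      rwa [h2 z x (hC z hz) (hB x hx) e']

/-- An inaccessible cardinal `k` satisfies `k × k ≤ k`. -/
lemma prd_cle {k : U.M} (h : ZF.IsInaccessible U.mem k) : CLE (prd k k) k := by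
  have hk := isCardinal.1 h.1.1
  have sl : ∀ a γ, γ ε k → CLE a γ → ∃ γ', γ' ε k ∧ CLE (pw a) γ' := by
    intro a γ hγ hc
    obtain ⟨γ', h1, h2⟩ := h.2.1.2 γ (pw γ) hγ (fun x => mem_pw)
    exact ⟨γ', h1, hc.pw.trans (cardLE.1 h2)⟩
  have cupO : ∀ p, p ε prd k k → ∃ x y, p = op x y ∧ x ε k ∧ y ε k ∧
      cup (fst p) (snd p) ε k ∧ (x = cup (fst p) (snd p) ∨ x ε cup (fst p) (snd p)) ∧
        (y = cup (fst p) (snd p) ∨ y ε cup (fst p) (snd p)) := by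
    intro p hp
    obtain ⟨x, y, hx, hy, rfl⟩ := mem_prd.1 hp
    refine ⟨x, y, rfl, hx, hy, ?_⟩
    rw [fst_op, snd_op]
    have ox := hk.1.mem hx
    have oy := hk.1.mem hy
    have e1 : ∀ a b : U.M, Ord b → a = b ∨ a ε b → cup a b = b := fun a b hb hab => ext fun z => by
      rw [mem_cup]; exact ⟨fun h => h.elim (hb.sub_of_le hab) id, Or.inr⟩
    have comm : cup x y = cup y x := ext fun z => by rw [mem_cup, mem_cup, or_comm]
    rcases ox.tri oy with h1 | h1 | h1
    · rw [e1 x y oy (Or.inr h1)]; exact ⟨hy, Or.inr h1, Or.inl rfl⟩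
    · rw [e1 x y oy (Or.inl h1)]; exact ⟨hy, Or.inl h1, Or.inl rfl⟩
    · rw [comm, e1 y x ox (Or.inr h1)]; exact ⟨hx, Or.inl rfl, Or.inr h1⟩
  refine cle_of_segments (prd k k) k hk.1 (fun p => cup (fst p) (snd p)) (DF1.mk inferInstance)
    (fun p hp => ?_) (fun p hp hc => ?_)
  · obtain ⟨x, y, -, -, -, h, -⟩ := cupO p hp
    exact hk.1.mem h
  · obtain ⟨-, -, -, -, -, hm, -⟩ := cupO p hp
    have hm' : cup (fst p) (snd p) ε k := hm
    generalize hme : cup (fst p) (snd p) = m at *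
    obtain ⟨γ1, h1, c1⟩ := sl m m hm' (CLE.of_sub fun x hx => hx)
    obtain ⟨γ2, h2, c2⟩ := sl _ _ h1 c1
    obtain ⟨γ3, h3, c3⟩ := sl _ _ h2 c2
    refine hk.2 γ3 h3 ((hc.trans (CLE.of_sub fun q hq => ?_)).trans c3)
    rw [mem_sepS] at hq
    obtain ⟨x, y, rfl, hx, hy, hmm, hx', hy'⟩ := cupO q hq.1
    have om' := hk.1.mem hm'
    have sub : ∀ z, (z = cup (fst (op x y)) (snd (op x y)) ∨ z ε cup (fst (op x y)) (snd (op x y))) →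
        z ε pw m := by
      intro z hz
      refine mem_pw.2 fun t ht => om'.sub_of_le hq.2 ((hk.1.mem hmm).sub_of_le hz ht)
    have sx := sub x hx'
    have sy := sub y hy'
    refine mem_pw.2 fun t ht => mem_pw.2 fun s hs => ?_
    rw [op, mem_pr] at ht
    rcases ht with rfl | rfl
    · rw [mem_pr] at hs; rcases hs with rfl | rfl <;> exact sx
    · rw [mem_pr] at hs; rcases hs with rfl | rfl
      · exact sx
      · exact sy

/-! ### Definability over transitive classes -/

/-- Transitive classes. -/
def Tr (C : U.M → Prop) : Prop := ∀ x y, C y → x ε y → C x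

/-- The predicate `P` is expressed by one parameter-free formula, uniformly in all transitive
classes `C`. -/
class RD (P : (U.M → Prop) → (ℕ → U.M) → Prop) : Prop where
  out : ∃ φ : Fm, ∀ C, Tr C → ∀ v, (∀ k, C (v k)) → (P C v ↔ φ.sat U.mem C v)

/-- Functions of an assignment returning the value of a fixed variable. -/
class RV (f : (ℕ → U.M) → U.M) : Prop where
  out : ∃ k, ∀ v, f v = v k

instance RV.var (k : ℕ) : RV (U := U) (fun v => v k) := ⟨k, fun _ => rfl⟩

lemma cns_cl {C : U.M → Prop} {x : U.M} {v : ℕ → U.M} (hx : C x) (hv : ∀ k, C (v k)) (k : ℕ) :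
    C (cns x v k) := by cases k <;> simp [hx, hv]

lemma RD.congr {P Q : (U.M → Prop) → (ℕ → U.M) → Prop} (h : RD P)
    (e : ∀ C, Tr C → ∀ v, (∀ k, C (v k)) → (Q C v ↔ P C v)) : RD Q := by
  obtain ⟨φ, h⟩ := h.out
  exact ⟨φ, fun C hC v hv => (e C hC v hv).trans (h C hC v hv)⟩

section
variable {P Q : (U.M → Prop) → (ℕ → U.M) → Prop} {R : (U.M → Prop) → (ℕ → U.M) → U.M → Prop}
  {f g h : (ℕ → U.M) → U.M}

instance RD.imp [hP : RD P] [hQ : RD Q] : RD (fun C v => P C v → Q C v) := by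
  obtain ⟨φ, h1⟩ := hP.out
  obtain ⟨ψ, h2⟩ := hQ.out
  refine ⟨.imp φ ψ, fun C hC v hv => ?_⟩
  simp only [Fm.sat, h1 C hC v hv, h2 C hC v hv]

instance RD.false : RD (U := U) (fun _ _ => False) := ⟨.bot, fun C hC v hv => by simp [Fm.sat]⟩

instance RD.true : RD (U := U) (fun _ _ => True) :=
  ⟨.imp .bot .bot, fun C hC v hv => by simp [Fm.sat]⟩

instance (priority := 1100) RD.not [hP : RD P] : RD (fun C v => ¬ P C v) :=
  (inferInstance : RD (fun C v => P C v → False))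

instance RD.and [hP : RD P] [hQ : RD Q] : RD (fun C v => P C v ∧ Q C v) :=
  (inferInstance : RD (fun C v => ¬ (P C v → ¬ Q C v))).congr (fun C _ v _ => by tauto)

instance RD.or [hP : RD P] [hQ : RD Q] : RD (fun C v => P C v ∨ Q C v) :=
  (inferInstance : RD (fun C v => ¬ P C v → Q C v)).congr (fun C _ v _ => by tauto)

instance RD.iff [hP : RD P] [hQ : RD Q] : RD (fun C v => P C v ↔ Q C v) :=
  (inferInstance : RD (fun C v => (P C v → Q C v) ∧ (Q C v → P C v))).congr
    (fun C _ v _ => by tauto)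

instance RD.all [hR : RD (fun C w => R C (fun k => w (k + 1)) (w 0))] :
    RD (fun C v => ∀ x, C x → R C v x) := by
  obtain ⟨φ, h1⟩ := hR.out
  refine ⟨.all φ, fun C hC v hv => ?_⟩
  simp only [Fm.sat]
  refine forall_congr' fun x => forall_congr' fun hx => ?_
  exact h1 C hC (cns x v) (cns_cl hx hv)

instance RD.ex [hR : RD (fun C w => R C (fun k => w (k + 1)) (w 0))] :
    RD (fun C v => ∃ x, C x ∧ R C v x) :=
  (inferInstance : RD (fun C v => ¬ ∀ x, C x → ¬ R C v x)).congr
    (fun C _ v _ => by push Not; rfl)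

instance RD.mem [hf : RV f] [hg : RV g] : RD (fun _ v => f v ε g v) := by
  obtain ⟨i, hi⟩ := hf.out
  obtain ⟨j, hj⟩ := hg.out
  exact ⟨.mem i j, fun C hC v hv => by simp only [Fm.sat, hi, hj]⟩

instance RD.eq [hf : RV f] [hg : RV g] : RD (fun _ v => f v = g v) := by
  obtain ⟨i, hi⟩ := hf.out
  obtain ⟨j, hj⟩ := hg.out
  exact ⟨.eq i j, fun C hC v hv => by simp only [Fm.sat, hi, hj]⟩

lemma RV.tl (hf : RV f) : RV (fun w => f (fun k => w (k + 1))) := by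
  obtain ⟨i, hi⟩ := hf.out
  exact ⟨i + 1, fun w => by rw [hi]⟩

lemma RV.cl (hf : RV f) {C : U.M → Prop} {v : ℕ → U.M} (hv : ∀ k, C (v k)) : C (f v) := by
  obtain ⟨i, hi⟩ := hf.out
  rw [hi]; exact hv i

instance RD.ball [hf : RV f] [hR : RD (fun C w => R C (fun k => w (k + 1)) (w 0))] :
    RD (fun C v => ∀ x, x ε f v → R C v x) := by
  have := hf.tl
  exact (inferInstance : RD (fun C v => ∀ x, C x → x ε f v → R C v x)).congr
    (fun C hC v hv => ⟨fun h x _ hx => h x hx, fun h x hx => h x (hC _ _ (hf.cl hv) hx) hx⟩)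

instance RD.bex [hf : RV f] [hR : RD (fun C w => R C (fun k => w (k + 1)) (w 0))] :
    RD (fun C v => ∃ x, x ε f v ∧ R C v x) :=
  (inferInstance : RD (fun C v => ¬ ∀ x, x ε f v → ¬ R C v x)).congr
    (fun C _ v _ => by push Not; rfl)

instance RD.eq_pr [RV f] [RV g] [RV h] : RD (fun _ v => f v = pr (g v) (h v)) := by
  have := RV.tl (f := g) ‹_›
  have := RV.tl (f := h) ‹_›
  exact (inferInstance : RD (fun _ v => g v ε f v ∧ h v ε f v ∧
    ∀ z, z ε f v → z = g v ∨ z = h v)).congr (fun C _ v _ => by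
      constructor
      · intro e; rw [e]; simp
      · rintro ⟨h1, h2, h3⟩; apply ext; intro z; rw [mem_pr]
        exact ⟨h3 z, by rintro (rfl | rfl) <;> assumption⟩)

instance RD.eq_op [RV f] [RV g] [RV h] : RD (fun _ v => f v = op (g v) (h v)) := by
  have := RV.tl (f := f) ‹_›
  have := RV.tl (f := g) ‹_›
  have := RV.tl (f := h) ‹_›
  have := RV.tl (f := _) this
  have := RV.tl (f := fun v => g (fun k => v (k + 1))) ‹_›
  have := RV.tl (f := fun v => f (fun k => v (k + 1))) ‹_›
  exact (inferInstance : RD (fun _ v => ∃ s, s ε f v ∧ ∃ t, t ε f v ∧ s = pr (g v) (g v) ∧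
    t = pr (g v) (h v) ∧ f v = pr s t)).congr (fun C _ v _ => by
      constructor
      · intro e; rw [e]; exact ⟨_, by simp [op], _, by simp [op], rfl, rfl, rfl⟩
      · rintro ⟨s, h1, t, h2, rfl, rfl, e⟩; exact e)

instance RD.op_mem [RV f] [RV g] [RV h] : RD (fun _ v => op (g v) (h v) ε f v) := by
  have := RV.tl (f := g) ‹_›
  have := RV.tl (f := h) ‹_›
  exact (inferInstance : RD (fun _ v => ∃ p, p ε f v ∧ p = op (g v) (h v))).congr
    (fun C _ v _ => ⟨fun h => ⟨_, h, rfl⟩, by rintro ⟨p, h, rfl⟩; exact h⟩)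

instance RD.sub [RV f] [RV g] : RD (fun _ v => ZF.Sub U.mem (f v) (g v)) := by
  have := RV.tl (f := g) ‹_›
  unfold ZF.Sub; infer_instance

instance RD.ord [RV f] : RD (fun _ v => ZF.IsOrdinal U.mem (f v)) := by
  have := RV.tl (f := f) ‹_›
  unfold ZF.IsOrdinal ZF.IsTransitiveSet; infer_instance

instance RD.funP [RV f] [RV g] [RV h] : RD (fun _ v => FunP (f v) (g v) (h v)) := by
  have a1 := RV.tl (f := f) ‹_›
  have a2 := RV.tl (f := g) ‹_›
  have a3 := RV.tl (f := h) ‹_›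
  have b1 := RV.tl a1
  have b2 := RV.tl a2
  have b3 := RV.tl a3
  have c1 := RV.tl b1
  exact (inferInstance : RD (fun _ v => (∀ p, p ε f v → ∃ x, x ε g v ∧ ∃ y, y ε h v ∧ p = op x y) ∧
    (∀ x, x ε g v → ∃ y, y ε h v ∧ op x y ε f v) ∧
    (∀ x, x ε g v → ∀ y, y ε h v → ∀ y', y' ε h v → op x y ε f v → op x y' ε f v → y = y'))).congr
    (fun C _ v _ => by
      unfold FunP
      constructor
      · rintro ⟨h1, h2, h3⟩
        refine ⟨fun p hp => ?_, fun x hx => ?_, fun x _ y _ y' _ a b => h3 x y y' a b⟩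
        · obtain ⟨x, y, a, b, c⟩ := h1 p hp; exact ⟨x, a, y, b, c⟩
        · obtain ⟨y, hy⟩ := h2 x hx
          obtain ⟨x', y', a, b, c⟩ := h1 _ hy
          rw [op_inj] at c
          exact ⟨y, c.2 ▸ b, hy⟩
      · rintro ⟨h1, h2, h3⟩
        refine ⟨fun p hp => ?_, fun x hx => ?_, fun x y y' a b => ?_⟩
        · obtain ⟨x, a, y, b, c⟩ := h1 p hp; exact ⟨x, y, a, b, c⟩
        · obtain ⟨y, _, hy⟩ := h2 x hx; exact ⟨y, hy⟩
        · obtain ⟨x1, a1, y1, b1, c1⟩ := h1 _ a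
          obtain ⟨x2, a2, y2, b2, c2⟩ := h1 _ b
          rw [op_inj] at c1 c2
          exact h3 x (c1.1 ▸ a1) y (c1.2 ▸ b1) y' (c2.2 ▸ b2) a b)

end

lemma DF.tl {f : (ℕ → U.M) → U.M} (hf : DF f) : DF (fun w => f (fun k => w (k + 1))) :=
  ⟨hf.out1 0 _⟩

/-- Satisfaction of a fixed formula in a definable family of classes is definable. -/
lemma Dfn.sat (φ : Fm) : ∀ (D : (ℕ → U.M) → U.M → Prop) (t : ℕ → (ℕ → U.M) → U.M)
    (_ : Dfn (fun w => D (fun k => w (k + 1)) (w 0))) (_ : ∀ k, DF (t k)),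
    Dfn (fun v => φ.sat U.mem (D v) (fun k => t k v)) := by
  induction φ with
  | bot => intro D t hD ht; exact Dfn.const False
  | mem i j => intro D t hD ht; have := ht i; have := ht j; simp only [Fm.sat]; infer_instance
  | eq i j => intro D t hD ht; have := ht i; have := ht j; simp only [Fm.sat]; infer_instance
  | imp φ ψ h1 h2 =>
    intro D t hD ht
    have := h1 D t hD ht
    have := h2 D t hD ht
    simp only [Fm.sat]; infer_instance
  | all φ h =>
    intro D t hD ht
    have h1 := h (fun w => D (fun k => w (k + 1)))
      (fun k => match k with | 0 => fun w => w 0 | k + 1 => fun w => t k (fun j => w (j + 1)))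
      ((hD.ren (fun k => match k with | 0 => 0 | k + 1 => k + 2)).congr (fun v => Iff.rfl))
      (fun k => by cases k with
        | zero => exact DF.var 0
        | succ k => exact (ht k).tl)
    have h2 : Dfn (fun v : ℕ → U.M => φ.sat U.mem (D (fun k => v (k + 1)))
        (cns (v 0) (fun k => t k (fun j => v (j + 1))))) := by
      refine h1.congr fun v => ?_
      apply iff_of_eq; congr 1; funext k; cases k <;> rfl
    simp only [Fm.sat]; infer_instance

/-! ### The constructible hierarchy, expressed in the language of set theory -/

/-- The assignment `s'` arises from `s` by changing the value at `i` to `a`. -/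
def Upd (w u s' s i a : U.M) : Prop :=
  op i a ε s' ∧ ∀ k, k ε w → ¬ k = i → ∀ b, b ε u → op k b ε s → op k b ε s'

/-- `Q` is a set of functions from `w` to `u` that is closed under changes of single values. -/
def QOK (w u Q : U.M) : Prop :=
  (∀ s, s ε Q → FunP s w u) ∧
  (∀ s, s ε Q → ∀ i, i ε w → ∀ a, a ε u → ∃ s', s' ε Q ∧ Upd w u s' s i a) ∧
  ((∃ a, a ε u ∧ True) → ∃ s, s ε Q ∧ True)

/-- `A` is the truth set (a subset of `Q`) of the formula `x_i ∈ x_j`. -/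
def TMem (u Q i j A : U.M) : Prop :=
  ∀ s, s ε Q → (s ε A ↔ ∃ a, a ε u ∧ ∃ b, b ε u ∧ op i a ε s ∧ op j b ε s ∧ a ε b)
/-- `A` is the truth set of the formula `x_i = x_j`. -/
def TEq (u Q i j A : U.M) : Prop :=
  ∀ s, s ε Q → (s ε A ↔ ∃ a, a ε u ∧ op i a ε s ∧ op j a ε s)
/-- `A` is the truth set of falsity. -/
def TBot (Q A : U.M) : Prop := ∀ s, s ε Q → ¬ s ε A
/-- `A` is the truth set of the implication between formulas with truth sets `B` and `D`. -/
def TImp (Q B D A : U.M) : Prop := ∀ s, s ε Q → (s ε A ↔ (s ε B → s ε D))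
/-- `A` is the truth set of `∀ x_i, φ`, where `B` is the truth set of `φ`. -/
def TAll (w u Q i B A : U.M) : Prop :=
  ∀ s, s ε Q → (s ε A ↔ ∀ a, a ε u → ∀ s', s' ε Q → Upd w u s' s i a → s' ε B)

/-- The truth set `A` is justified at stage `k`: it belongs to an atomic formula, or to a compound
formula whose constituents have truth sets occurring in the sequence `d` before `k`. -/
def Just (w u Q T d k A : U.M) : Prop :=
  TBot Q A ∨ (∃ i, i ε w ∧ ∃ j, j ε w ∧ (TMem u Q i j A ∨ TEq u Q i j A)) ∨
  (∃ k1, k1 ε k ∧ ∃ k2, k2 ε k ∧ ∃ A1, A1 ε T ∧ ∃ A2, A2 ε T ∧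
    op k1 A1 ε d ∧ op k2 A2 ε d ∧ TImp Q A1 A2 A) ∨
  (∃ k1, k1 ε k ∧ ∃ A1, A1 ε T ∧ op k1 A1 ε d ∧ ∃ i, i ε w ∧ TAll w u Q i A1 A)

/-- The set `T` of truth sets is closed under the formation of formulas. -/
def TClosed (w u Q T : U.M) : Prop :=
  (∃ A, A ε T ∧ TBot Q A) ∧
  (∀ i, i ε w → ∀ j, j ε w → ∃ A, A ε T ∧ TMem u Q i j A) ∧
  (∀ i, i ε w → ∀ j, j ε w → ∃ A, A ε T ∧ TEq u Q i j A) ∧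
  (∀ B, B ε T → ∀ D, D ε T → ∃ A, A ε T ∧ TImp Q B D A) ∧
  (∀ i, i ε w → ∀ B, B ε T → ∃ A, A ε T ∧ TAll w u Q i B A)

/-- `w` is the set of natural numbers. -/
def IsOm (w : U.M) : Prop :=
  ZF.IsOrdinal U.mem w ∧ (∃ z, z ε w ∧ ∀ x, x ε z → False) ∧
    (∀ y, y ε w → ∃ s, s ε w ∧ y ε s) ∧
    (∀ y, y ε w → (∀ x, x ε y → False) ∨ ∃ z, z ε y ∧ ∀ x, x ε y → x ε z ∨ x = z)

/-- `T` is the set of truth sets over `(u, ∈)` of all formulas, for assignments in `Q`, and the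
relation `d ⊆ ω × T` witnesses that each of them is built up in finitely many steps. -/
def Good (w u Q T d : U.M) : Prop :=
  IsOm w ∧ QOK w u Q ∧ TClosed w u Q T ∧ (∀ A, A ε T → ∃ k, k ε w ∧ op k A ε d) ∧
  ∀ A, A ε T → ∀ k, k ε w → op k A ε d → Just w u Q T d k A

/-- `x ⊆ u` is the section, at coordinate `i` through `s`, of the truth set `A`. -/
def Sec (w u Q A s i x : U.M) : Prop :=
  ZF.Sub U.mem x u ∧ ∀ a, a ε u → (a ε x ↔ ∃ s', s' ε Q ∧ Upd w u s' s i a ∧ s' ε A)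

/-- `y` is the set of all definable subsets of `(u, ∈)`; the witnesses are taken from the
class `C`. -/
def GG (C : U.M → Prop) (u y : U.M) : Prop :=
  ∃ w, C w ∧ ∃ Q, C Q ∧ ∃ T, C T ∧ ∃ d, C d ∧ Good w u Q T d ∧
    (∀ x, x ε y → (∀ z, z ε x → False) ∨
      ∃ A, A ε T ∧ ∃ s, s ε Q ∧ ∃ i, i ε w ∧ Sec w u Q A s i x) ∧
    (∀ A, A ε T → ∀ s, s ε Q → ∀ i, i ε w → ∃ x, x ε y ∧ Sec w u Q A s i x) ∧
    ∃ x, x ε y ∧ ∀ z, z ε x → False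

/-- `y` is the `g`-th level of the constructible hierarchy; the witnesses are taken from `C`. The
witness `t` is the hierarchy as a function on a transitive set `D ∋ g`. -/
def Th (C : U.M → Prop) (g y : U.M) : Prop :=
  ∃ D, C D ∧ ∃ Y, C Y ∧ ∃ t, C t ∧ g ε D ∧ y ε Y ∧ op g y ε t ∧
    (∀ δ, δ ε D → ∀ e, e ε δ → e ε D) ∧
    (∀ δ, δ ε D → ∃ z, z ε Y ∧ op δ z ε t) ∧
    ∀ δ, δ ε D → ∀ z, z ε Y → op δ z ε t →
      (∀ x, x ε z → ∃ e, e ε δ ∧ ∃ u, u ε Y ∧ op e u ε t ∧ ∃ y', C y' ∧ GG C u y' ∧ x ε y') ∧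
      (∀ e, e ε δ → ∀ u, u ε Y → op e u ε t → ∃ y', C y' ∧ GG C u y' ∧ ∀ x, x ε y' → x ε z)

/-- The class `C` satisfies `V = L`. -/
def SS (C : U.M → Prop) : Prop :=
  (∀ x, C x → ∃ g, C g ∧ ∃ y, C y ∧ Ord g ∧ Th C g y ∧ x ε y) ∧
  (∀ g, C g → Ord g → ∃ y, C y ∧ Th C g y)

lemma RD.ren {P : (U.M → Prop) → (ℕ → U.M) → Prop} (h : RD P) (ρ : ℕ → ℕ) :
    RD (fun C v => P C (fun k => v (ρ k))) := by
  obtain ⟨φ, h⟩ := h.out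
  exact ⟨φ.ren ρ, fun C hC v hv => by rw [Fm.sat_ren]; exact h C hC _ (fun k => hv _)⟩

lemma RD.comp2 {P : (U.M → Prop) → U.M → U.M → Prop} (hP : RD (fun C v => P C (v 0) (v 1)))
    {f g : (ℕ → U.M) → U.M} (hf : RV f) (hg : RV g) : RD (fun C v => P C (f v) (g v)) := by
  obtain ⟨i, hi⟩ := hf.out
  obtain ⟨j, hj⟩ := hg.out
  exact (hP.ren (fun k => match k with | 0 => i | _ => j)).congr
    (fun C _ v _ => by rw [hi, hj]; exact Iff.rfl)

lemma RD.compn {P : (U.M → Prop) → (ℕ → U.M) → Prop} (hP : RD P)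
    (F : ℕ → (ℕ → U.M) → U.M) (hF : ∀ k, RV (F k)) : RD (fun C v => P C (fun k => F k v)) := by
  choose i hi using fun k => (hF k).out
  exact (hP.ren i).congr (fun C _ v _ => by
    rw [show (fun k => F k v) = fun k => v (i k) from funext fun k => hi k v])

instance RD.upd {a b c d e f : (ℕ → U.M) → U.M} [ha : RV a] [hb : RV b] [hc : RV c] [hd : RV d] [he : RV e] [hf : RV f] :
    RD (fun C w => Upd (a w) (b w) (c w) (d w) (e w) (f w)) := by
  refine RD.compn (P := fun C w => Upd (w 0) (w 1) (w 2) (w 3) (w 4) (w 5))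
    (by unfold Upd; infer_instance) (fun k => match k with | 0 => a | 1 => b | 2 => c | 3 => d | 4 => e | _ => f) (fun k => ?_)
  split <;> assumption

instance RD.qok {a b c : (ℕ → U.M) → U.M} [ha : RV a] [hb : RV b] [hc : RV c] :
    RD (fun C w => QOK (a w) (b w) (c w)) := by
  refine RD.compn (P := fun C w => QOK (w 0) (w 1) (w 2))
    (by unfold QOK; infer_instance) (fun k => match k with | 0 => a | 1 => b | _ => c) (fun k => ?_)
  split <;> assumption

instance RD.tmem {a b c d e : (ℕ → U.M) → U.M} [ha : RV a] [hb : RV b] [hc : RV c] [hd : RV d] [he : RV e] :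
    RD (fun C w => TMem (a w) (b w) (c w) (d w) (e w)) := by
  refine RD.compn (P := fun C w => TMem (w 0) (w 1) (w 2) (w 3) (w 4))
    (by unfold TMem; infer_instance) (fun k => match k with | 0 => a | 1 => b | 2 => c | 3 => d | _ => e) (fun k => ?_)
  split <;> assumption

instance RD.teq {a b c d e : (ℕ → U.M) → U.M} [ha : RV a] [hb : RV b] [hc : RV c] [hd : RV d] [he : RV e] :
    RD (fun C w => TEq (a w) (b w) (c w) (d w) (e w)) := by
  refine RD.compn (P := fun C w => TEq (w 0) (w 1) (w 2) (w 3) (w 4))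
    (by unfold TEq; infer_instance) (fun k => match k with | 0 => a | 1 => b | 2 => c | 3 => d | _ => e) (fun k => ?_)
  split <;> assumption

instance RD.tbot {a b : (ℕ → U.M) → U.M} [ha : RV a] [hb : RV b] :
    RD (fun C w => TBot (a w) (b w)) := by
  refine RD.compn (P := fun C w => TBot (w 0) (w 1))
    (by unfold TBot; infer_instance) (fun k => match k with | 0 => a | _ => b) (fun k => ?_)
  split <;> assumption

instance RD.timp {a b c d : (ℕ → U.M) → U.M} [ha : RV a] [hb : RV b] [hc : RV c] [hd : RV d] :
    RD (fun C w => TImp (a w) (b w) (c w) (d w)) := by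
  refine RD.compn (P := fun C w => TImp (w 0) (w 1) (w 2) (w 3))
    (by unfold TImp; infer_instance) (fun k => match k with | 0 => a | 1 => b | 2 => c | _ => d) (fun k => ?_)
  split <;> assumption

instance RD.tall {a b c d e f : (ℕ → U.M) → U.M} [ha : RV a] [hb : RV b] [hc : RV c] [hd : RV d] [he : RV e] [hf : RV f] :
    RD (fun C w => TAll (a w) (b w) (c w) (d w) (e w) (f w)) := by
  refine RD.compn (P := fun C w => TAll (w 0) (w 1) (w 2) (w 3) (w 4) (w 5))
    (by unfold TAll; infer_instance) (fun k => match k with | 0 => a | 1 => b | 2 => c | 3 => d | 4 => e | _ => f) (fun k => ?_)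
  split <;> assumption

instance RD.just {a b c d e f g : (ℕ → U.M) → U.M} [ha : RV a] [hb : RV b] [hc : RV c] [hd : RV d] [he : RV e] [hf : RV f] [hg : RV g] :
    RD (fun C w => Just (a w) (b w) (c w) (d w) (e w) (f w) (g w)) := by
  refine RD.compn (P := fun C w => Just (w 0) (w 1) (w 2) (w 3) (w 4) (w 5) (w 6))
    (by unfold Just; infer_instance) (fun k => match k with | 0 => a | 1 => b | 2 => c | 3 => d | 4 => e | 5 => f | _ => g) (fun k => ?_)
  split <;> assumption

instance RD.tclosed {a b c d : (ℕ → U.M) → U.M} [ha : RV a] [hb : RV b] [hc : RV c] [hd : RV d] :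
    RD (fun C w => TClosed (a w) (b w) (c w) (d w)) := by
  refine RD.compn (P := fun C w => TClosed (w 0) (w 1) (w 2) (w 3))
    (by unfold TClosed; infer_instance) (fun k => match k with | 0 => a | 1 => b | 2 => c | _ => d) (fun k => ?_)
  split <;> assumption

instance RD.isOm {a : (ℕ → U.M) → U.M} [ha : RV a] :
    RD (fun C w => IsOm (a w)) := by
  refine RD.compn (P := fun C w => IsOm (w 0))
    (by unfold IsOm; infer_instance) (fun k => a) (fun k => ?_)
  assumption

instance RD.good {a b c d e : (ℕ → U.M) → U.M} [ha : RV a] [hb : RV b] [hc : RV c] [hd : RV d] [he : RV e] :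
    RD (fun C w => Good (a w) (b w) (c w) (d w) (e w)) := by
  refine RD.compn (P := fun C w => Good (w 0) (w 1) (w 2) (w 3) (w 4))
    (by unfold Good; infer_instance) (fun k => match k with | 0 => a | 1 => b | 2 => c | 3 => d | _ => e) (fun k => ?_)
  split <;> assumption

instance RD.sec {a b c d e f g : (ℕ → U.M) → U.M} [ha : RV a] [hb : RV b] [hc : RV c] [hd : RV d] [he : RV e] [hf : RV f] [hg : RV g] :
    RD (fun C w => Sec (a w) (b w) (c w) (d w) (e w) (f w) (g w)) := by
  refine RD.compn (P := fun C w => Sec (w 0) (w 1) (w 2) (w 3) (w 4) (w 5) (w 6))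
    (by unfold Sec; infer_instance) (fun k => match k with | 0 => a | 1 => b | 2 => c | 3 => d | 4 => e | 5 => f | _ => g) (fun k => ?_)
  split <;> assumption

instance RD.gg {a b : (ℕ → U.M) → U.M} [ha : RV a] [hb : RV b] :
    RD (fun C w => GG C (a w) (b w)) := by
  refine RD.compn (P := fun C w => GG C (w 0) (w 1))
    (by unfold GG; infer_instance) (fun k => match k with | 0 => a | _ => b) (fun k => ?_)
  split <;> assumption

instance RD.th {f g : (ℕ → U.M) → U.M} [hf : RV f] [hg : RV g] :
    RD (fun C v => Th C (f v) (g v)) := by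
  refine RD.comp2 ?_ hf hg
  unfold Th
  infer_instance

lemma RD.ss : RD (U := U) (fun C _ => SS C) := by
  unfold SS; infer_instance

lemma GG.mono {C : U.M → Prop} {u y : U.M} (h : GG C u y) : GG (fun _ => True) u y := by
  obtain ⟨w, _, Q, _, T, _, d, _, h⟩ := h
  exact ⟨w, trivial, Q, trivial, T, trivial, d, trivial, h⟩

lemma Th.mono {C : U.M → Prop} {u y : U.M} (h : Th C u y) : Th (fun _ => True) u y := by
  obtain ⟨D, _, Y, _, t, _, h1, h2, h3, h4, h5, h6⟩ := h
  refine ⟨D, trivial, Y, trivial, t, trivial, h1, h2, h3, h4, h5, fun δ hδ z hz hp => ?_⟩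
  obtain ⟨a, b⟩ := h6 δ hδ z hz hp
  constructor
  · intro x hx
    obtain ⟨e, he, u, hu, hp, y', _, hg, hx⟩ := a x hx
    exact ⟨e, he, u, hu, hp, y', trivial, hg.mono, hx⟩
  · intro e he u hu hp
    obtain ⟨y', _, hg, hx⟩ := b e he u hu hp
    exact ⟨y', trivial, hg.mono, hx⟩

lemma IsOm.eq {w : U.M} (h : IsOm w) : w = om := by
  rw [← isOmega]
  obtain ⟨h1, ⟨z, hz, hz'⟩, h3, h4⟩ := h
  have h1 : Ord w := h1
  have hs : ∀ y, y ε w → suc y ε w := by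
    intro y hy
    obtain ⟨s, hs, hys⟩ := h3 y hy
    exact h1.lt_of_le_lt ((h1.mem hs).suc_le hys) hs
  refine ⟨h1, ⟨z, hz, hz'⟩, fun y hy => ⟨suc y, hs y hy, isSuccOf.2 rfl⟩,
    fun y hy => ?_⟩
  rcases h4 y hy with h | ⟨z, hz, h⟩
  · exact Or.inl h
  · refine Or.inr ⟨z, Or.inr ?_⟩
    intro x
    exact ⟨h x, by rintro (hx | rfl); exacts [(h1.mem hy).trans hx hz, hz]⟩

lemma isOm_om : IsOm (om : U.M) := by
  refine ⟨Ord.om, ⟨emp, num_mem_om 0, fun x hx => (mem_emp x hx).elim⟩,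
    fun y hy => ⟨suc y, suc_mem_om hy, by simp⟩, fun y hy => ?_⟩
  obtain ⟨n, rfl⟩ := mem_om.1 hy
  cases n with
  | zero => exact Or.inl fun x hx => (mem_emp x hx).elim
  | succ n => exact Or.inr ⟨num n, by simp [num], fun x hx => by simpa [num] using hx⟩

/-! ### Levels of the external constructible hierarchy -/

lemma Fm.sat_sub {M : Type u} (E : M → M → Prop) (C : Set M) (φ : Fm) :
    ∀ (v : ℕ → C), φ.sat (fun a b : C => E a.1 b.1) (fun _ => True) v ↔
      φ.sat E (fun x => x ∈ C) (fun k => (v k).1) := by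
  induction φ with
  | bot => intro v; rfl
  | mem i j => intro v; rfl
  | eq i j => intro v; simp only [Fm.sat]; exact Subtype.ext_iff
  | imp φ ψ h1 h2 => intro v; simp only [Fm.sat, h1, h2]
  | all φ h =>
    intro v
    simp only [Fm.sat, h]
    have e : ∀ x : C, (fun k => (cns x v k).1) = cns x.1 (fun k => (v k).1) := by
      intro x; funext k; cases k <;> rfl
    simp only [e]
    exact ⟨fun h x hx => h ⟨x, hx⟩ trivial, fun h x _ => h x.1 x.2⟩

/-- A subset of `S` cut out by a formula (in the sense of `Fm`) is definable over `S`. -/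
lemma definableOver_of_sat {S : Set U.M} {x : U.M} (hx : ∀ z, z ε x → z ∈ S) (φ : Fm) (i : ℕ)
    (v : ℕ → U.M) (hv : ∀ k, v k ∈ S)
    (h : ∀ z, z ∈ S → (z ε x ↔ φ.sat U.mem (fun y => y ∈ S) (Function.update v i z))) :
    DefinableOver U S x := by
  obtain ⟨N, hN⟩ := Fm.supp.{u} φ
  refine ⟨hx, N, ?_⟩
  obtain ⟨ψ, hψ⟩ := Fm.toBF.{u} φ (N + 1) (fun k => if h : k = i then Fin.last N else
    if h : k < N then (⟨k, h⟩ : Fin N).castSucc else Fin.last N)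
  refine ⟨ψ, fun j => ⟨v j, hv j⟩, fun z hz => ?_⟩
  rw [hψ, Fm.sat_sub, h z hz]
  apply hN
  intro k hk
  by_cases hki : k = i
  · subst hki; simp
  · simp only [hki, hk, dite_false, dite_true]
    rw [Function.update_of_ne hki, Fin.snoc_castSucc]

lemma definableOver_self {S : Set U.M} {x : U.M} (hx : ∀ z, z ε x → z ∈ S) (hxS : x ∈ S) :
    DefinableOver U S x :=
  definableOver_of_sat hx (.mem 0 1) 0 (fun _ => x) (fun _ => hxS) (fun z _ => by simp [Fm.sat])

lemma LLevel_eq (o : Ordinal.{u}) :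
    LLevel U o = {x | ∃ o', o' < o ∧ DefinableOver U (LLevel U o') x} := by
  induction o using WellFoundedLT.induction with
  | ind o ih =>
  rcases Ordinal.zero_or_succ_or_isSuccLimit o with rfl | ⟨a, rfl⟩ | ho
  · unfold LLevel
    rw [Ordinal.limitRecOn_zero]
    ext x; simp
  · have e : LLevel U (Order.succ a) = {x | DefinableOver U (LLevel U a) x} := by
      conv_lhs => unfold LLevel
      rw [Order.succ_eq_add_one, Ordinal.limitRecOn_add_one]; rfl
    rw [e]
    ext x
    constructor
    · intro h; exact ⟨a, Order.lt_succ a, h⟩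
    · rintro ⟨o', h1, h2⟩
      rcases (Order.lt_succ_iff.1 h1).eq_or_lt with rfl | h3
      · exact h2
      · have ea := ih a (Order.lt_succ a)
        have hx : x ∈ LLevel U a := by rw [ea]; exact ⟨o', h3, h2⟩
        refine definableOver_self (fun z hz => ?_) hx
        have := h2.1 z hz
        rw [ih o' h1] at this
        rw [ea]
        obtain ⟨b, hb, hb'⟩ := this
        exact ⟨b, hb.trans h3, hb'⟩
  · have e : LLevel U o = {x | ∃ o', ∃ h : o' < o, x ∈ LLevel U o'} := by
      conv_lhs => unfold LLevel
      rw [Ordinal.limitRecOn_limit _ _ _ _ ho]; rfl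
    rw [e]
    ext x
    constructor
    · rintro ⟨o', h1, h2⟩
      rw [ih o' h1] at h2
      obtain ⟨b, hb, hb'⟩ := h2
      exact ⟨b, hb.trans h1, hb'⟩
    · rintro ⟨o', h1, h2⟩
      refine ⟨Order.succ o', ho.succ_lt h1, ?_⟩
      rw [ih _ (ho.succ_lt h1)]
      exact ⟨o', Order.lt_succ o', h2⟩

lemma mem_LLevel_rk {d z : U.M} :
    z ∈ LLevel U (U.rk d) ↔ ∃ e, e ε d ∧ DefinableOver U (LLevel U (U.rk e)) z := by
  constructor
  · intro h
    rw [LLevel_eq] at h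
    obtain ⟨o', h1, h2⟩ := h
    unfold ZFCUniverse.rk at h1
    rw [Acc.rank_eq, Ordinal.lt_iSup_iff] at h1
    obtain ⟨⟨e, he⟩, h1⟩ := h1
    have h1 : o' ≤ U.rk e := Order.lt_succ_iff.1 h1
    refine ⟨e, he, ?_⟩
    rcases h1.eq_or_lt with rfl | h3
    · exact h2
    · have hz : z ∈ LLevel U (U.rk e) := by rw [LLevel_eq]; exact ⟨o', h3, h2⟩
      refine definableOver_self (fun y hy => ?_) hz
      have := h2.1 y hy
      rw [LLevel_eq] at this ⊢
      obtain ⟨b, hb, hb'⟩ := this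
      exact ⟨b, hb.trans h3, hb'⟩
  · rintro ⟨e, he, h⟩
    rw [LLevel_eq]
    exact ⟨_, Acc.rank_lt_of_rel _ he, h⟩

/-! ### The internal definition of definability agrees with the external one -/

/-- The assignment coded by a function `s` on `ω`. -/
noncomputable def val (s : U.M) (n : ℕ) : U.M := app s (num n)

lemma val_mem {s u : U.M} (h : FunP s om u) (n : ℕ) : val s n ε u := h.app_mem (num_mem_om n)

lemma op_num_iff {s u a : U.M} (h : FunP s om u) (n : ℕ) : op (num n) a ε s ↔ val s n = a := by
  rw [h.op_iff]; simp [val]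

lemma upd_iff {u s s' a : U.M} (hs : FunP s om u) (hs' : FunP s' om u) (ha : a ε u) (i : ℕ) :
    Upd om u s' s (num i) a ↔ val s' = Function.update (val s) i a := by
  unfold Upd
  rw [op_num_iff hs']
  constructor
  · rintro ⟨h1, h2⟩
    funext k
    by_cases hk : k = i
    · subst hk; simpa using h1
    · rw [Function.update_of_ne hk]
      exact (op_num_iff hs' k).1 (h2 _ (num_mem_om k) (fun e => hk (num_inj e)) _ (val_mem hs k)
        ((op_num_iff hs k).2 rfl))
  · intro h
    refine ⟨by rw [h]; simp, fun k hk hki b hb hb' => ?_⟩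
    obtain ⟨k, rfl⟩ := mem_om.1 hk
    rw [op_num_iff hs] at hb'
    rw [op_num_iff hs', h, Function.update_of_ne (fun e => hki (by rw [e])), hb']

section
variable {u Q T d : U.M}

lemma tmem_iff {A : U.M} (hQ : QOK om u Q) (i j : ℕ) : TMem u Q (num i) (num j) A ↔
    ∀ s, s ε Q → (s ε A ↔ val s i ε val s j) := by
  unfold TMem
  refine forall_congr' fun s => forall_congr' fun hs => ?_
  have hf := hQ.1 s hs
  simp only [op_num_iff hf]
  refine iff_congr Iff.rfl ⟨?_, fun h => ⟨_, val_mem hf i, _, val_mem hf j, rfl, rfl, h⟩⟩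
  rintro ⟨a, _, b, _, rfl, rfl, h⟩; exact h

lemma teq_iff {A : U.M} (hQ : QOK om u Q) (i j : ℕ) : TEq u Q (num i) (num j) A ↔
    ∀ s, s ε Q → (s ε A ↔ val s i = val s j) := by
  unfold TEq
  refine forall_congr' fun s => forall_congr' fun hs => ?_
  have hf := hQ.1 s hs
  simp only [op_num_iff hf]
  refine iff_congr Iff.rfl ⟨?_, fun h => ⟨_, val_mem hf i, rfl, h.symm⟩⟩
  rintro ⟨a, _, rfl, h⟩; exact h.symm

lemma exists_upd (hQ : QOK om u Q) {s a : U.M} (hs : s ε Q) (i : ℕ) (ha : a ε u) :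
    ∃ s', s' ε Q ∧ val s' = Function.update (val s) i a := by
  obtain ⟨s', h1, h2⟩ := hQ.2.1 s hs _ (num_mem_om i) a ha
  exact ⟨s', h1, (upd_iff (hQ.1 s hs) (hQ.1 s' h1) ha i).1 h2⟩

lemma eq_of_val (hQ : QOK om u Q) {s s' : U.M} (hs : s ε Q) (hs' : s' ε Q) (h : val s = val s') :
    s = s' :=
  (hQ.1 s hs).ext (hQ.1 s' hs') (fun x hx => by
    obtain ⟨n, rfl⟩ := mem_om.1 hx
    exact congrFun h n)

lemma tall_iff {A B : U.M} (hQ : QOK om u Q) (i : ℕ) : TAll om u Q (num i) B A ↔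
    ∀ s, s ε Q → (s ε A ↔ ∀ a, a ε u → ∀ s', s' ε Q →
      val s' = Function.update (val s) i a → s' ε B) := by
  unfold TAll
  refine forall_congr' fun s => forall_congr' fun hs => ?_
  refine iff_congr Iff.rfl (forall_congr' fun a => forall_congr' fun ha =>
    forall_congr' fun s' => forall_congr' fun hs' => ?_)
  rw [upd_iff (hQ.1 s hs) (hQ.1 s' hs') ha i]

/-- Every member of `T` is the truth set of a formula. -/
lemma Good.fm (h : Good om u Q T d) (n : ℕ) : ∀ A, A ε T → op (num n) A ε d →
    ∃ φ : Fm, ∀ s, s ε Q → (s ε A ↔ φ.sat U.mem (fun y => y ε u) (val s)) := by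
  obtain ⟨_, hQ, _, _, hJ⟩ := h
  induction n using Nat.strong_induction_on with
  | _ n ih =>
  intro A hA hd
  rcases hJ A hA _ (num_mem_om n) hd with h | ⟨i, hi, j, hj, h⟩ |
    ⟨k1, hk1, k2, hk2, A1, hA1, A2, hA2, h1, h2, h⟩ | ⟨k1, hk1, A1, hA1, h1, i, hi, h⟩
  · exact ⟨.bot, fun s hs => by simp [Fm.sat, h s hs]⟩
  · obtain ⟨i, rfl⟩ := mem_om.1 hi
    obtain ⟨j, rfl⟩ := mem_om.1 hj
    rcases h with h | h
    · exact ⟨.mem i j, (tmem_iff hQ i j).1 h⟩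
    · exact ⟨.eq i j, (teq_iff hQ i j).1 h⟩
  · have hw : ∀ k, k ε num n → ∃ m < n, k = (num m : U.M) := by
      intro k hk
      obtain ⟨m, rfl⟩ := mem_om.1 (Ord.om.trans hk (num_mem_om n))
      refine ⟨m, ?_, rfl⟩
      by_contra hm
      rcases (not_lt.1 hm).eq_or_lt with rfl | hm
      · exact mem_irrefl _ hk
      · exact mem_asymm hk (num_lt hm)
    obtain ⟨m1, hm1, rfl⟩ := hw k1 hk1
    obtain ⟨m2, hm2, rfl⟩ := hw k2 hk2
    obtain ⟨φ, hφ⟩ := ih m1 hm1 A1 hA1 h1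
    obtain ⟨ψ, hψ⟩ := ih m2 hm2 A2 hA2 h2
    exact ⟨.imp φ ψ, fun s hs => by rw [h s hs, hφ s hs, hψ s hs]; rfl⟩
  · have hw : ∀ k, k ε num n → ∃ m < n, k = (num m : U.M) := by
      intro k hk
      obtain ⟨m, rfl⟩ := mem_om.1 (Ord.om.trans hk (num_mem_om n))
      refine ⟨m, ?_, rfl⟩
      by_contra hm
      rcases (not_lt.1 hm).eq_or_lt with rfl | hm
      · exact mem_irrefl _ hk
      · exact mem_asymm hk (num_lt hm)
    obtain ⟨m1, hm1, rfl⟩ := hw k1 hk1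
    obtain ⟨φ, hφ⟩ := ih m1 hm1 A1 hA1 h1
    obtain ⟨i, rfl⟩ := mem_om.1 hi
    rw [tall_iff hQ] at h
    refine ⟨.all (φ.ren (fun j => if j = i then 0 else j + 1)), fun s hs => ?_⟩
    rw [h s hs]
    simp only [Fm.sat, Fm.sat_ren]
    refine forall_congr' fun a => forall_congr' fun ha => ?_
    have e : (fun k => cns a (val s) (if k = i then 0 else k + 1)) =
        Function.update (val s) i a := by
      funext k
      by_cases hk : k = i
      · subst hk; simp
      · simp [hk]
    rw [e]
    constructor
    · intro h'
      obtain ⟨s', hs', e'⟩ := exists_upd hQ hs i ha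
      rw [← e']
      exact (hφ s' hs').1 (h' s' hs' e')
    · intro h' s' hs' e'
      rw [hφ s' hs', e']
      exact h'

lemma Good.bf (h : Good om u Q T d) {n : ℕ} (ψ : memLang.BoundedFormula Empty n) :
    ∃ A, A ε T ∧ ∀ s, s ε Q → ∀ xs : Fin n → {z | z ε u}, (∀ i, (xs i).1 = val s i) →
      (s ε A ↔ RealizeIn (fun a b : {z | z ε u} => U.mem a.1 b.1) ψ xs) := by
  obtain ⟨_, hQ, ⟨t1, t2, t3, t4, t5⟩, _, hJ⟩ := h
  have tm : ∀ {n : ℕ} (t : memLang.Term (Empty ⊕ Fin n)), ∃ i, t = Term.var (Sum.inr i) := by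
    intro n t
    cases t with
    | var x =>
      cases x with
      | inl e => exact e.elim
      | inr i => exact ⟨i, rfl⟩
    | func f _ => exact f.elim
  induction ψ with
  | falsum =>
    obtain ⟨A, hA, h⟩ := t1
    exact ⟨A, hA, fun s hs xs _ => by simp [h s hs, RealizeIn, BoundedFormula.Realize]⟩
  | equal a b =>
    obtain ⟨i, rfl⟩ := tm a
    obtain ⟨j, rfl⟩ := tm b
    obtain ⟨A, hA, h⟩ := t3 _ (num_mem_om i) _ (num_mem_om j)
    rw [teq_iff hQ] at h
    refine ⟨A, hA, fun s hs xs hx => ?_⟩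
    rw [h s hs, ← hx, ← hx]
    exact Subtype.ext_iff.symm
  | @rel n l R ts =>
    cases R
    obtain ⟨i, hi⟩ := tm (ts 0)
    obtain ⟨j, hj⟩ := tm (ts 1)
    obtain ⟨A, hA, h⟩ := t2 _ (num_mem_om i) _ (num_mem_om j)
    rw [tmem_iff hQ] at h
    refine ⟨A, hA, fun s hs xs hx => ?_⟩
    rw [h s hs, ← hx, ← hx]
    simp only [RealizeIn, BoundedFormula.Realize]
    change _ ↔ U.mem _ _
    beta_reduce
    rw [hi, hj]
    rfl
  | imp φ ψ h1 h2 =>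
    obtain ⟨A1, hA1, h1⟩ := h1
    obtain ⟨A2, hA2, h2⟩ := h2
    obtain ⟨A, hA, h⟩ := t4 _ hA1 _ hA2
    refine ⟨A, hA, fun s hs xs hx => ?_⟩
    rw [h s hs, h1 s hs xs hx, h2 s hs xs hx]
    simp [RealizeIn]
  | @all n φ h1 =>
    obtain ⟨A1, hA1, h1⟩ := h1
    obtain ⟨A, hA, h⟩ := t5 _ (num_mem_om n) _ hA1
    rw [tall_iff hQ] at h
    refine ⟨A, hA, fun s hs xs hx => ?_⟩
    rw [h s hs]
    have e : RealizeIn (fun a b : {z | z ε u} => U.mem a.1 b.1) φ.all xs ↔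
      ∀ x : {z | z ε u}, RealizeIn (fun a b : {z | z ε u} => U.mem a.1 b.1) φ
        (Fin.snoc xs x) := by simp [RealizeIn]
    rw [e]
    have key : ∀ a (ha : a ε u) s', s' ε Q → val s' = Function.update (val s) n a →
        (s' ε A1 ↔ RealizeIn (fun a b : {z | z ε u} => U.mem a.1 b.1) φ
        (Fin.snoc xs ⟨a, ha⟩)) := by
      intro a ha s' hs' e'
      refine h1 s' hs' _ (fun i => ?_)
      rw [e']
      refine Fin.lastCases ?_ (fun i => ?_) i
      · simp
      · simp [hx, Function.update_of_ne (Nat.ne_of_lt i.2)]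
    constructor
    · rintro h' ⟨a, ha⟩
      obtain ⟨s', hs', e'⟩ := exists_upd hQ hs n ha
      exact (key a ha s' hs' e').1 (h' a ha s' hs' e')
    · intro h' a ha s' hs' e'
      exact (key a ha s' hs' e').2 (h' ⟨a, ha⟩)

lemma Good.params (h : Good om u Q T d) (hu : ∃ a, a ε u) (n : ℕ) :
    ∀ p : Fin n → {z | z ε u}, ∃ s, s ε Q ∧ ∀ i, (p i).1 = val s i := by
  obtain ⟨_, hQ, _⟩ := h
  induction n with
  | zero =>
    intro p
    obtain ⟨a, ha⟩ := hu
    obtain ⟨s, hs, _⟩ := hQ.2.2 ⟨a, ha, trivial⟩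
    exact ⟨s, hs, fun i => i.elim0⟩
  | succ n ih =>
    intro p
    obtain ⟨s, hs, h⟩ := ih (fun i => p i.castSucc)
    obtain ⟨s', hs', e⟩ := exists_upd hQ hs n (p (Fin.last n)).2
    refine ⟨s', hs', fun i => ?_⟩
    rw [e]
    refine Fin.lastCases ?_ (fun i => ?_) i
    · simp
    · simp [h, Function.update_of_ne (Nat.ne_of_lt i.2)]

lemma Sec.iff (hQ : QOK om u Q) {A s x : U.M} (hs : s ε Q) (i : ℕ) :
    Sec om u Q A s (num i) x ↔ ZF.Sub U.mem x u ∧ ∀ a, a ε u →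
      (a ε x ↔ ∃ s', s' ε Q ∧ val s' = Function.update (val s) i a ∧ s' ε A) := by
  unfold Sec
  refine and_congr Iff.rfl (forall_congr' fun a => forall_congr' fun ha => iff_congr Iff.rfl
    (exists_congr fun s' => and_congr_right fun hs' => ?_))
  rw [upd_iff (hQ.1 s hs) (hQ.1 s' hs') ha i]

end

/-- The internal set of definable subsets of `u` is correct: it consists of the subsets that are
definable over `u` in the external sense. -/
theorem GG.definable {u y : U.M} (h : GG (fun _ => True) u y) (x : U.M) :
    x ε y ↔ DefinableOver U {z | z ε u} x := by
  obtain ⟨w, _, Q, _, T, _, d, _, hG, h1, h2, x0, h3, h3'⟩ := h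
  obtain rfl := hG.1.eq
  have hQ := hG.2.1
  constructor
  · intro hx
    rcases h1 x hx with h | ⟨A, hA, s, hs, i, hi, h⟩
    · exact ⟨fun z hz => (h z hz).elim, 0, ⊥, Fin.elim0, fun z hz => by
        simp [RealizeIn]; exact h z⟩
    · obtain ⟨i, rfl⟩ := mem_om.1 hi
      rw [Sec.iff hQ hs] at h
      obtain ⟨k, hk, hk'⟩ := hG.2.2.2.1 A hA
      obtain ⟨k, rfl⟩ := mem_om.1 hk
      obtain ⟨φ, hφ⟩ := hG.fm k A hA hk'
      refine definableOver_of_sat h.1 φ i (val s) (fun k => val_mem (hQ.1 s hs) k)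
        (fun z hz => ?_)
      rw [h.2 z hz]
      constructor
      · rintro ⟨s', hs', e, h'⟩
        rw [← e]; exact (hφ s' hs').1 h'
      · intro h'
        obtain ⟨s', hs', e⟩ := exists_upd hQ hs i hz
        exact ⟨s', hs', e, (hφ s' hs').2 (by rw [e]; exact h')⟩
  · rintro ⟨hx, n, ψ, p, h⟩
    by_cases hu : ∃ a, a ε u
    · obtain ⟨s, hs, hp⟩ := hG.params hu n p
      obtain ⟨A, hA, hA'⟩ := hG.bf ψ
      obtain ⟨x', hx', h'⟩ := h2 A hA s hs _ (num_mem_om n)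
      rw [Sec.iff hQ hs] at h'
      have : x = x' := by
        apply ext
        intro z
        have key : z ε u → (z ε x ↔ z ε x') := by
          intro hz
          rw [h z hz, h'.2 z hz]
          have k2 : ∀ s', s' ε Q → val s' = Function.update (val s) n z → (s' ε A ↔
              RealizeIn (fun a b : {z | z ε u} => U.mem a.1 b.1) ψ (Fin.snoc p ⟨z, hz⟩)) := by
            intro s' hs' e
            refine hA' s' hs' _ (fun i => ?_)
            rw [e]
            refine Fin.lastCases ?_ (fun i => ?_) i
            · simp
            · simp [hp, Function.update_of_ne (Nat.ne_of_lt i.2)]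
          constructor
          · intro hr
            obtain ⟨s', hs', e⟩ := exists_upd hQ hs n hz
            exact ⟨s', hs', e, (k2 s' hs' e).2 hr⟩
          · rintro ⟨s', hs', e, ha⟩
            exact (k2 s' hs' e).1 ha
        exact ⟨fun hz => (key (hx z hz)).1 hz, fun hz => (key (h'.1 z hz)).2 hz⟩
      rw [this]; exact hx'
    · have : x = x0 := ext fun z => ⟨fun hz => (hu ⟨z, hx z hz⟩).elim, fun hz => (h3' z hz).elim⟩
      rw [this]; exact h3

/-- The internally defined `g`-th level has the same elements as the external level indexed by the
rank of `g`. -/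
theorem Th.level {g y : U.M} (h : Th (fun _ => True) g y) (x : U.M) :
    x ε y ↔ x ∈ LLevel U (U.rk g) := by
  obtain ⟨D, _, Y, _, t, _, h1, h2, h3, h4, h5, h6⟩ := h
  have key : ∀ δ, δ ε D → ∀ z, z ε Y → op δ z ε t → {x | x ε z} = LLevel U (U.rk δ) := by
    intro δ
    induction δ using mem_ind with
    | _ δ ih =>
    intro hδ z hz hp
    obtain ⟨a, b⟩ := h6 δ hδ z hz hp
    ext x
    rw [mem_LLevel_rk]
    constructor
    · intro hx
      obtain ⟨e, he, u, hu, hp', y', _, hg, hx'⟩ := a x hx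
      refine ⟨e, he, ?_⟩
      rw [← ih e he (h4 δ hδ e he) u hu hp']
      exact (hg.definable x).1 hx'
    · rintro ⟨e, he, hx⟩
      obtain ⟨u, hu, hp'⟩ := h5 e (h4 δ hδ e he)
      obtain ⟨y', _, hg, hx'⟩ := b e he u hu hp'
      rw [← ih e he (h4 δ hδ e he) u hu hp'] at hx
      exact hx' x ((hg.definable x).2 hx)
  exact Set.ext_iff.1 (key g h1 y h2 h3) x

/-! ### Existence of the internal hierarchy, and condensation -/

lemma RD.dfn {P : (U.M → Prop) → (ℕ → U.M) → Prop} (hP : RD P) (F : ℕ → (ℕ → U.M) → U.M)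
    (hF : ∀ k, DF (F k)) : Dfn (fun v => P (fun _ => True) (fun k => F k v)) := by
  obtain ⟨φ, h⟩ := hP.out
  exact (Dfn.sat φ (fun _ _ => True) F (Dfn.const True) hF).congr
    (fun v => h _ (fun _ _ _ _ => trivial) _ (fun _ => trivial))

section
variable {a b c d e f g : (ℕ → U.M) → U.M} [DF a] [DF b] [DF c] [DF d] [DF e] [DF f] [DF g]

instance : Dfn (fun v => TBot (a v) (b v)) := by
  refine RD.dfn (P := fun _ v => TBot (v 0) (v 1)) inferInstance
    (fun k => match k with | 0 => a | _ => b) (fun k => ?_)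
  split <;> assumption

instance : Dfn (fun v => TImp (a v) (b v) (c v) (d v)) := by
  refine RD.dfn (P := fun _ v => TImp (v 0) (v 1) (v 2) (v 3)) inferInstance
    (fun k => match k with | 0 => a | 1 => b | 2 => c | _ => d) (fun k => ?_)
  split <;> assumption

instance : Dfn (fun v => TMem (a v) (b v) (c v) (d v) (e v)) := by
  refine RD.dfn (P := fun _ v => TMem (v 0) (v 1) (v 2) (v 3) (v 4)) inferInstance
    (fun k => match k with | 0 => a | 1 => b | 2 => c | 3 => d | _ => e) (fun k => ?_)
  split <;> assumption

instance : Dfn (fun v => TEq (a v) (b v) (c v) (d v) (e v)) := by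
  refine RD.dfn (P := fun _ v => TEq (v 0) (v 1) (v 2) (v 3) (v 4)) inferInstance
    (fun k => match k with | 0 => a | 1 => b | 2 => c | 3 => d | _ => e) (fun k => ?_)
  split <;> assumption

instance : Dfn (fun v => Upd (a v) (b v) (c v) (d v) (e v) (f v)) := by
  refine RD.dfn (P := fun _ v => Upd (v 0) (v 1) (v 2) (v 3) (v 4) (v 5)) inferInstance
    (fun k => match k with | 0 => a | 1 => b | 2 => c | 3 => d | 4 => e | _ => f) (fun k => ?_)
  split <;> assumption

instance : Dfn (fun v => TAll (a v) (b v) (c v) (d v) (e v) (f v)) := by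
  refine RD.dfn (P := fun _ v => TAll (v 0) (v 1) (v 2) (v 3) (v 4) (v 5)) inferInstance
    (fun k => match k with | 0 => a | 1 => b | 2 => c | 3 => d | 4 => e | _ => f) (fun k => ?_)
  split <;> assumption

instance : Dfn (fun v => Sec (a v) (b v) (c v) (d v) (e v) (f v) (g v)) := by
  refine RD.dfn (P := fun _ v => Sec (v 0) (v 1) (v 2) (v 3) (v 4) (v 5) (v 6)) inferInstance
    (fun k => match k with | 0 => a | 1 => b | 2 => c | 3 => d | 4 => e | 5 => f | _ => g)
    (fun k => ?_)
  split <;> assumption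

instance : Dfn (fun v => GG (fun _ => True) (a v) (b v)) := by
  refine RD.dfn (P := fun C v => GG C (v 0) (v 1)) inferInstance
    (fun k => match k with | 0 => a | _ => b) (fun k => ?_)
  split <;> assumption

end

lemma qok_Fn (u : U.M) : QOK om u (Fn om u) := by
  classical
  refine ⟨fun s hs => mem_Fn.1 hs, fun s hs i hi a ha => ?_, ?_⟩
  · have hs := mem_Fn.1 hs
    have hL : FunP (lam om (fun k => if k = i then a else app s k)) om u := by
      refine FunP.lam fun k hk => ?_
      split_ifs
      exacts [ha, hs.app_mem hk]
    refine ⟨_, mem_Fn.2 hL, ?_, ?_⟩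
    · rw [op_mem_lam]; exact ⟨hi, by simp⟩
    · intro k hk hki b hb hb'
      rw [op_mem_lam]
      refine ⟨hk, ?_⟩
      rw [if_neg hki]
      exact ((hs.op_iff).1 hb').2.symm
  · rintro ⟨a, ha, _⟩
    exact ⟨_, mem_Fn.2 (FunP.lam (F := fun _ => a) fun k hk => ha), trivial⟩

lemma exists_good (u : U.M) : ∃ Q T d : U.M, Good om u Q T d := by
  classical
  have hQ := qok_Fn u
  generalize Fn om u = Q at hQ
  obtain ⟨F, hF, e⟩ := mem_recursion (U := U) (fun k t => sepS (pw Q) (fun A => TBot Q A ∨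
    (∃ i, i ε om ∧ ∃ j, j ε om ∧ (TMem u Q i j A ∨ TEq u Q i j A)) ∨
    (∃ k1, k1 ε k ∧ ∃ k2, k2 ε k ∧ ∃ A1, A1 ε app t k1 ∧ ∃ A2, A2 ε app t k2 ∧ TImp Q A1 A2 A) ∨
    (∃ k1, k1 ε k ∧ ∃ A1, A1 ε app t k1 ∧ ∃ i, i ε om ∧ TAll om u Q i A1 A)))
    (DF2.mk inferInstance)
  have hF0 : DF (fun v : ℕ → U.M => F (v 0)) := hF _
  have mF : ∀ k A, A ε F k ↔ ZF.Sub U.mem A Q ∧ (TBot Q A ∨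
    (∃ i, i ε om ∧ ∃ j, j ε om ∧ (TMem u Q i j A ∨ TEq u Q i j A)) ∨
    (∃ k1, k1 ε k ∧ ∃ k2, k2 ε k ∧ ∃ A1, A1 ε F k1 ∧ ∃ A2, A2 ε F k2 ∧ TImp Q A1 A2 A) ∨
    (∃ k1, k1 ε k ∧ ∃ A1, A1 ε F k1 ∧ ∃ i, i ε om ∧ TAll om u Q i A1 A)) := by
    intro k A
    rw [e k, mem_sepS, mem_pw]
    refine and_congr Iff.rfl (or_congr Iff.rfl (or_congr Iff.rfl (or_congr ?_ ?_)))
    · refine exists_congr fun k1 => and_congr_right fun h1 => exists_congr fun k2 =>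
        and_congr_right fun h2 => ?_
      rw [app_lam h1, app_lam h2]
    · refine exists_congr fun k1 => and_congr_right fun h1 => ?_
      rw [app_lam h1]
  have mT : ∀ A, A ε un (img om F) ↔ ∃ n : ℕ, A ε F (num n) := by
    intro A
    simp only [mem_un, mem_img]
    constructor
    · rintro ⟨y, ⟨k, hk, rfl⟩, h⟩
      obtain ⟨n, rfl⟩ := mem_om.1 hk
      exact ⟨n, h⟩
    · rintro ⟨n, h⟩
      exact ⟨_, ⟨_, num_mem_om n, rfl⟩, h⟩
  have md : ∀ p, p ε cmp (fun p => ∃ k, k ε om ∧ ∃ A, A ε F k ∧ p = op k A) ↔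
      ∃ k, k ε om ∧ ∃ A, A ε F k ∧ p = op k A := by
    intro p
    refine mem_cmp ⟨prd om (un (img om F)), ?_⟩ p
    rintro p ⟨k, hk, A, hA, rfl⟩
    rw [op_mem_prd]
    obtain ⟨n, rfl⟩ := mem_om.1 hk
    exact ⟨hk, (mT A).2 ⟨n, hA⟩⟩
  have md' : ∀ k A, op k A ε cmp (fun p => ∃ k, k ε om ∧ ∃ A, A ε F k ∧ p = op k A) ↔
      k ε om ∧ A ε F k := by
    intro k A
    rw [md]
    constructor
    · rintro ⟨k', hk, A', hA, e⟩
      obtain ⟨rfl, rfl⟩ := op_inj.1 e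
      exact ⟨hk, hA⟩
    · rintro ⟨hk, hA⟩; exact ⟨k, hk, A, hA, rfl⟩
  have hsub : ∀ P : U.M → Prop, ∀ s, (s ε Q ∧ P s) → s ε Q := fun P s h => h.1
  refine ⟨Q, un (img om F), cmp (fun p => ∃ k, k ε om ∧ ∃ A, A ε F k ∧ p = op k A), isOm_om, hQ,
    ⟨?_, ?_, ?_, ?_, ?_⟩, ?_, ?_⟩
  · refine ⟨emp, (mT _).2 ⟨0, (mF _ _).2 ⟨fun z hz => (mem_emp z hz).elim, Or.inl ?_⟩⟩, ?_⟩ <;>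
    exact fun s _ => mem_emp s
  · intro i hi j hj
    have h : TMem u Q i j (sepS Q (fun s => ∃ a, a ε u ∧ ∃ b, b ε u ∧ op i a ε s ∧ op j b ε s ∧
      a ε b)) := fun s hs => by rw [mem_sepS]; simp [hs]
    exact ⟨_, (mT _).2 ⟨0, (mF _ _).2 ⟨fun z hz => (mem_sepS.1 hz).1,
      Or.inr (Or.inl ⟨i, hi, j, hj, Or.inl h⟩)⟩⟩, h⟩
  · intro i hi j hj
    have h : TEq u Q i j (sepS Q (fun s => ∃ a, a ε u ∧ op i a ε s ∧ op j a ε s)) :=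
      fun s hs => by rw [mem_sepS]; simp [hs]
    exact ⟨_, (mT _).2 ⟨0, (mF _ _).2 ⟨fun z hz => (mem_sepS.1 hz).1,
      Or.inr (Or.inl ⟨i, hi, j, hj, Or.inr h⟩)⟩⟩, h⟩
  · intro B hB D hD
    obtain ⟨n, hB⟩ := (mT B).1 hB
    obtain ⟨m, hD⟩ := (mT D).1 hD
    have h : TImp Q B D (sepS Q (fun s => s ε B → s ε D)) :=
      fun s hs => by rw [mem_sepS]; simp [hs]
    exact ⟨_, (mT _).2 ⟨max n m + 1, (mF _ _).2 ⟨fun z hz => (mem_sepS.1 hz).1,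
      Or.inr (Or.inr (Or.inl ⟨_, num_lt (by omega), _, num_lt (by omega), B, hB, D, hD, h⟩))⟩⟩, h⟩
  · intro i hi B hB
    obtain ⟨n, hB⟩ := (mT B).1 hB
    have h : TAll om u Q i B (sepS Q (fun s => ∀ a, a ε u → ∀ s', s' ε Q → Upd om u s' s i a →
      s' ε B)) := fun s hs => by rw [mem_sepS]; simp [hs]
    exact ⟨_, (mT _).2 ⟨n + 1, (mF _ _).2 ⟨fun z hz => (mem_sepS.1 hz).1,
      Or.inr (Or.inr (Or.inr ⟨_, num_lt (by omega), B, hB, i, hi, h⟩))⟩⟩, h⟩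
  · intro A hA
    obtain ⟨n, hA⟩ := (mT A).1 hA
    exact ⟨_, num_mem_om n, (md' _ _).2 ⟨num_mem_om n, hA⟩⟩
  · intro A hA k hk hd
    have hd := ((md' _ _).1 hd).2
    rcases ((mF _ _).1 hd).2 with h | h | ⟨k1, hk1, k2, hk2, A1, hA1, A2, hA2, h⟩ |
      ⟨k1, hk1, A1, hA1, i, hi, h⟩
    · exact Or.inl h
    · exact Or.inr (Or.inl h)
    · have o1 := Ord.om.trans hk1 hk
      have o2 := Ord.om.trans hk2 hk
      obtain ⟨n1, rfl⟩ := mem_om.1 o1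
      obtain ⟨n2, rfl⟩ := mem_om.1 o2
      exact Or.inr (Or.inr (Or.inl ⟨_, hk1, _, hk2, A1, (mT _).2 ⟨_, hA1⟩, A2, (mT _).2 ⟨_, hA2⟩,
        (md' _ _).2 ⟨o1, hA1⟩, (md' _ _).2 ⟨o2, hA2⟩, h⟩))
    · have o1 := Ord.om.trans hk1 hk
      obtain ⟨n1, rfl⟩ := mem_om.1 o1
      exact Or.inr (Or.inr (Or.inr ⟨_, hk1, A1, (mT _).2 ⟨_, hA1⟩, (md' _ _).2 ⟨o1, hA1⟩, i, hi, h⟩))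

lemma exists_GG (u : U.M) : ∃ y, GG (fun _ => True) u y := by
  obtain ⟨Q, T, d, h⟩ := exists_good u
  have my : ∀ x, x ε cmp (fun x => (∀ z, z ε x → False) ∨
      ∃ A, A ε T ∧ ∃ s, s ε Q ∧ ∃ i, i ε om ∧ Sec om u Q A s i x) ↔ (∀ z, z ε x → False) ∨
      ∃ A, A ε T ∧ ∃ s, s ε Q ∧ ∃ i, i ε om ∧ Sec om u Q A s i x := by
    intro x
    refine mem_cmp ⟨pw u, ?_⟩ x
    rintro x (h | ⟨A, _, s, _, i, _, h⟩)
    · exact mem_pw.2 fun z hz => (h z hz).elim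
    · exact mem_pw.2 h.1
  refine ⟨_, om, trivial, Q, trivial, T, trivial, d, trivial, h, fun x hx => (my x).1 hx,
    fun A hA s hs i hi => ?_, emp, (my _).2 (Or.inl fun z hz => mem_emp z hz),
    fun z hz => mem_emp z hz⟩
  have hS : Sec om u Q A s i (sepS u (fun a => ∃ s', s' ε Q ∧ Upd om u s' s i a ∧ s' ε A)) :=
    ⟨fun z hz => (mem_sepS.1 hz).1, fun a ha => by rw [mem_sepS]; simp [ha]⟩
  exact ⟨_, (my _).2 (Or.inr ⟨A, hA, s, hs, i, hi, hS⟩), hS⟩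

/-- The set of definable subsets of `u`. -/
noncomputable def Dset (u : U.M) : U.M := cmp (fun x => ∃ y, GG (fun _ => True) u y ∧ x ε y)

lemma GG.eq_Dset {u y : U.M} (h : GG (fun _ => True) u y) : y = Dset u := by
  apply ext
  intro x
  rw [Dset, mem_cmp' ⟨y, fun x => ?_⟩]
  · exact ⟨fun hx => ⟨y, h, hx⟩, fun ⟨y', h', hx⟩ => (h.definable x).2 ((h'.definable x).1 hx)⟩
  · exact ⟨fun hx => ⟨y, h, hx⟩, fun ⟨y', h', hx⟩ => (h.definable x).2 ((h'.definable x).1 hx)⟩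

lemma GG_Dset (u : U.M) : GG (fun _ => True) u (Dset u) := by
  obtain ⟨y, hy⟩ := exists_GG u
  rw [← hy.eq_Dset]; exact hy

instance {f : (ℕ → U.M) → U.M} [DF f] : DF (fun v => Dset (f v)) :=
  DF.comp1 (F := Dset) (by unfold Dset; infer_instance) ‹_›

lemma LL_exists : ∃ F : U.M → U.M, DF1 F ∧ ∀ x z, z ε F x ↔ ∃ e, e ε x ∧ z ε Dset (F e) := by
  obtain ⟨F, hF, e⟩ := mem_recursion (U := U)
    (fun x t => un (img x (fun e => Dset (app t e)))) (DF2.mk inferInstance)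
  have hF0 : DF (fun v : ℕ → U.M => F (v 0)) := hF _
  refine ⟨F, hF, fun x z => ?_⟩
  rw [e x]
  simp only [mem_un, mem_img]
  constructor
  · rintro ⟨y, ⟨a, ha, rfl⟩, h⟩
    rw [app_lam ha] at h
    exact ⟨a, ha, h⟩
  · rintro ⟨a, ha, h⟩
    exact ⟨_, ⟨a, ha, rfl⟩, by rwa [app_lam ha]⟩

/-- The internal constructible hierarchy. -/
noncomputable def LL : U.M → U.M := LL_exists.choose
lemma LL_df : DF1 (LL : U.M → U.M) := LL_exists.choose_spec.1
instance {f : (ℕ → U.M) → U.M} [DF f] : DF (fun v => LL (f v)) := LL_df f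
lemma mem_LL {x z : U.M} : z ε LL x ↔ ∃ e, e ε x ∧ z ε Dset (LL e) := LL_exists.choose_spec.2 x z

lemma Th_LL {g : U.M} (hg : Ord g) : Th (fun _ => True) g (LL g) := by
  refine ⟨suc g, trivial, img (suc g) LL, trivial, lam (suc g) LL, trivial, by simp,
    mem_img.2 ⟨g, by simp, rfl⟩, op_mem_lam.2 ⟨by simp, rfl⟩, fun δ hδ e he => hg.suc.trans he hδ,
    fun δ hδ => ⟨_, mem_img.2 ⟨δ, hδ, rfl⟩, op_mem_lam.2 ⟨hδ, rfl⟩⟩, ?_⟩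
  intro δ hδ z hz hp
  obtain rfl := (op_mem_lam.1 hp).2
  constructor
  · intro x hx
    obtain ⟨e, he, hx⟩ := mem_LL.1 hx
    have he' := hg.suc.trans he hδ
    exact ⟨e, he, _, mem_img.2 ⟨e, he', rfl⟩, op_mem_lam.2 ⟨he', rfl⟩, _, trivial, GG_Dset _, hx⟩
  · intro e he u hu hp
    obtain rfl := (op_mem_lam.1 hp).2
    exact ⟨_, trivial, GG_Dset _, fun x hx => mem_LL.2 ⟨e, he, hx⟩⟩

lemma Th.eq_LL {C : U.M → Prop} {g y : U.M} (hg : Ord g) (h : Th C g y) : y = LL g :=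
  ext fun x => by rw [h.mono.level, (Th_LL hg).level]

lemma LL_mono {a b x : U.M} (hb : Ord b) (hab : a ε b) (hx : x ε LL a) : x ε LL b := by
  obtain ⟨e, he, hx⟩ := mem_LL.1 hx
  exact mem_LL.2 ⟨e, hb.trans he hab, hx⟩

lemma LL_trans {g x z : U.M} (hg : Ord g) (hx : x ε LL g) (hz : z ε x) : z ε LL g := by
  obtain ⟨e, he, hx⟩ := mem_LL.1 hx
  have := ((((GG_Dset (LL e)).definable x).1 hx).1 z hz)
  exact LL_mono hg he this

/-- The external hypothesis `V = L` yields its internal form. -/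
lemma SS_true (h : VeqL U) : SS (fun _ : U.M => True) := by
  refine ⟨fun x _ => ?_, fun g _ hg => ⟨_, trivial, Th_LL hg⟩⟩
  obtain ⟨b, hb, hx⟩ := h x
  exact ⟨b, trivial, _, trivial, hb, Th_LL hb, ((Th_LL hb).level x).2 hx⟩

/-- A class satisfying `V = L` contains the true levels indexed by its ordinals. Together with
`SS.cond2`, a transitive such class is a union of levels of the hierarchy (condensation). -/
lemma SS.cond1 {C : U.M → Prop} (h : SS C) {g : U.M} (hg : C g) (ho : Ord g) : C (LL g) := by
  obtain ⟨y, hy, h'⟩ := h.2 g hg ho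
  rwa [← h'.eq_LL ho]

lemma SS.cond2 {C : U.M → Prop} (h : SS C) {x : U.M} (hx : C x) :
    ∃ g, C g ∧ Ord g ∧ x ε LL g := by
  obtain ⟨g, hg, y, hy, ho, h', hx⟩ := h.1 x hx
  exact ⟨g, hg, ho, by rwa [← h'.eq_LL ho]⟩

/-! ### The Tarski–Vaught criterion and reflection -/

/-- The `k`-th entry of a tuple coded by iterated ordered pairs. -/
noncomputable def proj (t : U.M) (k : ℕ) : U.M := fst (snd^[k] t)

lemma snd_iter_df (k : ℕ) : ∀ {f : (ℕ → U.M) → U.M} (hf : DF f), DF (fun v => snd^[k] (f v)) := by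
  induction k with
  | zero => intro f hf; exact hf
  | succ k ih =>
    intro f hf
    have := ih (f := fun v => snd (f v)) inferInstance
    exact this

instance proj_df {f : (ℕ → U.M) → U.M} [hf : DF f] (k : ℕ) : DF (fun v => proj (f v) k) := by
  have := snd_iter_df k hf
  unfold proj; infer_instance

/-- Initial segments of assignments in an `op`-closed class are coded by members of it. -/
lemma exists_code {C : U.M → Prop} (hC : ∀ x y, C x → C y → C (op x y)) (n : ℕ) :
    ∀ v : ℕ → U.M, (∀ k, C (v k)) → ∃ t, C t ∧ ∀ k < n, proj t k = v k := by
  induction n with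
  | zero => intro v hv; exact ⟨v 0, hv 0, fun k hk => by omega⟩
  | succ n ih =>
    intro v hv
    obtain ⟨t, ht, h⟩ := ih (fun k => v (k + 1)) (fun k => hv _)
    refine ⟨op (v 0) t, hC _ _ (hv 0) ht, fun k hk => ?_⟩
    cases k with
    | zero => simp [proj]
    | succ k =>
      rw [← h k (by omega)]
      simp [proj]

/-- The bodies of the quantified subformulas. -/
def Fm.subs : Fm → List Fm
  | .imp φ ψ => φ.subs ++ ψ.subs
  | .all φ => φ :: φ.subs
  | _ => []

/-- The Tarski–Vaught criterion, for the quantified subformulas of one formula. -/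
lemma tarski_vaught {B C : U.M → Prop} (hCB : ∀ x, C x → B x)
    (hC : ∀ x y, C x → C y → C (op x y)) (φ : Fm)
    (h : ∀ ψ ∈ φ.subs, ∀ t, C t → (∃ x, B x ∧ ¬ ψ.sat U.mem B (cns x (proj t))) →
      ∃ x, C x ∧ ¬ ψ.sat U.mem B (cns x (proj t))) :
    ∀ v : ℕ → U.M, (∀ k, C (v k)) → (φ.sat U.mem C v ↔ φ.sat U.mem B v) := by
  induction φ with
  | bot => intro v _; rfl
  | mem i j => intro v _; rfl
  | eq i j => intro v _; rfl
  | imp φ ψ h1 h2 =>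
    intro v hv
    simp only [Fm.sat]
    rw [h1 (fun χ hχ => h χ (List.mem_append_left _ hχ)) v hv,
      h2 (fun χ hχ => h χ (List.mem_append_right _ hχ)) v hv]
  | all φ ih =>
    intro v hv
    simp only [Fm.sat]
    have ih := ih (fun χ hχ => h χ (List.mem_cons_of_mem _ hχ))
    constructor
    · intro h1
      by_contra hn
      push Not at hn
      obtain ⟨x, hx, hn⟩ := hn
      obtain ⟨N, hN⟩ := Fm.supp.{u} φ
      obtain ⟨t, ht, hv'⟩ := exists_code hC N v hv
      have key : ∀ y, φ.sat U.mem B (cns y (proj t)) ↔ φ.sat U.mem B (cns y v) := by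
        intro y
        apply hN
        intro k hk
        cases k with
        | zero => rfl
        | succ k => exact hv' k (by omega)
      obtain ⟨y, hy, hy'⟩ := h φ List.mem_cons_self t ht ⟨x, hx, by rwa [key]⟩
      rw [key] at hy'
      exact hy' ((ih _ (cns_cl hy hv)).1 (h1 y hy))
    · intro h1 x hx
      exact (ih _ (cns_cl hx hv)).2 (h1 x (hCB x hx))

/-- `x` violates, in `B`, the member of the list `L` with index `i` (counted from `2` at the end
of the list) for the parameters coded by `t`. -/
def Wit (B : U.M → Prop) : List Fm → U.M → U.M → U.M → Prop
  | [], _, _, _ => False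
  | ψ :: L, i, t, x =>
    (i = num (L.length + 2) ∧ ¬ ψ.sat U.mem B (cns x (proj t))) ∨ Wit B L i t x

lemma Wit.num {B : U.M → Prop} {L : List Fm} {i t x : U.M} (h : Wit B L i t x) :
    ∃ m < L.length, i = num (m + 2) := by
  induction L with
  | nil => exact h.elim
  | cons ψ L ih =>
    rcases h with ⟨h, _⟩ | h
    · exact ⟨L.length, by simp, h⟩
    · obtain ⟨m, h1, h2⟩ := ih h
      exact ⟨m, by simp; omega, h2⟩

lemma Wit.index (B : U.M → Prop) (L : List Fm) {ψ : Fm} (h : ψ ∈ L) :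
    ∃ m : ℕ, ∀ t x, Wit B L (SL.num (m + 2)) t x ↔ ¬ ψ.sat U.mem B (cns x (proj t)) := by
  induction L with
  | nil => simp at h
  | cons χ L ih =>
    rcases List.mem_cons.1 h with rfl | h
    · refine ⟨L.length, fun t x => ?_⟩
      simp only [Wit, true_and]
      refine or_iff_left fun hw => ?_
      obtain ⟨m, h1, h2⟩ := hw.num
      have := num_inj h2
      omega
    · by_cases hχ : ψ = χ
      · subst hχ
        refine ⟨L.length, fun t x => ?_⟩
        simp only [Wit, true_and]
        refine or_iff_left fun hw => ?_
        obtain ⟨m, h1, h2⟩ := hw.num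
        have := num_inj h2
        omega
      · obtain ⟨m, hm⟩ := ih h
        by_cases hml : m < L.length
        · refine ⟨m, fun t x => ?_⟩
          simp only [Wit]
          rw [hm]
          refine or_iff_right ?_
          rintro ⟨e, _⟩
          have := num_inj e
          omega
        · refine ⟨m + 1, fun t x => ?_⟩
          have h0 : ¬ Wit B L (SL.num (m + 2)) t x := fun hw => by
            obtain ⟨m', h1, h2⟩ := hw.num
            have := num_inj h2
            omega
          rw [← hm]
          simp only [h0, iff_false]
          rintro (⟨e, _⟩ | hw)
          · have := num_inj e
            omega
          · obtain ⟨m', h1, h2⟩ := hw.num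
            have := num_inj h2
            omega

lemma wit_df {B : U.M → Prop} (hB : DP1 B) (L : List Fm) {f g h : (ℕ → U.M) → U.M}
    (hf : DF f) (hg : DF g) (hh : DF h) : Dfn (fun v => Wit B L (f v) (g v) (h v)) := by
  induction L with
  | nil => exact Dfn.const False
  | cons ψ L ih =>
    have := Dfn.sat ψ (fun _ => B)
      (fun k => match k with | 0 => h | k + 1 => fun v => proj (g v) k)
      (hB (fun v => v 0)) (fun k => by
        cases k with
        | zero => exact hh
        | succ k => exact proj_df k)
    have e : Dfn (fun v => ψ.sat U.mem B (cns (h v) (proj (g v)))) := by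
      refine this.congr fun v => ?_
      apply iff_of_eq; congr 1; funext k; cases k <;> rfl
    simp only [Wit]
    infer_instance

/-- Values chosen from the ordinals for the members of a set are bounded. -/
lemma bound (a : U.M) (P : U.M → U.M → Prop) [Dfn (fun v => P (v 0) (v 1))]
    (h : ∀ x, x ε a → ∃ γ, Ord γ ∧ P x γ) :
    ∃ η, Ord η ∧ ∀ x, x ε a → ∃ γ, γ ε η ∧ P x γ := by
  obtain ⟨b, hb⟩ := coll a (fun x γ => Ord γ ∧ P x γ) h
  have ho : ∀ x, x ε sepS b (fun γ => Ord γ) → Ord x := fun x hx => (mem_sepS.1 hx).2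
  refine ⟨suc (un (sepS b (fun γ => Ord γ))), (Ord.un ho).suc, fun x hx => ?_⟩
  obtain ⟨γ, h1, h2, h3⟩ := hb x hx
  exact ⟨γ, mem_suc.2 ((Ord.le_un ho (mem_sepS.2 ⟨h1, h2⟩)).symm), h3⟩

/-- The step of the reflection argument: `LL η` contains the pairs of members of `LL δ` and
witnesses for all formulas of `L` with parameters in `LL δ`. -/
def Step (L : List Fm) (δ η : U.M) : Prop :=
  δ ε η ∧ (∀ p, p ε prd (LL δ) (LL δ) → p ε LL η) ∧
  ∀ p, p ε prd om (LL δ) → (∃ x, Wit (fun _ => True) L (fst p) (snd p) x) →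
    ∃ x, x ε LL η ∧ Wit (fun _ => True) L (fst p) (snd p) x

instance step_df (L : List Fm) {f g : (ℕ → U.M) → U.M} [hf : DF f] [hg : DF g] :
    Dfn (fun v => Step L (f v) (g v)) := by
  refine Dfn.comp2 (P := fun a b => Step L a b) ?_ hf hg
  unfold Step
  have h1 := wit_df (U := U) (B := fun _ => True) (fun _ _ => Dfn.const True) L
    (f := fun v => fst (v 1)) (g := fun v => snd (v 1)) (h := fun v => v 0)
    inferInstance inferInstance inferInstance
  infer_instance

lemma exists_step (hL : SS (fun _ : U.M => True)) (L : List Fm) (δ : U.M) (hδ : Ord δ) :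
    ∃ η, Ord η ∧ Step L δ η := by
  have lev : ∀ x : U.M, ∃ γ, Ord γ ∧ x ε LL γ := fun x => by
    obtain ⟨γ, _, h⟩ := hL.cond2 (x := x) trivial; exact ⟨γ, h⟩
  have hw := wit_df (U := U) (B := fun _ => True) (fun _ _ => Dfn.const True) L
    (f := fun v => fst (v 1)) (g := fun v => snd (v 1)) (h := fun v => v 0)
    inferInstance inferInstance inferInstance
  obtain ⟨η1, o1, h1⟩ := bound (prd (LL δ) (LL δ)) (fun p γ => p ε LL γ) (fun p _ => lev p)
  obtain ⟨η2, o2, h2⟩ := bound (prd om (LL δ)) (fun p γ =>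
      (∃ x, Wit (fun _ => True) L (fst p) (snd p) x) →
      ∃ x, x ε LL γ ∧ Wit (fun _ => True) L (fst p) (snd p) x) (fun p _ => by
    by_cases h : ∃ x, Wit (fun _ => True) L (fst p) (snd p) x
    · obtain ⟨x, hx⟩ := h
      obtain ⟨γ, h1, h2⟩ := lev x
      exact ⟨γ, h1, fun _ => ⟨x, h2, hx⟩⟩
    · exact ⟨emp, Ord.emp, fun h' => (h h').elim⟩)
  have ho : Ord (cup (suc δ) (cup η1 η2)) := by
    refine Ord.un fun x hx => ?_
    rcases mem_pr.1 hx with rfl | rfl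
    · exact hδ.suc
    · refine Ord.un fun x hx => ?_
      rcases mem_pr.1 hx with rfl | rfl <;> assumption
  refine ⟨_, ho, by simp, fun p hp => ?_, fun p hp h => ?_⟩
  · obtain ⟨γ, hγ, hp⟩ := h1 p hp
    exact LL_mono ho (by simp [hγ]) hp
  · obtain ⟨γ, hγ, hp⟩ := h2 p hp
    obtain ⟨x, hx, hx'⟩ := hp h
    exact ⟨x, LL_mono ho (by simp [hγ]) hx, hx'⟩

/-- Reflection: under `V = L`, every formula is reflected by some transitive set containing a
prescribed element. -/
theorem reflection (hL : SS (fun _ : U.M => True)) (φ : Fm) (X : U.M) :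
    ∃ R, Tr (fun x => x ε R) ∧ X ε R ∧ (∀ x y, x ε R → y ε R → op x y ε R) ∧
      ∀ v : ℕ → U.M, (∀ k, v k ε R) →
        (φ.sat U.mem (fun x => x ε R) v ↔ φ.sat U.mem (fun _ => True) v) := by
  obtain ⟨δ0, _, ho0, hX⟩ := hL.cond2 (x := X) trivial
  obtain ⟨F, hF, F0, Fs⟩ := nat_recursion (U := U) δ0 (fun _ δ => lst (fun η => Step φ.subs δ η))
    (DF2.mk inferInstance)
  have hF0 : DF (fun v : ℕ → U.M => F (v 0)) := hF _
  have hs : ∀ n : ℕ, Ord (F (num n)) ∧ Step φ.subs (F (num n)) (F (num (n + 1))) := by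
    have hs : ∀ n : ℕ, Ord (F (num n)) →
        Ord (F (num (n + 1))) ∧ Step φ.subs (F (num n)) (F (num (n + 1))) := by
      intro n hn
      have := lst_spec (exists_step hL φ.subs _ hn)
      rw [num, Fs _ (num_mem_om n)]
      exact ⟨this.1, this.2.1⟩
    have ho : ∀ n : ℕ, Ord (F (num n)) := by
      intro n
      induction n with
      | zero => rw [num, F0]; exact ho0
      | succ n ih => exact (hs n ih).1
    exact fun n => ⟨ho n, (hs n (ho n)).2⟩
  have mR : ∀ x, x ε un (img om (fun n => LL (F n))) ↔ ∃ n : ℕ, x ε LL (F (num n)) := by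
    intro x
    simp only [mem_un, mem_img]
    constructor
    · rintro ⟨y, ⟨k, hk, rfl⟩, h⟩
      obtain ⟨n, rfl⟩ := mem_om.1 hk
      exact ⟨n, h⟩
    · rintro ⟨n, h⟩
      exact ⟨_, ⟨_, num_mem_om n, rfl⟩, h⟩
  have mono : ∀ n m x, x ε LL (F (num n)) → x ε LL (F (num (n + m))) := by
    intro n m x hx
    induction m with
    | zero => exact hx
    | succ m ih => exact LL_mono (hs _).1 (hs (n + m)).2.1 ih
  have hop : ∀ x y, x ε un (img om (fun n => LL (F n))) → y ε un (img om (fun n => LL (F n))) →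
      op x y ε un (img om (fun n => LL (F n))) := by
    intro x y hx hy
    rw [mR] at *
    obtain ⟨n, hx⟩ := hx
    obtain ⟨m, hy⟩ := hy
    refine ⟨n + m + 1, (hs (n + m)).2.2.1 _ ?_⟩
    rw [op_mem_prd]
    exact ⟨mono n m x hx, by have := mono m n y hy; rwa [add_comm] at this⟩
  refine ⟨un (img om (fun n => LL (F n))), ?_, ?_, hop, ?_⟩
  · intro x y hy hx
    rw [mR] at *
    obtain ⟨n, hy⟩ := hy
    exact ⟨n, LL_trans (hs n).1 hy hx⟩
  · rw [mR]; exact ⟨0, by rw [num, F0]; exact hX⟩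
  · refine tarski_vaught (fun _ _ => trivial) hop φ ?_
    rintro ψ hψ t ht ⟨x, _, hx⟩
    obtain ⟨m, hm⟩ := Wit.index (U := U) (fun _ => True) φ.subs hψ
    rw [mR] at ht
    obtain ⟨n, ht⟩ := ht
    have := (hs n).2.2.2 (op (num (m + 2)) t) (by rw [op_mem_prd]; exact ⟨num_mem_om _, ht⟩)
    simp only [fst_op, snd_op, hm] at this
    obtain ⟨y, hy, hy'⟩ := this ⟨x, hx⟩
    exact ⟨y, (mR y).2 ⟨_, hy⟩, hy'⟩

/-- Transport of satisfaction along an isomorphism of classes. -/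
lemma Fm.sat_iso {C C' : U.M → Prop} (π : U.M → U.M) (h1 : ∀ x, C x → C' (π x))
    (h2 : ∀ y, C' y → ∃ x, C x ∧ π x = y) (h3 : ∀ x y, C x → C y → (π x ε π y ↔ x ε y))
    (h4 : ∀ x y, C x → C y → (π x = π y ↔ x = y)) (φ : Fm) :
    ∀ v : ℕ → U.M, (∀ k, C (v k)) →
      (φ.sat U.mem C' (fun k => π (v k)) ↔ φ.sat U.mem C v) := by
  induction φ with
  | bot => intro v _; rfl
  | mem i j => intro v hv; exact h3 _ _ (hv i) (hv j)
  | eq i j => intro v hv; exact h4 _ _ (hv i) (hv j)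
  | imp φ ψ i1 i2 => intro v hv; simp only [Fm.sat]; rw [i1 v hv, i2 v hv]
  | all φ ih =>
    intro v hv
    simp only [Fm.sat]
    have e : ∀ x, cns (π x) (fun k => π (v k)) = fun k => π (cns x v k) := by
      intro x; funext k; cases k <;> rfl
    constructor
    · intro h x hx
      have := h (π x) (h1 x hx)
      rw [e] at this
      exact (ih _ (cns_cl hx hv)).1 this
    · intro h y hy
      obtain ⟨x, hx, rfl⟩ := h2 y hy
      rw [e]
      exact (ih _ (cns_cl hx hv)).2 (h x hx)

/-! ### Skolem hulls and the power set of an inaccessible cardinal under `V = L` -/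

lemma CLE.of_surj {H k : U.M} (hk : Ord k) (F : U.M → U.M) (hF : DF1 F)
    (h : ∀ x, x ε H → ∃ ξ, ξ ε k ∧ F ξ = x) : CLE H k := by
  have hF0 : DF (fun v : ℕ → U.M => F (v 0)) := hF _
  have sp : ∀ x, x ε H → lst (fun η => F η = x) ε k ∧ F (lst (fun η => F η = x)) = x := by
    intro x hx
    obtain ⟨ξ, h1, h2⟩ := h x hx
    obtain ⟨h3, h4, h5⟩ := lst_spec (P := fun η => F η = x) ⟨ξ, hk.mem h1, h2⟩
    exact ⟨hk.lt_of_le_lt (h5 ξ (hk.mem h1) h2) h1, h4⟩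
  refine ⟨fun x => lst (fun η => F η = x), DF1.mk inferInstance, fun x hx => (sp x hx).1,
    fun x y hx hy e => ?_⟩
  rw [← (sp x hx).2, ← (sp y hy).2]
  exact congrArg F e

lemma exists_unpair {k : U.M} (hc : CLE (prd k k) k) : ∃ q : U.M → U.M, DF1 q ∧
    ∀ a b, a ε k → b ε k → ∃ ξ, ξ ε k ∧ q ξ = op a b := by
  obtain ⟨F, hF, h1, h2⟩ := hc
  have hF0 : DF (fun v : ℕ → U.M => F (v 0)) := hF _
  refine ⟨fun ξ => cmp (fun z => ∃ p, p ε prd k k ∧ F p = ξ ∧ z ε p), DF1.mk inferInstance,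
    fun a b ha hb => ⟨F (op a b), h1 _ (op_mem_prd.2 ⟨ha, hb⟩), ?_⟩⟩
  have key : ∀ z, (∃ p, p ε prd k k ∧ F p = F (op a b) ∧ z ε p) ↔ z ε op a b := by
    intro z
    constructor
    · rintro ⟨p, hp, e, hz⟩
      rwa [← h2 p (op a b) hp (op_mem_prd.2 ⟨ha, hb⟩) e]
    · intro hz
      exact ⟨_, op_mem_prd.2 ⟨ha, hb⟩, rfl, hz⟩
  apply ext
  intro z
  show z ε cmp _ ↔ _
  rw [mem_cmp' ⟨op a b, fun x => (key x).symm⟩, key]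

open Classical in
/-- Skolem hulls: a subset of `R` of size at most `k`, containing `k` and `A`, closed under pairing
and under witnesses in `R` for finitely many formulas. -/
lemma hull {k R A : U.M} (hk : Ord k) (hom : om ε k) (hc : CLE (prd k k) k) (hA : A ε R)
    (hkR : ∀ x, x ε k → x ε R) (hop : ∀ x y, x ε R → y ε R → op x y ε R) (L : List Fm) :
    ∃ H, (∀ x, x ε H → x ε R) ∧ A ε H ∧ (∀ x, x ε k → x ε H) ∧
      (∀ x y, x ε H → y ε H → op x y ε H) ∧
      (∀ ψ ∈ L, ∀ t, t ε H → (∃ x, x ε R ∧ ¬ ψ.sat U.mem (fun x => x ε R) (cns x (proj t))) →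
        ∃ x, x ε H ∧ ¬ ψ.sat U.mem (fun x => x ε R) (cns x (proj t))) ∧
      ∃ F : U.M → U.M, DF1 F ∧ ∀ x, x ε H → ∃ ξ, ξ ε k ∧ F ξ = x := by
  obtain ⟨q, hq, hq'⟩ := exists_unpair hc
  obtain ⟨c, hc, hc'⟩ := choice_fn (pw R)
  have hq0 : DF (fun v : ℕ → U.M => q (v 0)) := hq _
  have hw := wit_df (U := U) (B := fun x => x ε R) (DP1.mk inferInstance) L
    (f := fun v => v 1) (g := fun v => v 2) (h := fun v => v 0)
    inferInstance inferInstance inferInstance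
  have hsk : DF (fun v : ℕ → U.M => sepS R (fun x => Wit (fun x => x ε R) L (v 0) (v 1) x)) :=
    inferInstance
  let O : U.M → U.M → U.M → U.M := fun i x y =>
    if i = num 0 then x else if i = num 1 then op x y else if i = om then A else
      c (sepS R (fun z => Wit (fun x => x ε R) L i x z))
  have hO0 : DF (fun v : ℕ → U.M => O (v 0) (v 1) (v 2)) := by
    have : DF (fun v : ℕ → U.M => c (sepS R (fun x => Wit (fun x => x ε R) L (v 0) (v 1) x))) :=
      hc _
    show DF (fun v : ℕ → U.M => if v 0 = num 0 then v 1 else if v 0 = num 1 then op (v 1) (v 2)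
      else if v 0 = om then A else c (sepS R (fun x => Wit (fun x => x ε R) L (v 0) (v 1) x)))
    infer_instance
  let O' : U.M → U.M → U.M := fun e ξ =>
    O (fst (q ξ)) (app e (fst (q (snd (q ξ))))) (app e (snd (q (snd (q ξ)))))
  have hO1 : DF (fun v : ℕ → U.M => O' (v 0) (v 1)) :=
    DF.comp3 (F := O) hO0 inferInstance inferInstance inferInstance
  have hO2 : ∀ {f g : (ℕ → U.M) → U.M} [DF f] [DF g], DF (fun v => O' (f v) (g v)) :=
    fun {f g} hf hg => hO1.comp2 hf hg
  have hO' : ∀ e i a b, i ε k → a ε k → b ε k →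
      ∃ ξ, ξ ε k ∧ O' e ξ = O i (app e a) (app e b) := by
    intro e i a b hi ha hb
    obtain ⟨η, hη, e1⟩ := hq' a b ha hb
    obtain ⟨ξ, hξ, e2⟩ := hq' i η hi hη
    refine ⟨ξ, hξ, ?_⟩
    simp only [O', e2, fst_op, snd_op, e1]
  clear_value O'
  obtain ⟨E, hE, E0, Es⟩ := nat_recursion (U := U) (lam k (fun ξ => ξ))
    (fun _ e => lam k (fun ξ => O' e ξ)) (DF2.mk inferInstance)
  have hE0 : DF (fun v : ℕ → U.M => E (v 0)) := hE _
  have nk : ∀ n : ℕ, (num n : U.M) ε k := fun n => hk.trans (num_mem_om n) hom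
  have step : ∀ (n : ℕ) i a b, i ε k → a ε k → b ε k → ∃ ξ, ξ ε k ∧
      app (E (num (n + 1))) ξ = O i (app (E (num n)) a) (app (E (num n)) b) := by
    intro n i a b hi ha hb
    obtain ⟨ξ, hξ, e⟩ := hO' (E (num n)) i a b hi ha hb
    refine ⟨ξ, hξ, ?_⟩
    rw [num, Es _ (num_mem_om n), app_lam hξ, e]
  have mono : ∀ (n m : ℕ) a, a ε k → ∃ ξ, ξ ε k ∧
      app (E (num (n + m))) ξ = app (E (num n)) a := by
    intro n m a ha
    induction m with
    | zero => exact ⟨a, ha, rfl⟩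
    | succ m ih =>
      obtain ⟨b, hb, e⟩ := ih
      obtain ⟨ξ, hξ, e'⟩ := step (n + m) (num 0) b b (nk 0) hb hb
      refine ⟨ξ, hξ, ?_⟩
      rw [← add_assoc, e', ← e]
      simp [O]
  have mH : ∀ x, x ε sepS R (fun x => ∃ n, n ε om ∧ ∃ ξ, ξ ε k ∧ app (E n) ξ = x) ↔
      x ε R ∧ ∃ n : ℕ, ∃ ξ, ξ ε k ∧ app (E (num n)) ξ = x := by
    intro x
    rw [mem_sepS]
    refine and_congr_right fun _ => ⟨?_, ?_⟩
    · rintro ⟨n, hn, h⟩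
      obtain ⟨n, rfl⟩ := mem_om.1 hn
      exact ⟨n, h⟩
    · rintro ⟨n, h⟩
      exact ⟨_, num_mem_om n, h⟩
  have n01 : (num 1 : U.M) ≠ num 0 := fun h => by have := num_inj h; omega
  have nom : ∀ n : ℕ, (om : U.M) ≠ num n := fun n h => mem_irrefl (om : U.M) (by
    conv_lhs => rw [h]
    exact num_mem_om n)
  refine ⟨_, fun x hx => ((mH x).1 hx).1, ?_, ?_, ?_, ?_, ?_⟩
  · rw [mH]
    obtain ⟨ξ, hξ, e⟩ := step 0 om om om hom hom hom
    refine ⟨hA, 1, ξ, hξ, ?_⟩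
    rw [e]
    simp [O, nom]
  · intro x hx
    rw [mH]
    exact ⟨hkR x hx, 0, x, hx, by rw [num, E0, app_lam hx]⟩
  · intro x y hx hy
    rw [mH] at *
    obtain ⟨hx, n, a, ha, rfl⟩ := hx
    obtain ⟨hy, m, b, hb, rfl⟩ := hy
    obtain ⟨a', ha', e1⟩ := mono n m a ha
    obtain ⟨b', hb', e2⟩ := mono m n b hb
    obtain ⟨ξ, hξ, e⟩ := step (n + m) (num 1) a' b' (nk 1) ha' hb'
    refine ⟨hop _ _ hx hy, n + m + 1, ξ, hξ, ?_⟩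
    rw [e, e1, ← e2, add_comm m n]
    simp [O, n01]
  · rintro ψ hψ t ht hx
    obtain ⟨m, hm⟩ := Wit.index (U := U) (fun x => x ε R) L hψ
    rw [mH] at ht
    obtain ⟨ht, n, a, ha, rfl⟩ := ht
    obtain ⟨ξ, hξ, e⟩ := step n (num (m + 2)) a a (nk _) ha ha
    have e0 : (num (m + 2) : U.M) ≠ num 0 := fun h => by have := num_inj h; omega
    have e1 : (num (m + 2) : U.M) ≠ num 1 := fun h => by have := num_inj h; omega
    simp only [O, e0, e1, (nom _).symm, if_false] at e
    have hw2 : Dfn (fun v : ℕ → U.M =>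
        Wit (fun x => x ε R) L (num (m + 2)) (app (E (num n)) a) (v 0)) :=
      wit_df (U := U) (B := fun x => x ε R) (DP1.mk inferInstance) L
        inferInstance inferInstance inferInstance
    have := hc' (sepS R (fun z => Wit (fun x => x ε R) L (num (m + 2)) (app (E (num n)) a) z))
      (mem_pw.2 fun z hz => (mem_sepS.1 hz).1) (by
        obtain ⟨x, hx, hx'⟩ := hx
        exact ⟨x, mem_sepS.2 ⟨hx, (hm _ _).2 hx'⟩⟩)
    rw [mem_sepS, hm, ← e] at this
    exact ⟨_, (mH _).2 ⟨this.1, n + 1, ξ, hξ, rfl⟩, this.2⟩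
  · refine ⟨fun ξ => app (E (fst (q ξ))) (snd (q ξ)), DF1.mk inferInstance, fun x hx => ?_⟩
    rw [mH] at hx
    obtain ⟨_, n, a, ha, rfl⟩ := hx
    obtain ⟨ξ, hξ, e⟩ := hq' (num n) a (nk n) ha
    exact ⟨ξ, hξ, by simp only [e, fst_op, snd_op]⟩

/-- The formula `x₀ ∈ x₁ ↔ x₀ ∈ x₂`; closure under its counterexamples is extensionality. -/
def extFm : Fm :=
  .imp (.imp (.imp (.mem 0 1) (.mem 0 2)) (.imp (.imp (.mem 0 2) (.mem 0 1)) .bot)) .bot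

lemma extFm_sat {C : U.M → Prop} {z x y : U.M} :
    extFm.sat U.mem C (cns z (proj (op x (op y y)))) ↔ (z ε x ↔ z ε y) := by
  have h1 : cns z (proj (op x (op y y))) 1 = x := by simp [cns, proj]
  have h2 : cns z (proj (op x (op y y))) 2 = y := by simp [cns, proj]
  simp only [extFm, Fm.sat, cns_zero, h1, h2]
  tauto

/-- Condensation: under `V = L`, every subset of `k` lies in a transitive model of `V = L` of size
at most `k`. -/
lemma condense (hL : SS (fun _ : U.M => True)) {k A : U.M} (hk : Ord k) (hom : om ε k)
    (hc : CLE (prd k k) k) (hA : ∀ x, x ε A → x ε k) :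
    ∃ M, Tr (fun x => x ε M) ∧ SS (fun x => x ε M) ∧ A ε M ∧ CLE M k := by
  obtain ⟨φ, hφ⟩ := (RD.ss (U := U)).out
  obtain ⟨R, Rt, RX, Rop, Rφ⟩ := reflection hL φ (op k A)
  have hkR' : k ε R ∧ A ε R := by
    have := Rt _ _ RX (show pr k A ε op k A by simp [op])
    exact ⟨Rt _ _ this (by simp), Rt _ _ this (by simp)⟩
  obtain ⟨hkR', hAR⟩ := hkR'
  have hkR : ∀ x, x ε k → x ε R := fun x hx => Rt _ _ hkR' hx
  obtain ⟨H, HR, HA, Hk, Hop, Hw, F, hF, HF⟩ := hull hk hom hc hAR hkR Rop (extFm :: φ.subs)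
  have Hext : ∀ x y, x ε H → y ε H → (∀ z, z ε H → (z ε x ↔ z ε y)) → x = y := by
    intro x y hx hy h
    apply ext
    by_contra hn
    push Not at hn
    obtain ⟨z, hz⟩ := hn
    have hzn : ¬ (z ε x ↔ z ε y) := by tauto
    have hzR : z ε R := by
      by_cases h1 : z ε x
      · exact Rt _ _ (HR x hx) h1
      · exact Rt _ _ (HR y hy) (by tauto)
    obtain ⟨w, hw, hw'⟩ := Hw extFm List.mem_cons_self (op x (op y y)) (Hop _ _ hx (Hop _ _ hy hy))
      ⟨z, hzR, by rwa [extFm_sat]⟩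
    rw [extFm_sat] at hw'
    exact hw' (h w hw)
  obtain ⟨π, hπ, eπ⟩ := collapse (U := U) (fun x => sepS H (fun y => y ε x)) (DF1.mk inferInstance)
    (fun P _ h x => by
      induction x using mem_ind with
      | _ x ih => exact h x fun y hy => ih y (mem_sepS.1 hy).2)
  have hπ0 : DF (fun v : ℕ → U.M => π (v 0)) := hπ _
  have hF0 : DF (fun v : ℕ → U.M => F (v 0)) := hF _
  have eπ : ∀ x z, z ε π x ↔ ∃ y, y ε H ∧ y ε x ∧ z = π y := fun x z => by
    rw [eπ]; simp only [mem_sepS, and_assoc]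
  have inj : ∀ x, x ε H → ∀ y, y ε H → π x = π y → x = y := by
    intro x
    induction x using mem_ind with
    | _ x ih =>
      intro hx y hy e
      refine Hext x y hx hy fun z hz => ⟨fun h => ?_, fun h => ?_⟩
      · have := (eπ x (π z)).2 ⟨z, hz, h, rfl⟩
        rw [e, eπ] at this
        obtain ⟨w, hw, hw', e'⟩ := this
        rwa [ih z h hz w hw e']
      · have := (eπ y (π z)).2 ⟨z, hz, h, rfl⟩
        rw [← e, eπ] at this
        obtain ⟨w, hw, hw', e'⟩ := this
        rwa [← ih w hw' hw z hz e'.symm]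
  have fix : ∀ x, (∀ y, y ε x → y ε H ∧ π y = y) → π x = x := by
    intro x h
    apply ext
    intro z
    rw [eπ]
    constructor
    · rintro ⟨y, _, hy, rfl⟩
      rwa [(h y hy).2]
    · intro hz
      exact ⟨z, (h z hz).1, hz, (h z hz).2.symm⟩
  have fixk : ∀ x, x ε k → π x = x := by
    intro x
    induction x using mem_ind with
    | _ x ih =>
      intro hx
      exact fix x fun y hy => ⟨Hk y (hk.trans hy hx), ih y hy (hk.trans hy hx)⟩
  have fixA : π A = A := fix A fun y hy => ⟨Hk y (hA y hy), fixk y (hA y hy)⟩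
  have Mt : Tr (fun x => x ε img H π) := by
    intro z y hy hz
    obtain ⟨x, hx, rfl⟩ := mem_img.1 hy
    obtain ⟨w, hw, _, rfl⟩ := (eπ _ _).1 hz
    exact mem_img.2 ⟨w, hw, rfl⟩
  refine ⟨img H π, Mt, ?_, mem_img.2 ⟨A, HA, fixA.symm⟩, ?_⟩
  · rw [hφ _ Mt (fun _ => π A) (fun _ => mem_img.2 ⟨A, HA, rfl⟩)]
    refine (Fm.sat_iso (C := fun x => x ε H) (C' := fun x => x ε img H π) π
      (fun x hx => mem_img.2 ⟨x, hx, rfl⟩) (fun y hy => ?_) (fun x y hx hy => ?_)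
      (fun x y hx hy => ⟨inj x hx y hy, fun h => by rw [h]⟩) φ (fun _ => A) (fun _ => HA)).2 ?_
    · obtain ⟨x, hx, rfl⟩ := mem_img.1 hy
      exact ⟨x, hx, rfl⟩
    · rw [eπ]
      constructor
      · rintro ⟨w, hw, h, e⟩
        rwa [inj x hx w hw e]
      · intro h
        exact ⟨x, hx, h, rfl⟩
    · rw [tarski_vaught (B := fun x => x ε R) HR Hop φ
        (fun ψ hψ => Hw ψ (List.mem_cons_of_mem _ hψ)) _ (fun _ => HA), Rφ _ (fun _ => hAR),
        ← hφ _ (fun _ _ _ _ => trivial) _ (fun _ => trivial)]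
      exact hL
  · refine CLE.of_surj hk (fun ξ => π (F ξ)) (DF1.mk inferInstance) fun x hx => ?_
    obtain ⟨y, hy, rfl⟩ := mem_img.1 hx
    obtain ⟨ξ, hξ, rfl⟩ := HF y hy
    exact ⟨ξ, hξ, rfl⟩

/-- Gödel's theorem at an inaccessible cardinal: `V = L` implies `2 ^ k ≤ k⁺`. -/
lemma pw_cle_of_L (hL : SS (fun _ : U.M => True)) {k : U.M} (h : ZF.IsInaccessible U.mem k)
    (l : U.M) (hl : ZF.IsCardSuccOf U.mem l k) : CLE (pw k) l := by
  have hk : Ord k := h.1.1.1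
  have hom : om ε k := by
    obtain ⟨w, hw, hwk⟩ := h.2.2
    rwa [← isOmega.1 hw]
  have lev : ∀ x : U.M, ∃ γ, Ord γ ∧ x ε LL γ := fun x => by
    obtain ⟨γ, _, h⟩ := hL.cond2 (x := x) trivial; exact ⟨γ, h⟩
  refine cle_of_segments (pw k) l hl.1.1 (fun x => lst (fun γ => x ε LL γ)) (DF1.mk inferInstance)
    (fun x _ => (lst_spec (P := fun γ => x ε LL γ) (lev x)).1) fun A hA hle => ?_
  obtain ⟨M, Mt, MS, MA, Mk⟩ := condense hL hk hom (prd_cle h) (mem_pw.1 hA)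
  refine card_succ_not_cle hl ((hle.trans (CLE.of_sub fun B hB => ?_)).trans Mk)
  obtain ⟨hB, hBA⟩ := mem_sepS.1 hB
  obtain ⟨oB, mB, _⟩ := lst_spec (P := fun γ => B ε LL γ) (lev B)
  obtain ⟨oA, mA, lA⟩ := lst_spec (P := fun γ => A ε LL γ) (lev A)
  obtain ⟨γ, hγ, oγ, hAγ⟩ := MS.cond2 MA
  have up : ∀ {a b x : U.M}, Ord b → (a = b ∨ a ε b) → x ε LL a → x ε LL b := by
    rintro a b x hb (rfl | hab) hx
    · exact hx
    · exact LL_mono hb hab hx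
  exact Mt _ _ (MS.cond1 hγ oγ) (up oγ (lA γ oγ hAγ) (up oA hBA mB))

/-! ### Complete ultrafilters -/

/-- In the sense of the class `C`, `F` is a `k`-complete ultrafilter on the uncountable
ordinal `k`. -/
def UF0 (C : U.M → Prop) (k F : U.M) : Prop :=
  ZF.IsOrdinal U.mem k ∧ (∃ w, w ε k ∧ IsOm w) ∧ (∀ X, X ε F → ∃ x, x ε X ∧ True) ∧
  (∀ X, X ε F → ∀ Y, C Y → ZF.Sub U.mem X Y → ZF.Sub U.mem Y k → Y ε F) ∧
  (∀ β, β ε k → ∀ g, C g → FunP g β F → ∀ Z, C Z → ZF.Sub U.mem Z k →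
    (∀ x, x ε k → (x ε Z ↔ ∀ γ, γ ε β → ∀ Y, Y ε F → op γ Y ε g → x ε Y)) → Z ε F) ∧
  ∀ A, C A → ZF.Sub U.mem A k → ∀ A', C A' → ZF.Sub U.mem A' k →
    (∀ x, x ε k → (x ε A' ↔ ¬ x ε A)) → A ε F ∨ A' ε F

/-- In the sense of the class `C`, `F` is a nonprincipal `k`-complete ultrafilter on the
uncountable ordinal `k`; nonprincipality is expressed by the absence of singletons. -/
def UF (C : U.M → Prop) (k F : U.M) : Prop :=
  UF0 C k F ∧ ∀ a, a ε k → ∀ X, X ε F → ∃ x, x ε X ∧ ¬ x = a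

instance RD.uf {f g : (ℕ → U.M) → U.M} [hf : RV f] [hg : RV g] :
    RD (fun C v => UF C (f v) (g v)) := by
  refine RD.comp2 ?_ hf hg
  unfold UF UF0
  infer_instance

/-- A true ultrafilter is an ultrafilter in the sense of any class: the quantifiers relativized to
`C` are all universal. -/
lemma UF.down {C : U.M → Prop} {k F : U.M} (h : UF (fun _ => True) k F) : UF C k F := by
  obtain ⟨⟨h1, h2, h3, h4, h5, h6⟩, h7⟩ := h
  exact ⟨⟨h1, h2, h3, fun X hX Y _ => h4 X hX Y trivial,
    fun β hβ g _ hg Z _ => h5 β hβ g trivial hg Z trivial,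
    fun A _ hA A' _ => h6 A trivial hA A' trivial⟩, h7⟩

section
variable {k F : U.M} {P Q : U.M → Prop}
  [hP : Dfn (fun v : ℕ → U.M => P (v 0))] [hQ : Dfn (fun v : ℕ → U.M => Q (v 0))]

lemma UF0.om (h : UF0 (fun _ => True) k F) : SL.om ε k := by
  obtain ⟨w, hw, hw'⟩ := h.2.1
  rwa [← hw'.eq]

lemma UF0.mono (h : UF0 (fun _ => True) k F) (hp : sepS k P ε F) (hpq : ∀ ξ, ξ ε k → P ξ → Q ξ) : sepS k Q ε F :=
  h.2.2.2.1 _ hp _ trivial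
    (fun x hx => by rw [mem_sepS] at *; exact ⟨hx.1, hpq x hx.1 hx.2⟩)
    (fun x hx => (mem_sepS.1 hx).1)

/-- Completeness for definable families. -/
lemma UF0.inter (h : UF0 (fun _ => True) k F) {β : U.M} (hβ : β ε k) {T : U.M → U.M → Prop}
    [hT : Dfn (fun v : ℕ → U.M => T (v 0) (v 1))] (ht : ∀ γ, γ ε β → sepS k (T γ) ε F) :
    sepS k (fun ξ => ∀ γ, γ ε β → T γ ξ) ε F := by
  have hT' : Dfn (fun v : ℕ → U.M => T (v 1) (v 0)) := Dfn.comp2 hT inferInstance inferInstance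
  have hT1 : ∀ a, Dfn (fun v : ℕ → U.M => T a (v 0)) :=
    fun a => Dfn.comp2 (P := T) hT (DF.const a) inferInstance
  refine h.2.2.2.2.1 β hβ (lam β (fun γ => sepS k (T γ))) trivial (FunP.lam ht) _ trivial
    (fun x hx => (mem_sepS.1 hx).1) fun x hx => ?_
  rw [mem_sepS]
  constructor
  · rintro ⟨_, h1⟩ γ hγ Y hY hp
    obtain ⟨_, rfl⟩ := op_mem_lam.1 hp
    have := hT1 γ
    exact mem_sepS.2 ⟨hx, h1 γ hγ⟩
  · intro h1
    refine ⟨hx, fun γ hγ => ?_⟩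
    have := hT1 γ
    exact (mem_sepS.1 (h1 γ hγ _ (ht γ hγ) (op_mem_lam.2 ⟨hγ, rfl⟩))).2

lemma UF0.and (h : UF0 (fun _ => True) k F) (hp : sepS k P ε F) (hq : sepS k Q ε F) : sepS k (fun ξ => P ξ ∧ Q ξ) ε F := by
  have := h.inter h.om (T := fun γ ξ => (γ = num 0 → P ξ) ∧ (γ ≠ num 0 → Q ξ))
    (hT := by
      have := Dfn.comp1 (P := P) hP (f := fun v : ℕ → U.M => v 1) inferInstance
      have := Dfn.comp1 (P := Q) hQ (f := fun v : ℕ → U.M => v 1) inferInstance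
      infer_instance)
    (fun γ hγ => by
      by_cases e : γ = num 0
      · exact h.mono hp fun ξ _ hξ => ⟨fun _ => hξ, fun h => (h e).elim⟩
      · exact h.mono hq fun ξ _ hξ => ⟨fun h => (e h).elim, fun _ => hξ⟩)
  have hd : Dfn (fun v : ℕ → U.M => ∀ γ : U.M, γ ε SL.om → (γ = num 0 → P (v 0)) ∧ (γ ≠ num 0 → Q (v 0))) := by
    have := Dfn.comp1 (P := P) hP (f := fun v : ℕ → U.M => v 1) inferInstance
    have := Dfn.comp1 (P := Q) hQ (f := fun v : ℕ → U.M => v 1) inferInstance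
    infer_instance
  refine h.mono this fun ξ _ hξ => ⟨(hξ _ (num_mem_om 0)).1 rfl, (hξ _ (num_mem_om 1)).2 fun e => ?_⟩
  have := num_inj e
  omega

lemma UF0.ne (h : UF0 (fun _ => True) k F) (hp : sepS k P ε F) : ∃ ξ, ξ ε k ∧ P ξ := by
  obtain ⟨x, hx, -⟩ := h.2.2.1 _ hp
  exact ⟨x, mem_sepS.1 hx⟩

lemma UF0.not (h : UF0 (fun _ => True) k F) : sepS k (fun ξ => ¬ P ξ) ε F ↔ ¬ sepS k P ε F := by
  constructor
  · intro h1 h2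
    obtain ⟨ξ, _, h3, h4⟩ := h.ne (h.and h1 h2)
    exact h3 h4
  · intro h1
    refine (h.2.2.2.2.2 (sepS k P) trivial (fun x hx => (mem_sepS.1 hx).1) _ trivial
      (fun x hx => (mem_sepS.1 hx).1) fun x hx => ?_).resolve_left h1
    rw [mem_sepS, mem_sepS]
    tauto

lemma UF0.imp (h : UF0 (fun _ => True) k F) : sepS k (fun ξ => P ξ → Q ξ) ε F ↔ (sepS k P ε F → sepS k Q ε F) := by
  constructor
  · intro h1 h2
    exact h.mono (h.and h1 h2) fun ξ _ h3 => h3.1 h3.2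
  · intro h1
    by_cases h2 : sepS k P ε F
    · exact h.mono (h1 h2) fun ξ _ h3 _ => h3
    · exact h.mono (h.not.2 h2) fun ξ _ h3 h4 => (h3 h4).elim

lemma UF0.all (h : UF0 (fun _ => True) k F) (hp : ∀ ξ, ξ ε k → P ξ) : sepS k P ε F := by
  by_contra hn
  obtain ⟨ξ, hξ, h1⟩ := h.ne (h.not.2 hn)
  exact h1 (hp ξ hξ)

end

lemma UF.of_measurable {k : U.M} (h : ZF.IsMeasurable U.mem k) : ∃ F, UF (fun _ => True) k F := by
  obtain ⟨hi, F, ⟨⟨f1, f2, f3, f4⟩, hc⟩, hp, hm⟩ := h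
  have h0 : UF0 (fun _ => True) k F := by
    refine ⟨hi.1.1.1, ?_, fun X hX => (f3 X hX).imp fun x hx => ⟨hx, trivial⟩, fun X hX Y _ => f4 X Y hX, fun β hβ g _ hg Z _ hZ hz => ?_,
      fun A _ hA A' _ hA' e => ?_⟩
    · obtain ⟨w, hw, hwk⟩ := hi.2.2
      rw [isOmega.1 hw] at hwk
      exact ⟨om, hwk, isOm_om⟩
    · refine hc β g hβ (isFunc.2 hg) Z fun x => ?_
      constructor
      · intro hx
        refine ⟨hZ x hx, fun γ Y hγ hY => ?_⟩
        rw [pairMem] at hY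
        have hYF : Y ε F := by
          have := hg.app_mem hγ
          rwa [(hg.op_iff.1 hY).2] at this
        exact (hz x (hZ x hx)).1 hx γ hγ Y hYF hY
      · rintro ⟨hx, h1⟩
        exact (hz x hx).2 fun γ hγ Y _ hY => h1 γ Y hγ (pairMem.2 hY)
    · rcases hm A hA with h1 | ⟨B, hB, h1⟩
      · exact Or.inl h1
      · refine Or.inr ?_
        rwa [show A' = B from ext fun x => ⟨fun hx => (hB x).2 ⟨hA' x hx, (e x (hA' x hx)).1 hx⟩,
          fun hx => (e x ((hB x).1 hx).1).2 ((hB x).1 hx).2⟩]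
  refine ⟨F, h0, ?_⟩
  by_contra hn
  push Not at hn
  obtain ⟨a, ha, X, hX, hs⟩ := hn
  have hXe : ∀ Y, Y ε F → a ε Y := by
    intro Y hY
    have e : ∀ Z, Z ε F → sepS k (fun ξ => ξ ε Z) ε F := fun Z hZ =>
      f4 Z _ hZ (fun x hx => mem_sepS.2 ⟨f1 Z hZ x hx, hx⟩) (fun x hx => (mem_sepS.1 hx).1)
    obtain ⟨ξ, hξ, h1, h2⟩ := h0.ne (h0.and (e X hX) (e Y hY))
    rwa [← hs ξ h1]
  refine hp ⟨pr a a, fun Y => ⟨fun hY => ⟨f1 Y hY, fun x hx => ?_⟩, fun ⟨h1, h2⟩ => ?_⟩⟩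
  · have : x = a := by simpa using hx
    rw [this]; exact hXe Y hY
  · refine f4 X Y hX (fun x hx => ?_) h1
    rw [hs x hx]
    exact h2 a (by simp)

/-! ### Ultrapowers of transitive sets and Scott's theorem -/

open Classical in
/-- Choice of a function on `k` whose values in `R` satisfy `P` wherever this is possible. -/
lemma exists_sel {k R r0 : U.M} (h0 : r0 ε R) (P : U.M → U.M → Prop)
    [hP : Dfn (fun v : ℕ → U.M => P (v 0) (v 1))] :
    ∃ h, FunP h k R ∧ ∀ ξ, ξ ε k → (∃ x, x ε R ∧ P ξ x) → P ξ (app h ξ) := by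
  obtain ⟨c, hc, hc'⟩ := choice_fn (pw R)
  have hP1 : ∀ a, Dfn (fun v : ℕ → U.M => P a (v 0)) :=
    fun a => Dfn.comp2 (P := P) hP (DF.const a) inferInstance
  have hP2 : Dfn (fun v : ℕ → U.M => P (v 1) (v 0)) := Dfn.comp2 hP inferInstance inferInstance
  have d1 : DF (fun v : ℕ → U.M => sepS R (P (v 0))) := inferInstance
  have d2 : DF (fun v : ℕ → U.M => c (sepS R (P (v 0)))) := hc _
  have d3 : DF (fun v : ℕ → U.M => if ∃ x, x ε R ∧ P (v 0) x then c (sepS R (P (v 0))) else r0) :=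
    inferInstance
  have sp : ∀ ξ, (∃ x, x ε R ∧ P ξ x) → c (sepS R (P ξ)) ε R ∧ P ξ (c (sepS R (P ξ))) := by
    rintro ξ ⟨x, hx⟩
    have := hP1 ξ
    have := hc' (sepS R (P ξ)) (mem_pw.2 fun z hz => (mem_sepS.1 hz).1) ⟨x, mem_sepS.2 hx⟩
    exact mem_sepS.1 this
  refine ⟨lam k (fun ξ => if ∃ x, x ε R ∧ P ξ x then c (sepS R (P ξ)) else r0),
    FunP.lam fun ξ hξ => ?_, fun ξ hξ hx => ?_⟩
  · split_ifs with hx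
    · exact (sp ξ hx).1
    · exact h0
  · rw [app_lam hξ, if_pos hx]
    exact (sp ξ hx).2

/-- The membership relation of the ultrapower is well-founded, by countable completeness. -/
lemma ult_wf {k F R : U.M} (h : UF0 (fun _ => True) k F) (P : U.M → Prop) (hP : DP1 P)
    (hi : ∀ x, (∀ y, y ε sepS (Fn k R) (fun f => sepS k (fun ξ => app f ξ ε app x ξ) ε F) → P y) →
      P x) (x : U.M) : P x := by
  by_contra hx
  have hP0 : Dfn (fun v : ℕ → U.M => P (v 0)) := hP _
  obtain ⟨c, hc, hc'⟩ := choice_fn (pw (Fn k R))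
  let pre : U.M → U.M := fun x => sepS (Fn k R)
    (fun f => sepS k (fun ξ => app f ξ ε app x ξ) ε F ∧ ¬ P f)
  have d1 : DF (fun v : ℕ → U.M => c (pre (v 0))) := hc _
  obtain ⟨E, hE, E0, Es⟩ := nat_recursion (U := U) x (fun _ x => c (pre x))
    (DF2.mk (DF.comp1 (F := fun x => c (pre x)) d1 inferInstance))
  have hE0 : DF (fun v : ℕ → U.M => E (v 0)) := hE _
  have step : ∀ x, ¬ P x → c (pre x) ε pre x := by
    intro x hx
    refine hc' _ (mem_pw.2 fun z hz => (mem_sepS.1 hz).1) ?_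
    by_contra hn
    push Not at hn
    refine hx (hi x fun y hy => ?_)
    by_contra hy'
    obtain ⟨h1, h2⟩ := mem_sepS.1 hy
    exact hn y (mem_sepS.2 ⟨h1, h2, hy'⟩)
  have hn : ∀ n : ℕ, ¬ P (E (num n)) := by
    intro n
    induction n with
    | zero => rw [num, E0]; exact hx
    | succ n ih =>
      rw [num, Es _ (num_mem_om n)]
      exact (mem_sepS.1 (step _ ih)).2.2
  have hs : ∀ n, n ε om → sepS k (fun ξ => app (E (suc n)) ξ ε app (E n) ξ) ε F := by
    intro n hn'
    obtain ⟨n, rfl⟩ := mem_om.1 hn'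
    rw [Es _ hn']
    exact (mem_sepS.1 (step _ (hn n))).2.1
  obtain ⟨ξ, hξ, hall⟩ := h.ne (h.inter h.om (T := fun n ξ => app (E (suc n)) ξ ε app (E n) ξ) hs)
  obtain ⟨z, ⟨n, rfl⟩, hz⟩ := exists_least (P := fun z => ∃ n : ℕ, z = app (E (num n)) ξ)
    ⟨_, 0, rfl⟩
  exact hz _ ⟨n + 1, rfl⟩ (hall _ (num_mem_om n))

lemma satDfn (φ : Fm) (R : U.M) (v : ℕ → U.M) :
    Dfn (fun w : ℕ → U.M => φ.sat U.mem (fun x => x ε R) (fun j => app (v j) (w 0))) :=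
  Dfn.sat φ (fun _ x => x ε R) (fun j w => app (v j) (w 0)) inferInstance
    (fun j => inferInstance)

/-- The transitive collapse `N` of the ultrapower of `R` by `F`, the map `π` sending functions to
the elements they represent, and Łoś's theorem. -/
theorem ultrapower {k F R r0 : U.M} (h : UF0 (fun _ => True) k F) (Rt : Tr (fun x => x ε R))
    (h0 : r0 ε R) : ∃ (N : U.M) (π : U.M → U.M), Tr (fun x => x ε N) ∧
      (∀ f, FunP f k R → π f ε N) ∧
      ∀ (φ : Fm) (v : ℕ → U.M), (∀ j, FunP (v j) k R) →
        (φ.sat U.mem (fun x => x ε N) (fun j => π (v j)) ↔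
          sepS k (fun ξ => φ.sat U.mem (fun x => x ε R) (fun j => app (v j) ξ)) ε F) := by
  obtain ⟨π, hπ, eπ⟩ := collapse (U := U)
    (fun x => sepS (Fn k R) (fun f => sepS k (fun ξ => app f ξ ε app x ξ) ε F))
    (DF1.mk inferInstance) (fun P hP hi x => ult_wf h P hP hi x)
  have hπ0 : DF (fun v : ℕ → U.M => π (v 0)) := hπ _
  have eπ : ∀ x z, z ε π x ↔
      ∃ f, FunP f k R ∧ sepS k (fun ξ => app f ξ ε app x ξ) ε F ∧ z = π f := fun x z => by
    rw [eπ]; simp only [mem_sepS, and_assoc, mem_Fn]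
  have eqv : ∀ f, FunP f k R → ∀ g, FunP g k R →
      (π f = π g ↔ sepS k (fun ξ => app f ξ = app g ξ) ε F) := by
    have key : ∀ p f, π f = p → FunP f k R → ∀ g, FunP g k R → π f = π g →
        sepS k (fun ξ => app f ξ = app g ξ) ε F := by
      intro p
      induction p using mem_ind with
      | _ p ih =>
        intro f ep hf g hg e
        subst ep
        by_contra hn
        rw [← h.not] at hn
        -- one of the two differences is nonempty almost everywhere
        by_cases hc : sepS k (fun ξ => ∃ z, z ε R ∧ z ε app f ξ ∧ ¬ z ε app g ξ) ε F
        · obtain ⟨a, ha, ha'⟩ := exists_sel (k := k) h0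
            (fun ξ z => z ε app f ξ ∧ ¬ z ε app g ξ)
          have m1 : sepS k (fun ξ => app a ξ ε app f ξ ∧ ¬ app a ξ ε app g ξ) ε F :=
            h.mono hc fun ξ hξ hz => ha' ξ hξ hz
          have m2 : π a ε π f := (eπ _ _).2 ⟨a, ha, h.mono m1 fun ξ _ hz => hz.1, rfl⟩
          have m3 := m2
          rw [e, eπ] at m3
          obtain ⟨b, hb, hbg, eb⟩ := m3
          have m4 := ih _ m2 a rfl ha b hb eb
          obtain ⟨ξ, hξ, ⟨h1, h2⟩, h3⟩ := h.ne (h.and (h.and m4 hbg) m1)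
          rw [h1] at h3
          exact h3.2 h2
        · have hc' : sepS k (fun ξ => ∃ z, z ε R ∧ z ε app g ξ ∧ ¬ z ε app f ξ) ε F := by
            refine h.mono (h.and hn (h.not.2 hc)) fun ξ hξ hz => ?_
            obtain ⟨h1, h2⟩ := hz
            by_contra h3
            push Not at h2 h3
            exact h1 (ext fun z => ⟨fun hz => h2 z (Rt _ _ (hf.app_mem hξ) hz) hz,
              fun hz => h3 z (Rt _ _ (hg.app_mem hξ) hz) hz⟩)
          obtain ⟨a, ha, ha'⟩ := exists_sel (k := k) h0
            (fun ξ z => z ε app g ξ ∧ ¬ z ε app f ξ)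
          have m1 : sepS k (fun ξ => app a ξ ε app g ξ ∧ ¬ app a ξ ε app f ξ) ε F :=
            h.mono hc' fun ξ hξ hz => ha' ξ hξ hz
          have m2 : π a ε π g := (eπ _ _).2 ⟨a, ha, h.mono m1 fun ξ _ hz => hz.1, rfl⟩
          rw [← e] at m2
          have m3 := m2
          rw [eπ] at m3
          obtain ⟨b, hb, hbg, eb⟩ := m3
          have m4 := ih _ m2 b eb.symm hb a ha eb.symm
          obtain ⟨ξ, hξ, ⟨h1, h2⟩, h3⟩ := h.ne (h.and (h.and m4 hbg) m1)
          rw [h1] at h2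
          exact h3.2 h2
    intro f hf g hg
    refine ⟨key _ f rfl hf g hg, fun e => ext fun z => ?_⟩
    rw [eπ, eπ]
    constructor
    · rintro ⟨a, ha, h1, rfl⟩
      exact ⟨a, ha, h.mono (h.and e h1) fun ξ _ h2 => h2.1 ▸ h2.2, rfl⟩
    · rintro ⟨a, ha, h1, rfl⟩
      exact ⟨a, ha, h.mono (h.and e h1) fun ξ _ h2 => h2.1.symm ▸ h2.2, rfl⟩
  have memv : ∀ f, FunP f k R → ∀ g, FunP g k R →
      (π f ε π g ↔ sepS k (fun ξ => app f ξ ε app g ξ) ε F) := by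
    intro f hf g hg
    rw [eπ]
    constructor
    · rintro ⟨a, ha, h1, e⟩
      rw [eqv f hf a ha] at e
      exact h.mono (h.and e h1) fun ξ _ h2 => h2.1.symm ▸ h2.2
    · intro h1
      exact ⟨f, hf, h1, rfl⟩
  refine ⟨img (Fn k R) π, π, ?_, fun f hf => mem_img.2 ⟨f, mem_Fn.2 hf, rfl⟩, fun φ => ?_⟩
  · intro z y hy hz
    obtain ⟨x, hx, rfl⟩ := mem_img.1 hy
    obtain ⟨f, hf, _, rfl⟩ := (eπ _ _).1 hz
    exact mem_img.2 ⟨f, mem_Fn.2 hf, rfl⟩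
  · induction φ with
    | bot =>
      intro v hv
      simp only [Fm.sat, false_iff]
      intro hF
      have : Dfn (fun _ : ℕ → U.M => False) := Dfn.const False
      obtain ⟨ξ, _, hξ⟩ := h.ne hF
      exact hξ
    | mem i j => intro v hv; exact memv _ (hv i) _ (hv j)
    | eq i j => intro v hv; exact eqv _ (hv i) _ (hv j)
    | imp φ ψ i1 i2 =>
      intro v hv
      have := satDfn φ R v
      have := satDfn ψ R v
      simp only [Fm.sat]
      rw [i1 v hv, i2 v hv, h.imp]
    | all φ ih =>
      intro v hv
      have eN : ∀ a, cns (π a) (fun j => π (v j)) = fun j => π (cns a v j) := by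
        intro x; funext k; cases k <;> rfl
      have eR : ∀ a ξ, cns (app a ξ) (fun j => app (v j) ξ) = fun j => app (cns a v j) ξ := by
        intro a x; funext k; cases k <;> rfl
      have dall := satDfn (.all φ) R v
      simp only [Fm.sat] at dall ⊢
      have d2 : Dfn (fun w : ℕ → U.M => ¬ φ.sat U.mem (fun x => x ε R)
          (cns (w 1) (fun j => app (v j) (w 0)))) := by
        have := Dfn.sat φ (fun _ x => x ε R)
          (fun j (w : ℕ → U.M) => match j with | 0 => w 1 | j + 1 => app (v j) (w 0)) inferInstance
          (fun j => by cases j with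
            | zero => exact DF.var 1
            | succ j => exact (inferInstance : DF (fun w : ℕ → U.M => app (v j) (w 0))))
        have e : Dfn (fun w : ℕ → U.M => φ.sat U.mem (fun x => x ε R)
            (cns (w 1) (fun j => app (v j) (w 0)))) := by
          refine this.congr fun w => ?_
          apply iff_of_eq; congr 1
        infer_instance
      constructor
      · intro hN
        by_contra hn
        rw [← h.not] at hn
        obtain ⟨a, ha, ha'⟩ := exists_sel (k := k) h0 (fun ξ x =>
          ¬ φ.sat U.mem (fun x => x ε R) (cns x (fun j => app (v j) ξ)))
        have h1 := hN (π a) (mem_img.2 ⟨a, mem_Fn.2 ha, rfl⟩)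
        have hav : ∀ j, FunP (cns a v j) k R := fun j => by cases j; exacts [ha, hv _]
        rw [eN, ih (cns a v) hav] at h1
        have d3 := satDfn φ R (cns a v)
        obtain ⟨ξ, hξ, h2, h3⟩ := h.ne (h.and h1 hn)
        push Not at h3
        refine ha' ξ hξ h3 ?_
        rw [eR]
        exact h2
      · intro hF y hy
        obtain ⟨a, ha, rfl⟩ := mem_img.1 hy
        rw [mem_Fn] at ha
        have hav : ∀ j, FunP (cns a v j) k R := fun j => by cases j; exacts [ha, hv _]
        have d3 := satDfn φ R (cns a v)
        rw [eN, ih (cns a v) hav]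
        refine h.mono hF fun ξ hξ h1 => ?_
        rw [← eR]
        exact h1 _ (ha.app_mem hξ)

/-- Scott's theorem: there are no measurable cardinals under `V = L`. -/
theorem scott (hL : SS (fun _ : U.M => True)) : ¬ ∃ k F : U.M, UF (fun _ => True) k F := by
  intro hex
  obtain ⟨k, ⟨F, hF⟩, hleast⟩ := exists_least hex
  have h := hF.1
  have hk : Ord k := h.1
  have rdP : RD (U := U) (fun C v => SS C ∧ ∀ x, x ε v 0 → ¬ ∃ G, C G ∧ UF C x G) := by
    have := RD.ss (U := U)
    infer_instance
  obtain ⟨φ, hφ⟩ := rdP.out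
  obtain ⟨R, Rt, RX, Rop, Rφ⟩ := reflection hL φ (op k F)
  have hkF : k ε R ∧ F ε R := by
    have := Rt _ _ RX (show pr k F ε op k F by simp [op])
    exact ⟨Rt _ _ this (by simp), Rt _ _ this (by simp)⟩
  obtain ⟨hkR, hFR⟩ := hkF
  have hφT : φ.sat U.mem (fun _ => True) (fun _ => k) := by
    rw [← hφ _ (fun _ _ _ _ => trivial) _ (fun _ => trivial)]
    refine ⟨hL, fun x hx => ?_⟩
    rintro ⟨G, _, hG⟩
    exact hleast x ⟨G, hG⟩ hx
  have hφR : φ.sat U.mem (fun x => x ε R) (fun _ => k) := (Rφ _ fun _ => hkR).2 hφT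
  have RS : SS (fun x => x ε R) := ((hφ _ Rt _ fun _ => hkR).2 hφR).1
  obtain ⟨N, π, Nt, πN, los⟩ := ultrapower h Rt hkR
  have cf : ∀ a, a ε R → FunP (lam k (fun _ => a)) k R := fun a ha => FunP.lam fun _ _ => ha
  have df : FunP (lam k (fun ξ => ξ)) k R := FunP.lam fun ξ hξ => Rt _ _ hkR hξ
  have losmem : ∀ f g, FunP f k R → FunP g k R → (∀ ξ, ξ ε k → app f ξ ε app g ξ) →
      π f ε π g := by
    intro f g hf hg hm
    have := los (.mem 0 1) (fun j => if j = 0 then f else g) (fun j => by split_ifs <;> assumption)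
    simp only [Fm.sat] at this
    exact this.2 (h.all fun ξ hξ => hm ξ hξ)
  have losord : ∀ f, FunP f k R → (∀ ξ, ξ ε k → Ord (app f ξ)) → Ord (π f) := by
    intro f hf ho
    obtain ⟨χ, hχ⟩ := (RD.ord (U := U) (f := fun v => v 0)).out
    have := los χ (fun _ => f) (fun _ => hf)
    rw [← hχ _ Nt _ (fun _ => πN f hf)] at this
    have d := satDfn χ R (fun _ => f)
    exact this.2 (h.all fun ξ hξ => (hχ _ Rt _ (fun _ => hf.app_mem hξ)).1 (ho ξ hξ))
  -- `j` is the ultrapower embedding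
  let j : U.M → U.M := fun a => π (lam k (fun _ => a))
  have jord : ∀ δ, δ ε R → Ord δ → Ord (j δ) := fun δ hδ ho =>
    losord _ (cf δ hδ) fun ξ hξ => by rw [app_lam hξ]; exact ho
  have jmem : ∀ a b, a ε R → b ε R → a ε b → j a ε j b := fun a b ha hb hab =>
    losmem _ _ (cf a ha) (cf b hb) fun ξ hξ => by rw [app_lam hξ, app_lam hξ]; exact hab
  have jle : ∀ δ, δ ε R → Ord δ → δ = j δ ∨ δ ε j δ := by
    intro δ hδ ho
    refine ho.le_of_not (jord δ hδ ho) fun hlt => ?_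
    obtain ⟨δ, ⟨hδ, ho, hlt⟩, hmin⟩ := exists_least
      (P := fun δ => δ ε R ∧ Ord δ ∧ j δ ε δ) ⟨δ, hδ, ho, hlt⟩
    have hR : j δ ε R := Rt _ _ hδ hlt
    exact hmin (j δ) ⟨hR, ho.mem hlt, jmem _ _ hR hδ hlt⟩ hlt
  have jN : ∀ a, a ε R → j a ε N := fun a ha => πN _ (cf a ha)
  have ordN : ∀ δ, δ ε R → Ord δ → δ ε N := by
    intro δ hδ ho
    rcases jle δ hδ ho with e | hm
    · rw [e]; exact jN δ hδ
    · exact Nt _ _ (jN δ hδ) hm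
  have hφN : φ.sat U.mem (fun x => x ε N) (fun _ => j k) := by
    have d := satDfn φ R (fun _ => lam k (fun _ => k))
    refine (los φ (fun _ => lam k (fun _ => k)) (fun _ => cf k hkR)).2 (h.all fun ξ hξ => ?_)
    rw [app_lam hξ]
    exact hφR
  obtain ⟨NS, hN⟩ := (hφ _ Nt _ fun _ => jN k hkR).2 hφN
  have RN : ∀ x, x ε R → x ε N := by
    intro x hx
    obtain ⟨γ, hγ, ho, hxγ⟩ := RS.cond2 hx
    exact Nt _ _ (NS.cond1 (ordN γ hγ ho) ho) hxγ
  -- the identity function represents an ordinal lying between `k` and `j k`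
  have dord : Ord (π (lam k (fun ξ => ξ))) :=
    losord _ df fun ξ hξ => by rw [app_lam hξ]; exact hk.mem hξ
  have dlt : π (lam k (fun ξ => ξ)) ε j k :=
    losmem _ _ df (cf k hkR) fun ξ hξ => by rw [app_lam hξ, app_lam hξ]; exact hξ
  have hne : ∀ a, a ε k → sepS k (fun ξ => ¬ ξ = a) ε F := by
    intro a ha
    refine h.not.2 fun hs => ?_
    obtain ⟨x, hx, hxa⟩ := hF.2 a ha _ hs
    exact hxa (mem_sepS.1 hx).2
  have tail : ∀ α, α ε k → sepS k (fun ξ => α ε ξ) ε F := by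
    intro α hα
    have h1 := h.inter hα (T := fun γ ξ => ¬ ξ = γ) fun γ hγ => hne γ (hk.trans hγ hα)
    refine h.mono (h.and h1 (hne α hα)) fun ξ hξ h2 => ?_
    rcases (hk.mem hα).tri (hk.mem hξ) with h3 | h3 | h3
    · exact h3
    · exact (h2.2 h3.symm).elim
    · exact (h2.1 ξ h3 rfl).elim
  have kle : k = π (lam k (fun ξ => ξ)) ∨ k ε π (lam k (fun ξ => ξ)) := by
    refine hk.le_of_sub dord fun α hα => ?_
    have hαR : α ε R := Rt _ _ hkR hα
    refine dord.lt_of_le_lt (jle α hαR (hk.mem hα)) ?_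
    have := los (.mem 0 1) (fun i => if i = 0 then lam k (fun _ => α) else lam k (fun ξ => ξ))
      (fun i => by split_ifs; exacts [cf α hαR, df])
    simp only [Fm.sat] at this
    refine this.2 (h.mono (tail α hα) fun ξ hξ hm => ?_)
    simp only [if_true, one_ne_zero, if_false]
    rw [app_lam hξ, app_lam hξ]
    exact hm
  exact hN k ((jord k hkR hk).lt_of_le_lt kle dlt) ⟨F, RN F hFR, hF.down⟩

end

end SL

/-- If the GCH holds, then every weakly measurable cardinal is
measurable; consequently the least weakly measurable cardinal coincides with the
least measurable cardinal under the GCH, and the existence of a weakly measurable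
cardinal in the constructible universe `L` (i.e. in any universe satisfying
`V = L`) is impossible. -/
theorem stmt17 :
    (∀ U : ZFCUniverse.{u}, U.GCHholds →
      ∀ κ, ZF.IsWeaklyMeasurable U.mem κ → ZF.IsMeasurable U.mem κ) ∧
    (∀ U : ZFCUniverse.{u}, U.GCHholds → ∀ κ,
      ((ZF.IsWeaklyMeasurable U.mem κ ∧
          ∀ μ, U.mem μ κ → ¬ ZF.IsWeaklyMeasurable U.mem μ) ↔
        (ZF.IsMeasurable U.mem κ ∧ ∀ μ, U.mem μ κ → ¬ ZF.IsMeasurable U.mem μ))) ∧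
    (∀ U : ZFCUniverse.{u}, VeqL U → ∀ κ, ¬ ZF.IsWeaklyMeasurable U.mem κ) := by
  refine ⟨fun U hU κ h => SL.measurable_of_gch hU h, fun U hU κ => ?_, fun U hU κ h => ?_⟩
  · have e : ∀ μ, ZF.IsWeaklyMeasurable U.mem μ ↔ ZF.IsMeasurable U.mem μ := fun μ =>
      ⟨SL.measurable_of_gch hU, SL.weakly_of_measurable⟩
    simp only [e]
  · have hL := SL.SS_true hU
    exact SL.scott hL
      ⟨κ, SL.UF.of_measurable (SL.measurable_of_weakly h (SL.pw_cle_of_L hL h.1))⟩
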